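/- There exists a group G of cardinality ℵ₁ such that for every uncountable subset Y ⊆ G there exists a natural number n such that every element of G can be written as a product g₁g₂···g_m with 1 ≤ m ≤ n and each g_i ∈ Y (no inverses of elements of Y are used). -/

import Mathlib

/-- `wordSet Y n` is the set `Y^{[n]}` of all products of length at most `n`
of elements of `Y` and their inverses. -/
def wordSet {H : Type*} [Group H] (Y : Set H) (n : ℕ) : Set H :=
  {h | ∃ m : ℕ, m ≤ n ∧ ∃ g : Fin m → H,
    (∀ i, g i ∈ Y ∨ (g i)⁻¹ ∈ Y) ∧ h = (List.ofFn g).prod}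

/-- A subgroup `K` of `G` is malnormal if `K ∩ gKg⁻¹ = {1}` for all `g ∉ K`. -/
def Malnormal {G : Type*} [Group G] (K : Subgroup G) : Prop :=
  ∀ g : G, g ∉ K → ∀ y : G, y ∈ K → g⁻¹ * y * g ∈ K → y = 1

/-- A group is strongly bounded if every action by isometries on a metric
space has bounded orbits. -/
def StronglyBounded (H : Type*) [Group H] : Prop :=
  ∀ (X : Type) (_ : MetricSpace X) (_ : MulAction H X),
    (∀ h : H, Isometry (fun x : X => h • x)) →
    ∀ x : X, Bornology.IsBounded (MulAction.orbit H x)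

/-- A group is Jónsson if every proper subgroup has strictly smaller cardinality. -/
def Jonsson (H : Type*) [Group H] : Prop :=
  ∀ K : Subgroup H, K ≠ ⊤ → Cardinal.mk K < Cardinal.mk H

namespace JonssonSemigroup

section Coloring

variable {X : Type} [LinearOrder X]

lemma exists_forall_lt_of_countable (hI : ∀ a : X, (Set.Iio a).Countable)
    (hX : ¬ (Set.univ : Set X).Countable) {s : Set X} (hs : s.Countable) :
    ∃ b, ∀ a ∈ s, a < b := by
  by_contra! h
  apply hX
  have : (Set.univ : Set X) ⊆ ⋃ a ∈ s, (insert a (Set.Iio a)) := by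
    intro b _
    obtain ⟨a, ha, hab⟩ := h b
    simp only [Set.mem_iUnion]
    refine ⟨a, ha, ?_⟩
    rcases hab.eq_or_lt with h | h
    · left; exact h
    · right; exact h
  exact (hs.biUnion fun a _ => (hI a).insert a).mono this

/-- The points closed under the function `f`. -/
def closurePoints (f : X → X) : Set X := {d | (∃ x, x < d) ∧ ∀ x < d, f x < d}

lemma exists_gt_mem_closurePoints [WellFoundedLT X] (hI : ∀ a : X, (Set.Iio a).Countable)
    (hX : ¬ (Set.univ : Set X).Countable) (f : X → X) (a : X) :
    ∃ d ∈ closurePoints f, a < d := by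
  have step : ∀ x, ∃ y, x < y ∧ ∀ z ≤ x, f z < y := by
    intro x
    have hc : (insert x (f '' (insert x (Set.Iio x)))).Countable :=
      (((hI x).insert x).image f).insert x
    obtain ⟨b, hb⟩ := exists_forall_lt_of_countable hI hX hc
    refine ⟨b, hb x (by simp), fun z hz => hb _ ?_⟩
    right
    refine ⟨z, ?_, rfl⟩
    rcases hz.eq_or_lt with h | h
    · left; exact h
    · right; exact h
  choose g hg1 hg2 using step
  let x : ℕ → X := fun k => g^[k] a
  have hx : ∀ k, x (k + 1) = g (x k) := fun k => Function.iterate_succ_apply' g k a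
  obtain ⟨b, hb⟩ := exists_forall_lt_of_countable hI hX (Set.countable_range x)
  obtain ⟨d, hd, hmin⟩ := WellFounded.has_min (wellFounded_lt (α := X))
    {d | ∀ k, x k < d} ⟨b, fun k => hb _ ⟨k, rfl⟩⟩
  refine ⟨d, ⟨⟨a, hd 0⟩, fun z hz => ?_⟩, hd 0⟩
  have : ∃ k, z ≤ x k := by
    by_contra! h
    exact hmin z h hz
  obtain ⟨k, hk⟩ := this
  have := hg2 _ _ hk
  rw [← hx] at this
  exact this.trans (hd _)

/-- The members of `Z` whose branch starts with the finite word `s`. -/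
def cone (r : X → ℕ → Bool) (Z : Set X) (s : Σ n, Fin n → Bool) : Set X :=
  {a ∈ Z | ∀ i : Fin s.1, r a i = s.2 i}

lemma exists_cone_bound (hI : ∀ a : X, (Set.Iio a).Countable)
    (hX : ¬ (Set.univ : Set X).Countable) (r : X → ℕ → Bool) (Z : Set X) (x : X) :
    ∃ y, ∀ s, (¬ (cone r Z s).Countable → ∃ a ∈ cone r Z s, x < a ∧ a ≤ y) ∧
      ((cone r Z s).Countable → ∀ a ∈ cone r Z s, a ≤ y) := by
  have h1 : ∀ s, ∃ y, (¬ (cone r Z s).Countable → ∃ a ∈ cone r Z s, x < a ∧ a ≤ y) ∧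
      ((cone r Z s).Countable → ∀ a ∈ cone r Z s, a ≤ y) := by
    intro s
    by_cases h : (cone r Z s).Countable
    · obtain ⟨b, hb⟩ := exists_forall_lt_of_countable hI hX h
      exact ⟨b, fun h' => absurd h h', fun _ a ha => (hb a ha).le⟩
    · have : ∃ a ∈ cone r Z s, x < a := by
        by_contra! h'
        refine h (((hI x).insert x).mono fun a ha => ?_)
        rcases (h' a ha).eq_or_lt with h | h
        · left; exact h
        · right; exact h
      obtain ⟨a, ha, hxa⟩ := this
      exact ⟨a, fun _ => ⟨a, ha, hxa, le_rfl⟩, fun h' => absurd h' h⟩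
  choose y hy1 hy2 using h1
  obtain ⟨b, hb⟩ := exists_forall_lt_of_countable hI hX (Set.countable_range y)
  have hb' : ∀ s, y s ≤ b := fun s => (hb _ ⟨s, rfl⟩).le
  refine ⟨b, fun s => ⟨fun h => ?_, fun h a ha => (hy2 s h a ha).trans (hb' s)⟩⟩
  obtain ⟨a, h1, h2, h3⟩ := hy1 s h
  exact ⟨a, h1, h2, h3.trans (hb' s)⟩

lemma exists_uncountable_sibling {r : X → ℕ → Bool} (hr : Function.Injective r) {Z : Set X}
    {b : X} (hb : ∀ n, ¬ (cone r Z ⟨n, fun i => r b i⟩).Countable) (n₀ : ℕ) :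
    ∃ n ≥ n₀, ∃ s, ¬ (cone r Z s).Countable ∧
      ∀ a ∈ cone r Z s, (∀ i < n, r a i = r b i) ∧ r a n ≠ r b n := by
  let s : ℕ → (Σ n, Fin n → Bool) := fun n => ⟨n + 1, fun i => if i.1 = n then ! r b n else r b i⟩
  have hs : ∀ n a, a ∈ cone r Z (s n) ↔
      (a ∈ Z ∧ (∀ i < n, r a i = r b i) ∧ r a n ≠ r b n) := by
    intro n a
    constructor
    · rintro ⟨h1, h2⟩
      refine ⟨h1, fun i hi => ?_, ?_⟩
      · have := h2 ⟨i, by simp [s]; omega⟩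
        simpa [s, hi.ne] using this
      · have := h2 ⟨n, by simp [s]⟩
        have h3 : r a n = ! r b n := by simpa [s] using this
        rw [h3]; simp
    · rintro ⟨h1, h2, h3⟩
      refine ⟨h1, ?_⟩
      rintro ⟨i, hi⟩
      have hi' : i < n + 1 := hi
      by_cases hin : i = n
      · subst hin
        simp only [s, if_true]
        revert h3; cases r a i <;> cases r b i <;> simp
      · simp only [s, hin, if_false]
        exact h2 i (by omega)
  by_contra! h
  have hc : ∀ n ≥ n₀, (cone r Z (s n)).Countable := by
    intro n hn
    by_contra hcon
    obtain ⟨a, ha, h'⟩ := h n hn (s n) hcon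
    obtain ⟨_, h2, h3⟩ := (hs n a).1 ha
    exact h3 (h' h2)
  apply hb n₀
  refine ((Set.countable_iUnion fun n : {n // n₀ ≤ n} => hc n.1 n.2).insert b).mono ?_
  rintro a ⟨haZ, ha⟩
  by_cases hab : a = b
  · left; exact hab
  right
  have hne : ∃ n, r a n ≠ r b n := by
    by_contra! h'
    exact hab (hr (funext h'))
  classical
  have hlt : ∀ i < Nat.find hne, r a i = r b i := fun i hi => by
    simpa using Nat.find_min hne hi
  have hge : n₀ ≤ Nat.find hne := by
    by_contra! hlt'
    exact Nat.find_spec hne (ha ⟨_, hlt'⟩)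
  exact Set.mem_iUnion.2 ⟨⟨_, hge⟩, (hs _ a).2 ⟨haZ, hlt, Nat.find_spec hne⟩⟩

lemma exists_trace_mem (hI : ∀ a : X, (Set.Iio a).Countable)
    (hX : ¬ (Set.univ : Set X).Countable) {r : X → ℕ → Bool} (hr : Function.Injective r)
    {e : X → X → ℕ} (he : ∀ b, Set.InjOn (e b) (Set.Iio b)) {br : X → X → X}
    (hbr : ∀ a b n, a < b → (∀ i < n, r a i = r b i) → r a n ≠ r b n →
      IsLeast {x | a ≤ x ∧ (x = b ∨ (x < b ∧ e b x ≤ n))} (br a b))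
    (Z : Set X) (hZ : ¬ Z.Countable) (F : X → Finset X) :
    ∃ f : X → X, ∀ d ∈ closurePoints f, ∃ a ∈ Z, ∃ b ∈ Z, a < b ∧ a ∉ F b ∧ br a b = d := by
  choose f hf using exists_cone_bound hI hX r Z
  refine ⟨f, ?_⟩
  rintro d ⟨⟨x₀, hx₀⟩, hd⟩
  obtain ⟨b, hbZ, hdb⟩ : ∃ b ∈ Z, d ≤ b := by
    by_contra! h
    exact hZ ((hI d).mono h)
  have hcone : ∀ n, ¬ (cone r Z ⟨n, fun i => r b i⟩).Countable := by
    intro n hn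
    have := (hf x₀ _).2 hn b ⟨hbZ, fun _ => rfl⟩
    exact absurd (this.trans_lt (hd x₀ hx₀)) (not_lt.2 hdb)
  obtain ⟨n, hn, s, hs, hsib⟩ := exists_uncountable_sibling hr hcone (e b d)
  have hfin : Set.Finite {x | x < d ∧ (e b x ≤ n ∨ x ∈ F b ∨ x = x₀)} := by
    have h1 : Set.Finite {x | x < d ∧ e b x ≤ n} := by
      refine Set.Finite.of_finite_image (f := e b) ((Set.finite_Iic n).subset ?_)
        ((he b).mono fun x hx => lt_of_lt_of_le hx.1 hdb)
      rintro _ ⟨x, hx, rfl⟩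
      exact hx.2
    refine ((h1.union (F b).finite_toSet).union (Set.finite_singleton x₀)).subset ?_
    rintro x ⟨h, h1 | h1 | h1⟩
    · exact Or.inl (Or.inl ⟨h, h1⟩)
    · exact Or.inl (Or.inr h1)
    · exact Or.inr h1
  obtain ⟨m, hm, hmax⟩ := Set.exists_max_image _ id hfin ⟨x₀, hx₀, Or.inr (Or.inr rfl)⟩
  obtain ⟨a, ha, hma, hfa⟩ := (hf m s).1 hs
  have had : a < d := hfa.trans_lt (hd m hm.1)
  have hab := had.trans_le hdb
  obtain ⟨h1, h2⟩ := hsib a ha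
  refine ⟨a, ha.1, b, hbZ, hab, fun haF => ?_, ?_⟩
  · exact absurd (hmax a ⟨had, Or.inr (Or.inl haF)⟩) (not_le.2 hma)
  · refine (hbr a b n hab h1 h2).unique ⟨⟨had.le, ?_⟩, ?_⟩
    · rcases hdb.eq_or_lt with h | h
      · exact Or.inl h
      · exact Or.inr ⟨h, hn⟩
    · rintro x ⟨hax, rfl | ⟨_, hx⟩⟩
      · exact hdb
      · by_contra! hxd
        exact absurd (hmax x ⟨hxd, Or.inl hx⟩) (not_le.2 (hma.trans_le hax))

/-- A strong colouring of the pairs of elements of a set of order type `ω₁`. -/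
theorem exists_coloring [WellFoundedLT X] (hI : ∀ a : X, (Set.Iio a).Countable)
    (hX : Cardinal.mk X = Cardinal.aleph 1) :
    ∃ f : X → X → X, ∀ Z : Set X, ¬ Z.Countable → ∀ F : X → Finset X, ∀ c,
      ∃ a ∈ Z, ∃ b ∈ Z, a < b ∧ a ∉ F b ∧ f a b = c := by
  have hX' : ¬ (Set.univ : Set X).Countable := by
    rw [Set.countable_univ_iff, ← Cardinal.mk_le_aleph0_iff, hX, not_le]
    exact Cardinal.aleph0_lt_aleph_one
  obtain ⟨r, hr⟩ : ∃ r : X → ℕ → Bool, Function.Injective r := by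
    have : Cardinal.mk X ≤ Cardinal.mk (ℕ → Bool) := by
      rw [hX]; simpa using Cardinal.aleph_one_le_continuum
    obtain ⟨r⟩ := this
    exact ⟨r, r.injective⟩
  have he : ∀ b : X, ∃ e : X → ℕ, Set.InjOn e (Set.Iio b) := fun b =>
    Set.countable_iff_exists_injOn.1 (hI b)
  choose e he using he
  have hbr : ∀ a b, ∃ d, ∀ n, a < b → (∀ i < n, r a i = r b i) → r a n ≠ r b n →
      IsLeast {x | a ≤ x ∧ (x = b ∨ (x < b ∧ e b x ≤ n))} d := by
    intro a b
    by_cases h : ∃ n, a < b ∧ (∀ i < n, r a i = r b i) ∧ r a n ≠ r b n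
    · obtain ⟨n, hab, h1, h2⟩ := h
      obtain ⟨d, hd, hmin⟩ := WellFounded.has_min (wellFounded_lt (α := X))
        {x | a ≤ x ∧ (x = b ∨ (x < b ∧ e b x ≤ n))} ⟨b, hab.le, Or.inl rfl⟩
      refine ⟨d, fun m _ h3 h4 => ?_⟩
      have : m = n := by
        rcases lt_trichotomy m n with h | h | h
        · exact absurd (h1 m h) h4
        · exact h
        · exact absurd (h3 n h) h2
      subst this
      exact ⟨hd, fun x hx => not_lt.1 (hmin x hx)⟩
    · exact ⟨a, fun n h1 h2 h3 => absurd ⟨n, h1, h2, h3⟩ h⟩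
  choose br hbr using hbr
  have ulam : ∀ x, ∃ n, ∀ f : X → X, ∃ d ∈ closurePoints f, x < d ∧ e d x = n := by
    intro x
    by_contra! h
    choose f hf using h
    have : ∀ z, ∃ y, ∀ n, f n z < y := fun z => by
      obtain ⟨y, hy⟩ := exists_forall_lt_of_countable hI hX' (Set.countable_range fun n => f n z)
      exact ⟨y, fun n => hy _ ⟨n, rfl⟩⟩
    choose g hg using this
    obtain ⟨d, hd, hxd⟩ := exists_gt_mem_closurePoints hI hX' g x
    exact hf (e d x) d ⟨hd.1, fun z hz => (hg z _).trans (hd.2 z hz)⟩ hxd rfl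
  choose N hN using ulam
  obtain ⟨n, hn⟩ : ∃ n, ¬ (N ⁻¹' {n}).Countable := by
    by_contra! h
    refine hX' ((Set.countable_iUnion h).mono fun x _ => Set.mem_iUnion.2 ⟨N x, rfl⟩)
  obtain ⟨g, hg⟩ : ∃ g : X → X, ∀ c, ∃ x ∈ N ⁻¹' {n}, g x = c := by
    have : Cardinal.mk X ≤ Cardinal.mk (N ⁻¹' {n} : Set X) := by
      rw [hX, ← Cardinal.succ_aleph0]
      refine Order.succ_le_of_lt (not_le.1 fun h => hn ?_)
      exact Cardinal.le_aleph0_iff_set_countable.1 h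
    obtain ⟨i⟩ := this
    have : Nonempty X := by
      by_contra hne
      rw [not_nonempty_iff] at hne
      exact hX' (Set.countable_univ)
    have hi : Function.Injective fun c => (i c).1 := fun a b h => i.injective (Subtype.ext h)
    exact ⟨Function.invFun fun c => (i c).1, fun c => ⟨(i c).1, (i c).2,
      Function.leftInverse_invFun hi c⟩⟩
  have hcol : ∀ d, ∃ c, ∀ x < d, e d x = n → c = g x := by
    intro d
    by_cases h : ∃ x < d, e d x = n
    · obtain ⟨x, hx, hxn⟩ := h
      refine ⟨g x, fun y hy hyn => ?_⟩
      rw [he d hx hy (hxn.trans hyn.symm)]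
    · exact ⟨d, fun x hx hxn => absurd ⟨x, hx, hxn⟩ h⟩
  choose col hcol using hcol
  refine ⟨fun a b => col (br a b), fun Z hZ F c => ?_⟩
  obtain ⟨f, hf⟩ := exists_trace_mem hI hX' hr he (fun a b n => hbr a b n) Z hZ F
  obtain ⟨x, hxn, rfl⟩ := hg c
  obtain ⟨d, hd, hxd, hed⟩ := hN x f
  obtain ⟨a, ha, b, hb, hab, haF, rfl⟩ := hf d hd
  exact ⟨a, ha, b, hb, hab, haF, hcol _ x hxd (hed.trans hxn)⟩

end Coloring

/-- A family of bi-infinite axes in a connected graph, with projections to them, on which a group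
acts; `rho A` translates the axis `A` by `tau A`, and distinct axes have small overlaps. -/
structure AxisSystem (P V I : Type) [Group P] [MulAction P V] [MulAction P I]
    (Γ : SimpleGraph V) where
  ax : I → ℤ → V
  pr : I → V → ℤ
  rho : I → P
  tau : I → ℤ
  c : I → ℤ
  eqv : I → I → Prop
  conn : Γ.Connected
  adj_smul : ∀ (g : P) {x y}, Γ.Adj x y → Γ.Adj (g • x) (g • y)
  ax_adj : ∀ A i, Γ.Adj (ax A i) (ax A (i + 1))
  pr_ax : ∀ A i, pr A (ax A i) = i
  pr_adj : ∀ A {x y}, Γ.Adj x y → pr A x = pr A y ∨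
    ∃ i, (x = ax A i ∧ y = ax A (i + 1)) ∨ (y = ax A i ∧ x = ax A (i + 1))
  pr_smul : ∀ (g : P) A x, pr (g • A) (g • x) = pr A x
  ax_smul : ∀ (g : P) A i, ax (g • A) i = g • ax A i
  rho_smul : ∀ (g : P) A, rho (g • A) = g * rho A * g⁻¹
  c_smul : ∀ (g : P) A, c (g • A) = c A
  pr_rho : ∀ A x, pr A (rho A • x) = pr A x + tau A
  ax_rho : ∀ A i, ax A (i + tau A) = rho A • ax A i
  eqv_equivalence : Equivalence eqv
  eqv_smul : ∀ (g : P) {A B}, eqv A B → eqv (g • A) (g • B)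
  rho_eq_of_eqv : ∀ {A B}, eqv A B → rho A = rho B
  exists_zpow_eq : ∀ (g : P) {A}, eqv A (g • A) → ∃ k : ℤ, g = rho A ^ k
  exists_ax_eq_of_eqv : ∀ {A B}, eqv A B → ∀ i, ∃ j, ax A i = ax B j
  overlap_le : ∀ {A B}, ¬ eqv A B → ∀ i j, |pr A (ax B i) - pr A (ax B j)| ≤ c A
  c_pos : ∀ A, 0 < c A
  c_lt_tau : ∀ A, 10 * c A ≤ tau A

namespace AxisSystem

variable {P V I : Type} [Group P] [MulAction P V] [MulAction P I] {Γ : SimpleGraph V}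
  (D : AxisSystem P V I Γ)

include D in
lemma induction_adj {p : V → Prop} (x₀ : V) (h₀ : p x₀)
    (h : ∀ x y, Γ.Adj x y → p x → p y) (x : V) : p x := by
  obtain ⟨w⟩ := D.conn.preconnected x₀ x
  induction w with
  | nil => exact h₀
  | cons hadj _ ih => exact ih (h _ _ hadj h₀)

lemma exists_pr_eq (A B : I) (x : V) :
    (∃ j, D.pr A x = D.pr A (D.ax B j)) ∨ ∃ i, D.pr B x = D.pr B (D.ax A i) := by
  refine D.induction_adj (p := fun x => (∃ j, D.pr A x = D.pr A (D.ax B j)) ∨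
    ∃ i, D.pr B x = D.pr B (D.ax A i)) (D.ax A 0) (Or.inr ⟨0, rfl⟩) ?_ x
  intro x y hxy hx
  rcases D.pr_adj A hxy with hA | ⟨i, ⟨rfl, rfl⟩ | ⟨rfl, rfl⟩⟩
  · rcases D.pr_adj B hxy with hB | ⟨i, ⟨rfl, rfl⟩ | ⟨rfl, rfl⟩⟩
    · rwa [hA, hB] at hx
    · exact Or.inl ⟨_, rfl⟩
    · exact Or.inl ⟨_, rfl⟩
  · exact Or.inr ⟨_, rfl⟩
  · exact Or.inr ⟨_, rfl⟩

/-- The points that no axis separates from both `x` and `y`. -/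
def hull (x y : V) : Set V := {w | ∀ B, D.pr B w ∈ Set.uIcc (D.pr B x) (D.pr B y)}

lemma left_mem_hull (x y : V) : x ∈ D.hull x y := fun _ => Set.left_mem_uIcc

lemma pr_zpow (A : I) (k : ℤ) (x : V) :
    D.pr A (D.rho A ^ k • x) = D.pr A x + k * D.tau A := by
  induction k generalizing x with
  | zero => simp
  | succ k ih => rw [zpow_add_one, mul_smul, ih, D.pr_rho]; ring
  | pred k ih =>
    rw [zpow_sub_one, mul_smul, ih]
    have := D.pr_rho A ((D.rho A)⁻¹ • x)
    rw [smul_inv_smul] at this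
    linarith

/-- If a wall of `C` is crossed between `x` and its projection to `B`, then the edge
crossing this wall projects to the same point of `B`. -/
lemma pr_eq_of_wall (B C : I) (n : ℤ) (x : V)
    (h : ¬ (D.pr C x ≤ n ↔ D.pr C (D.ax B (D.pr B x)) ≤ n)) :
    D.pr B (D.ax C n) = D.pr B x ∧ D.pr B (D.ax C (n + 1)) = D.pr B x := by
  revert h
  refine D.induction_adj (p := fun x => ¬ (D.pr C x ≤ n ↔ D.pr C (D.ax B (D.pr B x)) ≤ n) →
    D.pr B (D.ax C n) = D.pr B x ∧ D.pr B (D.ax C (n + 1)) = D.pr B x) (D.ax B 0) ?_ ?_ x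
  · intro h
    rw [D.pr_ax] at h
    exact absurd Iff.rfl h
  · intro x y hxy hx h
    rcases D.pr_adj B hxy with hB | ⟨i, ⟨rfl, rfl⟩ | ⟨rfl, rfl⟩⟩
    · rw [← hB] at h ⊢
      by_cases hC : D.pr C x ≤ n ↔ D.pr C y ≤ n
      · rw [← hC] at h
        exact hx h
      · rcases D.pr_adj C hxy with hC' | ⟨i, ⟨rfl, rfl⟩ | ⟨rfl, rfl⟩⟩
        · rw [hC'] at hC
          exact absurd Iff.rfl hC
        · simp only [D.pr_ax] at hC
          have : i = n := by omega
          subst this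
          exact ⟨rfl, hB.symm⟩
        · simp only [D.pr_ax] at hC
          have : i = n := by omega
          subst this
          exact ⟨hB.symm, rfl⟩
    · rw [D.pr_ax] at h
      exact absurd Iff.rfl h
    · rw [D.pr_ax] at h
      exact absurd Iff.rfl h

/-- A wall of `C` crossed by the axis `B` is crossed along an edge of `B`. -/
lemma pr_ne_of_wall (B C : I) (n i j : ℤ)
    (h : ¬ (D.pr C (D.ax B i) ≤ n ↔ D.pr C (D.ax B j) ≤ n)) :
    D.pr B (D.ax C n) ≠ D.pr B (D.ax C (n + 1)) := by
  intro heq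
  have key : ∀ k, D.pr C (D.ax B k) ≤ n ↔ D.pr C (D.ax B (k + 1)) ≤ n := by
    intro k
    rcases D.pr_adj C (D.ax_adj B k) with h | ⟨m, ⟨h1, h2⟩ | ⟨h1, h2⟩⟩
    · rw [h]
    · rw [h1, h2, D.pr_ax, D.pr_ax]
      by_contra hn
      have : m = n := by omega
      subst this
      rw [← h1, ← h2, D.pr_ax, D.pr_ax] at heq
      omega
    · rw [h1, h2, D.pr_ax, D.pr_ax]
      by_contra hn
      have : m = n := by omega
      subst this
      rw [← h1, ← h2, D.pr_ax, D.pr_ax] at heq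
      omega
  have all : ∀ k, D.pr C (D.ax B k) ≤ n ↔ D.pr C (D.ax B 0) ≤ n := by
    intro k
    induction k with
    | zero => exact Iff.rfl
    | succ k ih => rw [← key]; exact ih
    | pred k ih => rw [key, sub_add_cancel]; exact ih
  exact h ((all i).trans (all j).symm)

lemma ax_mem_hull (B : I) (x y : V) (h : D.pr B x ≠ D.pr B y) :
    D.ax B (D.pr B x) ∈ D.hull x y := by
  intro C
  have key : ∀ n, ¬ (D.pr C x ≤ n ↔ D.pr C (D.ax B (D.pr B x)) ≤ n) →
      ¬ (D.pr C y ≤ n ↔ D.pr C (D.ax B (D.pr B x)) ≤ n) → False := by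
    intro n h1 h2
    obtain ⟨h3, h4⟩ := D.pr_eq_of_wall B C n x h1
    by_cases h5 : D.pr C y ≤ n ↔ D.pr C (D.ax B (D.pr B y)) ≤ n
    · rw [h5] at h2
      exact D.pr_ne_of_wall B C n _ _ h2 (h3.trans h4.symm)
    · exact h (h3.symm.trans (D.pr_eq_of_wall B C n y h5).1)
  rw [Set.mem_uIcc]
  by_contra hcon
  set w := D.pr C (D.ax B (D.pr B x))
  rcases le_or_gt (D.pr C x) w with h1 | h1
  · exact key (w - 1) (by omega) (by omega)
  · exact key w (by omega) (by omega)

lemma smul_mem_hull (g : P) {x y w : V} (hw : w ∈ D.hull x y) :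
    g • w ∈ D.hull (g • x) (g • y) := by
  intro B
  have h := hw (g⁻¹ • B)
  have e : ∀ z, D.pr B (g • z) = D.pr (g⁻¹ • B) z := fun z => by
    rw [← D.pr_smul g (g⁻¹ • B), smul_inv_smul]
  rwa [e, e, e]

/-- The group generated by the translations along the axes in `S`. -/
def grp (S : Set I) : Subgroup P := Subgroup.closure (D.rho '' S)

/-- The invariant of the inductive construction of the group generated by all translations. -/
structure IsWindmill (v : V) (S : Set I) : Prop where
  smul_mem : ∀ s ∈ D.grp S, ∀ A ∈ S, s • A ∈ S
  mem_of_eqv : ∀ {A B}, A ∈ S → D.eqv A B → B ∈ S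
  le_of_notMem : ∀ B ∉ S, ∀ s ∈ D.grp S, |D.pr B v - D.pr B (s • v)| ≤ 2 * D.c B
  exists_le : ∀ s ∈ D.grp S, s ≠ 1 → ∃ A, D.tau A - 3 * D.c A ≤ |D.pr A v - D.pr A (s • v)|

section Step

variable {D} {v : V} {S : Set I} (hS : D.IsWindmill v S)
include hS

lemma IsWindmill.smul_notMem {s : P} (hs : s ∈ D.grp S) {A : I} (hA : A ∉ S) : s • A ∉ S :=
  fun h => hA (by simpa using hS.smul_mem s⁻¹ (inv_mem hs) _ h)

omit hS in
/-- The union of the hulls of pairs of points of the orbit of `v`. -/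
def span (D : AxisSystem P V I Γ) (v : V) (S : Set I) : Set V :=
  {w | ∃ s ∈ D.grp S, ∃ s' ∈ D.grp S, w ∈ D.hull (s • v) (s' • v)}

omit hS in
lemma mem_span {s : P} (hs : s ∈ D.grp S) : s • v ∈ span D v S :=
  ⟨s, hs, s, hs, D.left_mem_hull _ _⟩

omit hS in
lemma smul_mem_span {s : P} (hs : s ∈ D.grp S) {w : V} (hw : w ∈ span D v S) :
    s • w ∈ span D v S := by
  obtain ⟨s1, h1, s2, h2, h⟩ := hw
  refine ⟨s * s1, mul_mem hs h1, s * s2, mul_mem hs h2, ?_⟩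
  rw [mul_smul, mul_smul]
  exact D.smul_mem_hull s h

lemma IsWindmill.le_of_mem_span {B : I} (hB : B ∉ S) {w : V} (hw : w ∈ span D v S) :
    |D.pr B v - D.pr B w| ≤ 2 * D.c B := by
  obtain ⟨s1, h1, s2, h2, h⟩ := hw
  have h3 := hS.le_of_notMem B hB s1 h1
  have h4 := hS.le_of_notMem B hB s2 h2
  have := Set.mem_uIcc.1 (h B)
  rw [abs_le] at *
  omega

omit hS in
lemma pr_eq_of_disjoint {B : I} (hB : ∀ i, D.ax B i ∉ span D v S) {w : V}
    (hw : w ∈ span D v S) : D.pr B w = D.pr B v := by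
  have key : ∀ s ∈ D.grp S, D.pr B (s • v) = D.pr B v := by
    intro s hs
    by_contra h
    refine hB (D.pr B (s • v)) ⟨s, hs, 1, one_mem _, ?_⟩
    rw [one_smul]; exact D.ax_mem_hull B _ _ h
  obtain ⟨s1, h1, s2, h2, h⟩ := hw
  have := Set.mem_uIcc.1 (h B)
  rw [key _ h1, key _ h2] at this
  omega

omit hS in
/-- `T` consists of the axes outside `S` that are closest to the span. -/
structure IsNearest (D : AxisSystem P V I Γ) (v : V) (S T : Set I) : Prop where
  notMem : ∀ A ∈ T, A ∉ S
  smul_mem : ∀ s ∈ D.grp S, ∀ A ∈ T, s • A ∈ T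
  mem_of_eqv : ∀ {A B}, A ∈ T → D.eqv A B → B ∈ T
  exists_ax : ∀ A ∈ T, ∃ i, ∃ w ∈ span D v S, ∀ B ∉ S, D.pr B (D.ax A i) = D.pr B w
  ax_notMem : ∀ B ∉ S, B ∉ T → ∀ i, D.ax B i ∉ span D v S

lemma IsWindmill.exists_isNearest (hne : S ≠ Set.univ) :
    ∃ T, T.Nonempty ∧ IsNearest D v S T := by
  classical
  obtain ⟨A₀, hA₀⟩ := (Set.ne_univ_iff_exists_notMem S).1 hne
  let R : ℕ → I → Prop := fun n A => A ∉ S ∧ ∃ w ∈ span D v S, ∃ i, ∃ p : Γ.Walk w (D.ax A i),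
    p.length = n
  have hex : ∃ n, ∃ A, R n A := by
    obtain ⟨p⟩ := D.conn.preconnected v (D.ax A₀ 0)
    exact ⟨p.length, A₀, hA₀, v, by simpa using mem_span (D := D) (v := v) (one_mem (D.grp S)),
      0, p, rfl⟩
  set m := Nat.find hex with hm
  have hmin : ∀ n A, R n A → m ≤ n := fun n A h => Nat.find_min' hex ⟨A, h⟩
  have hconst : ∀ w ∈ span D v S, ∀ B ∉ S, ∀ x (p : Γ.Walk x w), p.length ≤ m →
      D.pr B x = D.pr B w := by
    intro w hw B hB x p
    induction p with
    | nil => intro _; rfl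
    | cons hadj q ih =>
      intro hl
      rw [SimpleGraph.Walk.length_cons] at hl
      rw [← ih hw (by omega)]
      rcases D.pr_adj B hadj with h | ⟨i, ⟨rfl, rfl⟩ | ⟨rfl, rfl⟩⟩
      · exact h
      · have := hmin q.length B ⟨hB, _, hw, _, q.reverse, by simp⟩
        omega
      · have := hmin q.length B ⟨hB, _, hw, _, q.reverse, by simp⟩
        omega
  refine ⟨{A | R m A}, Nat.find_spec hex, ⟨fun A hA => hA.1, ?_, ?_, ?_, ?_⟩⟩
  · rintro s hs A ⟨hA, w, hw, i, p, hp⟩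
    refine ⟨hS.smul_notMem hs hA, s • w, smul_mem_span hs hw, i, ?_⟩
    rw [D.ax_smul]
    let φ : Γ →g Γ := ⟨fun x => s • x, fun h => D.adj_smul s h⟩
    exact ⟨p.map φ, by simpa using hp⟩
  · rintro A B ⟨hA, w, hw, i, p, hp⟩ hAB
    refine ⟨fun hB => hA (hS.mem_of_eqv hB (D.eqv_equivalence.symm hAB)), w, hw, ?_⟩
    obtain ⟨j, hj⟩ := D.exists_ax_eq_of_eqv hAB i
    exact ⟨j, p.copy rfl hj, by simpa using hp⟩
  · rintro A ⟨hA, w, hw, i, p, hp⟩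
    exact ⟨i, w, hw, fun B hB => hconst w hw B hB _ p.reverse (by simp [hp])⟩
  · intro B hB hBT i hi
    apply hBT
    have := hmin 0 B ⟨hB, _, hi, i, SimpleGraph.Walk.nil, rfl⟩
    exact ⟨hB, _, hi, i, SimpleGraph.Walk.nil, by simp; omega⟩

variable {T : Set I} (hT : IsNearest D v S T)
include hT

lemma IsWindmill.le_of_nearest {A B : I} (hA : A ∈ T) (hB : B ∉ S) (hAB : ¬ D.eqv B A) (j : ℤ) :
    |D.pr B v - D.pr B (D.ax A j)| ≤ 3 * D.c B := by
  obtain ⟨i, w, hw, h⟩ := hT.exists_ax A hA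
  have h1 := hS.le_of_mem_span hB hw
  rw [← h B hB] at h1
  have h2 := D.overlap_le hAB i j
  rw [abs_le] at *
  omega

omit hS in
lemma IsNearest.exists_pr_eq {A B : I} (hA : A ∈ T) (hB : B ∉ S) (hBT : B ∉ T) :
    ∃ i, D.pr B v = D.pr B (D.ax A i) := by
  obtain ⟨i, w, hw, h⟩ := hT.exists_ax A hA
  exact ⟨i, by rw [h B hB, pr_eq_of_disjoint (hT.ax_notMem B hB hBT) hw]⟩

omit hS hT in
/-- Normal forms of elements of the group generated by the translations along `S` and `T`. -/
inductive NF (D : AxisSystem P V I Γ) (S T : Set I) : I → P → Prop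
  | base {A : I} {k : ℤ} {s : P} : A ∈ T → k ≠ 0 → s ∈ D.grp S → NF D S T A (D.rho A ^ k * s)
  | cons {A B : I} {k : ℤ} {n : P} : A ∈ T → k ≠ 0 → NF D S T B n → ¬ D.eqv A B →
      NF D S T A (D.rho A ^ k * n)

omit hS hT in
lemma le_abs_add_mul {a b d t : ℤ} (ht : 0 ≤ t) {k : ℤ} (hk : k ≠ 0) (h : |a - b| ≤ 3 * d) :
    t - 3 * d ≤ |a - (b + k * t)| := by
  have h1 : t ≤ |k * t| := by
    rw [abs_mul, abs_of_nonneg ht]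
    exact le_mul_of_one_le_left ht (Int.one_le_abs hk)
  have h2 : |k * t| ≤ |a - (b + k * t)| + |a - b| := by
    have : k * t = (a - b) - (a - (b + k * t)) := by ring
    calc |k * t| = |(a - b) - (a - (b + k * t))| := by rw [← this]
      _ ≤ |a - b| + |a - (b + k * t)| := abs_sub _ _
      _ = _ := add_comm _ _
  linarith

omit hS hT in
lemma tau_nonneg (D : AxisSystem P V I Γ) (A : I) : 0 ≤ D.tau A := by
  have := D.c_pos A; have := D.c_lt_tau A; omega

omit hS hT in
lemma NF.mem {A : I} {n : P} (h : NF D S T A n) : A ∈ T := by cases h <;> assumption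

omit hS hT in
lemma NF.exists_eq {A : I} {n : P} (h : NF D S T A n) : ∃ (k : ℤ) (n' : P), k ≠ 0 ∧
    n = D.rho A ^ k * n' ∧ (n' ∈ D.grp S ∨ ∃ B, NF D S T B n' ∧ ¬ D.eqv A B) := by
  cases h with
  | base h1 h2 h3 => exact ⟨_, _, h2, rfl, Or.inl h3⟩
  | cons h1 h2 h3 h4 => exact ⟨_, _, h2, rfl, Or.inr ⟨_, h3, h4⟩⟩

lemma IsWindmill.chain {A : I} {n : P} (h : NF D S T A n) :
    D.tau A - 3 * D.c A ≤ |D.pr A v - D.pr A (n • v)| ∧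
      ∀ B ∈ T, ¬ D.eqv B A → |D.pr B v - D.pr B (n • v)| ≤ 3 * D.c B := by
  have side : ∀ {A : I} {n : P}, A ∈ T → D.tau A - 3 * D.c A ≤ |D.pr A v - D.pr A (n • v)| →
      ∀ B ∈ T, ¬ D.eqv B A → |D.pr B v - D.pr B (n • v)| ≤ 3 * D.c B := by
    intro A n hA h B hB hBA
    rcases D.exists_pr_eq A B (n • v) with ⟨j, hj⟩ | ⟨i, hi⟩
    · have h1 := hS.le_of_nearest hT hB (hT.notMem A hA)
        (fun h => hBA (D.eqv_equivalence.symm h)) j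
      rw [hj] at h
      have := D.c_pos A
      have := D.c_lt_tau A
      omega
    · rw [hi]
      exact hS.le_of_nearest hT hA (hT.notMem B hB) hBA i
  induction h with
  | @base A k s hA hk hs =>
    have h1 : D.tau A - 3 * D.c A ≤ |D.pr A v - D.pr A ((D.rho A ^ k * s) • v)| := by
      rw [mul_smul, D.pr_zpow]
      refine le_abs_add_mul (tau_nonneg D A) hk ?_
      have := hS.le_of_notMem A (hT.notMem A hA) s hs
      have := D.c_pos A
      omega
    exact ⟨h1, side hA h1⟩
  | @cons A B k n hA hk hn hAB ih =>
    have h1 : D.tau A - 3 * D.c A ≤ |D.pr A v - D.pr A ((D.rho A ^ k * n) • v)| := by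
      rw [mul_smul, D.pr_zpow]
      exact le_abs_add_mul (tau_nonneg D A) hk (ih.2 A hA hAB)
    exact ⟨h1, side hA h1⟩

omit hS in
lemma IsNearest.smul_nf {s : P} (hs : s ∈ D.grp S) {A : I} {n : P} (h : NF D S T A n) :
    NF D S T (s • A) (s * n) := by
  induction h with
  | @base A k s' hA hk hs' =>
    have : s * (D.rho A ^ k * s') = D.rho (s • A) ^ k * (s * s') := by
      rw [D.rho_smul, conj_zpow]; group
    rw [this]
    exact NF.base (hT.smul_mem s hs A hA) hk (mul_mem hs hs')
  | @cons A B k n hA hk hn hAB ih =>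
    have : s * (D.rho A ^ k * n) = D.rho (s • A) ^ k * (s * n) := by
      rw [D.rho_smul, conj_zpow]; group
    rw [this]
    refine NF.cons (hT.smul_mem s hs A hA) hk ih fun h => hAB ?_
    simpa using D.eqv_smul s⁻¹ h

omit hS in
lemma IsNearest.mem_grp_union {n : P} (hn : n ∈ D.grp (S ∪ T)) :
    n ∈ D.grp S ∨ ∃ A, NF D S T A n := by
  have step : ∀ A ∈ T, ∀ k : ℤ, ∀ n, (n ∈ D.grp S ∨ ∃ A, NF D S T A n) →
      (D.rho A ^ k * n ∈ D.grp S ∨ ∃ B, NF D S T B (D.rho A ^ k * n)) := by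
    intro A hA k n h
    by_cases hk : k = 0
    · simpa [hk] using h
    rcases h with h | ⟨B, h⟩
    · exact Or.inr ⟨A, NF.base hA hk h⟩
    by_cases hAB : D.eqv A B
    · obtain ⟨l, n', hl, rfl, h'⟩ := h.exists_eq
      rw [← D.rho_eq_of_eqv hAB, ← mul_assoc, ← zpow_add]
      by_cases hkl : k + l = 0
      · rw [hkl, zpow_zero, one_mul]
        rcases h' with h' | ⟨C, h', _⟩
        · exact Or.inl h'
        · exact Or.inr ⟨C, h'⟩
      · rcases h' with h' | ⟨C, h', hBC⟩
        · exact Or.inr ⟨A, NF.base hA hkl h'⟩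
        · exact Or.inr ⟨A, NF.cons hA hkl h' fun h => hBC
            (D.eqv_equivalence.trans (D.eqv_equivalence.symm hAB) h)⟩
    · exact Or.inr ⟨A, NF.cons hA hk h hAB⟩
  have stepS : ∀ s ∈ D.grp S, ∀ n, (n ∈ D.grp S ∨ ∃ A, NF D S T A n) →
      (s * n ∈ D.grp S ∨ ∃ B, NF D S T B (s * n)) := by
    rintro s hs n (h | ⟨A, h⟩)
    · exact Or.inl (mul_mem hs h)
    · exact Or.inr ⟨_, hT.smul_nf hs h⟩
  refine Subgroup.closure_induction_left (p := fun n _ => n ∈ D.grp S ∨ ∃ A, NF D S T A n)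
    (Or.inl (one_mem _)) ?_ ?_ hn
  · rintro _ ⟨A, hA | hA, rfl⟩ n _ h
    · exact stepS _ (Subgroup.subset_closure ⟨A, hA, rfl⟩) _ h
    · simpa using step A hA 1 n h
  · rintro _ ⟨A, hA | hA, rfl⟩ n _ h
    · exact stepS _ (inv_mem (Subgroup.subset_closure ⟨A, hA, rfl⟩)) _ h
    · simpa using step A hA (-1) n h

omit hS hT in
/-- The orbit of `S ∪ T` under the group it generates. -/
def saturation (D : AxisSystem P V I Γ) (S T : Set I) : Set I :=
  {C | ∃ g ∈ D.grp (S ∪ T), ∃ A ∈ S ∪ T, C = g • A}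

omit hS hT in
lemma smul_notMem_saturation {g : P} (hg : g ∈ D.grp (S ∪ T)) {C : I}
    (hC : C ∉ saturation D S T) : g • C ∉ saturation D S T := by
  rintro ⟨g', hg', A, hA, h⟩
  refine hC ⟨g⁻¹ * g', mul_mem (inv_mem hg) hg', A, hA, ?_⟩
  rw [mul_smul, ← h, inv_smul_smul]

omit hS hT in
lemma subset_saturation : S ∪ T ⊆ saturation D S T := fun A hA =>
  ⟨1, one_mem _, A, hA, by simp⟩

omit hS hT in
lemma rho_mem_grp {A : I} (hA : A ∈ S ∪ T) (k : ℤ) : D.rho A ^ k ∈ D.grp (S ∪ T) :=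
  zpow_mem (show D.rho A ∈ D.grp (S ∪ T) from Subgroup.subset_closure ⟨A, hA, rfl⟩) k

omit hS hT in
lemma grp_saturation : D.grp (saturation D S T) = D.grp (S ∪ T) := by
  apply le_antisymm
  · refine (Subgroup.closure_le _).2 ?_
    rintro _ ⟨_, ⟨g, hg, A, hA, rfl⟩, rfl⟩
    rw [D.rho_smul]
    have := rho_mem_grp (D := D) hA 1
    rw [zpow_one] at this
    exact mul_mem (mul_mem hg this) (inv_mem hg)
  · exact Subgroup.closure_mono (Set.image_mono subset_saturation)

lemma IsWindmill.saturation_mem_of_eqv {A B : I} (hA : A ∈ saturation D S T) (h : D.eqv A B) :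
    B ∈ saturation D S T := by
  obtain ⟨g, hg, A, hA, rfl⟩ := hA
  refine ⟨g, hg, g⁻¹ • B, ?_, by simp⟩
  have h' : D.eqv A (g⁻¹ • B) := by simpa using D.eqv_smul g⁻¹ h
  rcases hA with hA | hA
  · exact Or.inl (hS.mem_of_eqv hA h')
  · exact Or.inr (hT.mem_of_eqv hA h')

lemma IsWindmill.le_of_notMem_saturation {A : I} {n : P} (h : NF D S T A n) :
    ∀ C ∉ saturation D S T, ∀ z, |D.pr C z - D.pr C v| ≤ D.c C →
      |D.pr A v - D.pr A z| ≤ 3 * D.c A → |D.pr C z - D.pr C (n • v)| ≤ 2 * D.c C := by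
  -- points with the same projection as a point of `A` are close to `v`
  have near : ∀ A ∈ T, ∀ C ∉ saturation D S T, ∀ x,
      (¬ ∃ j, D.pr A x = D.pr A (D.ax C j)) → |D.pr C x - D.pr C v| ≤ D.c C := by
    intro A hA C hC x hx
    have hCA : ¬ D.eqv C A := fun h => hC (hS.saturation_mem_of_eqv hT
      (subset_saturation (Or.inr hA)) (D.eqv_equivalence.symm h))
    obtain ⟨i, hi⟩ := (D.exists_pr_eq A C x).resolve_left hx
    obtain ⟨j, hj⟩ := hT.exists_pr_eq hA (fun h => hC (subset_saturation (Or.inl h)))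
      (fun h => hC (subset_saturation (Or.inr h)))
    rw [hi, hj]
    exact D.overlap_le hCA i j
  -- the inductive step
  have step : ∀ A ∈ T, ∀ k : ℤ, k ≠ 0 → ∀ n, |D.pr A v - D.pr A (n • v)| ≤ 3 * D.c A →
      (∀ C ∉ saturation D S T, ∀ z, |D.pr C z - D.pr C v| ≤ D.c C →
        (∀ B ∈ T, ¬ D.eqv B A → |D.pr B v - D.pr B z| ≤ 3 * D.c B) →
        |D.pr C z - D.pr C (n • v)| ≤ 2 * D.c C) →
      ∀ C ∉ saturation D S T, ∀ z, |D.pr C z - D.pr C v| ≤ D.c C →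
      |D.pr A v - D.pr A z| ≤ 3 * D.c A →
      |D.pr C z - D.pr C ((D.rho A ^ k * n) • v)| ≤ 2 * D.c C := by
    intro A hA k hk n hn hrec C hC z hz hzA
    have hcA := D.c_pos A
    have htA := D.c_lt_tau A
    by_cases hj : ∃ j, D.pr A ((D.rho A ^ k * n) • v) = D.pr A (D.ax C j)
    swap
    · have := near A hA C hC _ hj
      rw [abs_le] at *
      omega
    obtain ⟨j, hj⟩ := hj
    set g := D.rho A ^ (-k) with hg
    have hgmem : g ∈ D.grp (S ∪ T) := rho_mem_grp (Or.inr hA) _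
    have hC' := smul_notMem_saturation hgmem hC
    have hCA : ¬ D.eqv A (g • C) := fun h => hC' (hS.saturation_mem_of_eqv hT
      (subset_saturation (Or.inr hA)) h)
    have hgn : g • (D.rho A ^ k * n) • v = n • v := by
      rw [← mul_smul, hg, ← mul_assoc, ← zpow_add]; simp
    have e1 : D.pr A (n • v) = D.pr A (D.ax (g • C) j) := by
      rw [D.ax_smul, ← hgn, hg, D.pr_zpow, D.pr_zpow, hj]
    have e2 : D.pr A (g • z) = D.pr A z + (-k) * D.tau A := D.pr_zpow A (-k) z
    have far : D.tau A - 3 * D.c A ≤ |D.pr A v - D.pr A (g • z)| := by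
      rw [e2]
      exact le_abs_add_mul (tau_nonneg D A) (neg_ne_zero.2 hk) hzA
    have key := hrec (g • C) hC' (g • z) ?_ ?_
    · rwa [D.pr_smul, ← hgn, D.pr_smul, D.c_smul] at key
    · refine near A hA _ hC' _ ?_
      rintro ⟨i, hi⟩
      have h1 := D.overlap_le hCA i j
      rw [← hi, ← e1] at h1
      have h2 : |D.pr A v - D.pr A (g • z)| ≤ 4 * D.c A := by
        rw [abs_le] at h1 hn ⊢
        omega
      omega
    · intro B hB hBA
      rcases D.exists_pr_eq A B (g • z) with ⟨i, hi⟩ | ⟨i, hi⟩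
      · have h1 := hS.le_of_nearest hT hB (hT.notMem A hA)
          (fun h => hBA (D.eqv_equivalence.symm h)) i
        rw [← hi] at h1
        omega
      · rw [hi]
        exact hS.le_of_nearest hT hA (hT.notMem B hB) hBA i
  induction h with
  | @base A k s hA hk hs =>
    refine step A hA k hk s ?_ ?_
    · have := hS.le_of_notMem A (hT.notMem A hA) s hs
      have := D.c_pos A
      omega
    · intro C hC z hz _
      have : D.pr C (s • v) = D.pr C v := pr_eq_of_disjoint
        (hT.ax_notMem C (fun h => hC (subset_saturation (Or.inl h)))
          (fun h => hC (subset_saturation (Or.inr h)))) (mem_span hs)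
      rw [this]
      have := D.c_pos C
      omega
  | @cons A B k n hA hk hn hAB ih =>
    refine step A hA k hk n ((hS.chain hT hn).2 A hA hAB) ?_
    intro C hC z hz hz'
    exact ih C hC z hz (hz' B hn.mem fun h => hAB (D.eqv_equivalence.symm h))

lemma IsWindmill.saturation : D.IsWindmill v (saturation D S T) := by
  refine ⟨?_, fun hA h => hS.saturation_mem_of_eqv hT hA h, ?_, ?_⟩
  · rw [grp_saturation]
    rintro s hs _ ⟨g, hg, A, hA, rfl⟩
    exact ⟨s * g, mul_mem hs hg, A, hA, by rw [mul_smul]⟩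
  · intro C hC s hs
    rw [grp_saturation] at hs
    have hc := D.c_pos C
    rcases hT.mem_grp_union hs with hs | ⟨A, hA⟩
    · exact hS.le_of_notMem C (fun h => hC (subset_saturation (Or.inl h))) s hs
    · refine hS.le_of_notMem_saturation hT hA C hC v ?_ ?_
      · simpa using hc.le
      · have := D.c_pos A
        simp; omega
  · intro s hs h1
    rw [grp_saturation] at hs
    rcases hT.mem_grp_union hs with hs | ⟨A, hA⟩
    · exact hS.exists_le s hs h1
    · exact ⟨A, (hS.chain hT hA).1⟩

end Step

lemma exists_mem_grp_of_mem_sUnion {c : Set (Set I)} (hc : IsChain (· ⊆ ·) c) (hne : c.Nonempty)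
    {s : P} (hs : s ∈ D.grp (⋃₀ c)) : ∃ S ∈ c, s ∈ D.grp S := by
  have mono : ∀ {S T : Set I}, S ⊆ T → D.grp S ≤ D.grp T := fun h =>
    Subgroup.closure_mono (Set.image_mono h)
  refine Subgroup.closure_induction (p := fun s _ => ∃ S ∈ c, s ∈ D.grp S) ?_ ?_ ?_ ?_ hs
  · rintro _ ⟨A, ⟨S, hS, hA⟩, rfl⟩
    exact ⟨S, hS, Subgroup.subset_closure ⟨A, hA, rfl⟩⟩
  · obtain ⟨S, hS⟩ := hne
    exact ⟨S, hS, one_mem _⟩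
  · rintro x y _ _ ⟨S, hS, hx⟩ ⟨T, hT, hy⟩
    rcases hc.total hS hT with h | h
    · exact ⟨T, hT, mul_mem (mono h hx) hy⟩
    · exact ⟨S, hS, mul_mem hx (mono h hy)⟩
  · rintro x _ ⟨S, hS, hx⟩
    exact ⟨S, hS, inv_mem hx⟩

/-- A nontrivial element of the group generated by all translations moves every vertex by almost
a full translation length along some axis. -/
theorem exists_le_of_mem_closure (v : V) {n : P} (hn : n ∈ Subgroup.closure (Set.range D.rho))
    (h1 : n ≠ 1) : ∃ A, D.tau A - 3 * D.c A ≤ |D.pr A v - D.pr A (n • v)| := by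
  have hempty : D.IsWindmill v ∅ := by
    have : ∀ s ∈ D.grp ∅, s = 1 := fun s hs => by simpa [grp] using hs
    refine ⟨fun _ _ A hA => hA.elim, fun hA => hA.elim, fun B _ s hs => ?_,
      fun s hs h => absurd (this s hs) h⟩
    have hc := D.c_pos B
    rw [this s hs]
    simp; omega
  obtain ⟨S, -, hS⟩ := zorn_subset_nonempty {S | D.IsWindmill v S} (by
    intro c hcS hc hne
    refine ⟨⋃₀ c, ⟨?_, ?_, ?_, ?_⟩, fun S hS => Set.subset_sUnion_of_mem hS⟩
    · rintro s hs A ⟨S, hS, hA⟩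
      obtain ⟨T, hT, hs⟩ := D.exists_mem_grp_of_mem_sUnion hc hne hs
      rcases hc.total hS hT with h | h
      · exact ⟨T, hT, (hcS hT).smul_mem s hs A (h hA)⟩
      · exact ⟨S, hS, (hcS hS).smul_mem s (Subgroup.closure_mono (Set.image_mono h) hs) A hA⟩
    · rintro A B ⟨S, hS, hA⟩ h
      exact ⟨S, hS, (hcS hS).mem_of_eqv hA h⟩
    · intro B hB s hs
      obtain ⟨T, hT, hs⟩ := D.exists_mem_grp_of_mem_sUnion hc hne hs
      exact (hcS hT).le_of_notMem B (fun h => hB ⟨T, hT, h⟩) s hs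
    · intro s hs h
      obtain ⟨T, hT, hs⟩ := D.exists_mem_grp_of_mem_sUnion hc hne hs
      exact (hcS hT).exists_le s hs h) ∅ hempty
  have hSW : D.IsWindmill v S := hS.prop
  have huniv : S = Set.univ := by
    by_contra hne
    obtain ⟨T, ⟨A, hA⟩, hT⟩ := hSW.exists_isNearest hne
    have hle := hS.le_of_ge (hSW.saturation hT)
      (Set.subset_union_left.trans subset_saturation)
    exact hT.notMem A hA (hle (subset_saturation (Or.inr hA)))
  subst huniv
  exact hSW.exists_le n (by rwa [grp, Set.image_univ]) h1

lemma ax_zpow (A : I) (k i : ℤ) : D.ax A (i + k * D.tau A) = D.rho A ^ k • D.ax A i := by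
  induction k generalizing i with
  | zero => simp
  | succ k ih =>
    rw [zpow_add_one, mul_smul, ← D.ax_rho, ← ih]
    congr 1; ring
  | pred k ih =>
    have : D.ax A (i - D.tau A) = (D.rho A)⁻¹ • D.ax A i := by
      rw [eq_inv_smul_iff, ← D.ax_rho, sub_add_cancel]
    rw [zpow_sub_one, mul_smul, ← this, ← ih]
    congr 1; ring

lemma tau_smul (g : P) (A : I) : D.tau (g • A) = D.tau A := by
  have h1 := D.pr_rho (g • A) (g • D.ax A 0)
  have h2 := D.pr_rho A (D.ax A 0)
  rw [D.rho_smul, mul_smul, inv_smul_smul, mul_smul, D.pr_smul, D.pr_smul] at h1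
  linarith

include D in
lemma dist_smul (g : P) (x y : V) : Γ.dist (g • x) (g • y) = Γ.dist x y := by
  have key : ∀ (g : P) (x y : V), Γ.dist (g • x) (g • y) ≤ Γ.dist x y := by
    intro g x y
    obtain ⟨p, hp⟩ := (D.conn.preconnected x y).exists_walk_length_eq_dist
    let φ : Γ →g Γ := ⟨fun x => g • x, fun h => D.adj_smul g h⟩
    rw [← hp]
    exact (SimpleGraph.dist_le (p.map φ)).trans (by simp)
  refine le_antisymm (key g x y) ?_
  simpa using key g⁻¹ (g • x) (g • y)

lemma abs_pr_sub_le_dist (A : I) (x y : V) : |D.pr A x - D.pr A y| ≤ Γ.dist x y := by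
  obtain ⟨p, hp⟩ := (D.conn.preconnected x y).exists_walk_length_eq_dist
  rw [← hp]
  clear hp
  induction p with
  | nil => simp
  | @cons a b c hadj q ih =>
    rw [SimpleGraph.Walk.length_cons]
    push_cast
    have : |D.pr A a - D.pr A b| ≤ 1 := by
      rcases D.pr_adj A hadj with h | ⟨i, ⟨rfl, rfl⟩ | ⟨rfl, rfl⟩⟩
      · simp [h]
      · simp [D.pr_ax]
      · simp [D.pr_ax]
    have := abs_sub_le (D.pr A a) (D.pr A b) (D.pr A c)
    linarith

lemma dist_ax_le (A : I) (i j : ℤ) : (Γ.dist (D.ax A i) (D.ax A j) : ℤ) ≤ |i - j| := by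
  have key : ∀ (n : ℕ) (i : ℤ), Γ.dist (D.ax A i) (D.ax A (i + n)) ≤ n := by
    intro n i
    induction n with
    | zero => simp
    | succ n ih =>
      have h1 := D.conn.dist_triangle (u := D.ax A i) (v := D.ax A (i + n))
        (w := D.ax A (i + n + 1))
      have h2 := SimpleGraph.dist_eq_one_iff_adj.2 (D.ax_adj A (i + n))
      push_cast
      rw [← add_assoc]
      omega
  rcases le_total i j with h | h
  · have := key (j - i).toNat i
    have e : i + ((j - i).toNat : ℤ) = j := by omega
    rw [e] at this
    rw [abs_sub_comm, abs_of_nonneg (by omega)]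
    omega
  · have := key (i - j).toNat j
    have e : j + ((i - j).toNat : ℤ) = i := by omega
    rw [e, SimpleGraph.dist_comm] at this
    rw [abs_of_nonneg (by omega)]
    omega

/-- Geodesics between points with different projections pass through both projections. -/
lemma le_dist_of_pr_ne (A : I) (x y : V) (h : D.pr A x ≠ D.pr A y) :
    Γ.dist x (D.ax A (D.pr A x)) + |D.pr A x - D.pr A y| + Γ.dist (D.ax A (D.pr A y)) y
      ≤ (Γ.dist x y : ℤ) := by
  obtain ⟨p, hp⟩ := (D.conn.preconnected x y).exists_walk_length_eq_dist
  rw [← hp]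
  clear hp
  induction p with
  | nil => exact absurd rfl h
  | @cons a b c hadj q ih =>
    rw [SimpleGraph.Walk.length_cons]
    push_cast
    have hq : (Γ.dist b c : ℤ) ≤ q.length := by exact_mod_cast SimpleGraph.dist_le q
    have side : ∀ {a b : V} (q : Γ.Walk b c) {m m' : ℤ}, D.pr A a ≠ D.pr A c →
        a = D.ax A m → b = D.ax A m' → |m - m'| = 1 →
        (D.pr A b ≠ D.pr A c → Γ.dist b (D.ax A (D.pr A b)) + |D.pr A b - D.pr A c| +
          Γ.dist (D.ax A (D.pr A c)) c ≤ (q.length : ℤ)) → (Γ.dist b c : ℤ) ≤ q.length →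
        Γ.dist a (D.ax A (D.pr A a)) + |D.pr A a - D.pr A c| + Γ.dist (D.ax A (D.pr A c)) c
          ≤ (q.length : ℤ) + 1 := by
      rintro _ _ q m m' h rfl rfl h1 ih hq
      simp only [D.pr_ax, SimpleGraph.dist_self, Nat.cast_zero, zero_add] at *
      by_cases h2 : m' = D.pr A c
      · rw [← h2, h1]; linarith
      · have := ih h2
        have := abs_sub_le m m' (D.pr A c)
        linarith
    rcases D.pr_adj A hadj with h1 | ⟨i, ⟨h1, h2⟩ | ⟨h1, h2⟩⟩
    · have h2 := ih (h1 ▸ h)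
      have h3 := D.conn.dist_triangle (u := a) (v := b) (w := D.ax A (D.pr A b))
      have h4 := SimpleGraph.dist_eq_one_iff_adj.2 hadj
      rw [h1]
      omega
    · exact side q h h1 h2 (by simp) ih hq
    · exact side q h h2 h1 (by simp) ih hq

lemma rho_zpow_mem (A : I) (k : ℤ) : D.rho A ^ k ∈ Subgroup.closure (Set.range D.rho) :=
  zpow_mem (show D.rho A ∈ Subgroup.closure (Set.range D.rho) from
    Subgroup.subset_closure ⟨A, rfl⟩) k

/-- If `u` is a point of its orbit under the group of all translations closest to `v`, then
projections of `u` and `v` differ by at most half a translation length. -/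
lemma two_mul_abs_le_tau {v u : V}
    (hmin : ∀ n ∈ Subgroup.closure (Set.range D.rho), Γ.dist v u ≤ Γ.dist v (n • u)) (A : I) :
    2 * |D.pr A v - D.pr A u| ≤ D.tau A := by
  by_contra! h
  have hc := D.c_pos A
  have ht := D.c_lt_tau A
  have hne : D.pr A v ≠ D.pr A u := fun h' => by
    rw [h'] at h
    simp at h
    omega
  have h1 := D.le_dist_of_pr_ne A v u hne
  have key : ∀ k : ℤ, |D.pr A v - D.pr A u| ≤ |D.pr A v - (D.pr A u + k * D.tau A)| := by
    intro k
    have h2 := hmin _ (D.rho_zpow_mem A k)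
    have h3 := D.conn.dist_triangle (u := v) (v := D.ax A (D.pr A v)) (w := D.rho A ^ k • u)
    have h4 := D.conn.dist_triangle (u := D.ax A (D.pr A v))
      (v := D.ax A (D.pr A u + k * D.tau A)) (w := D.rho A ^ k • u)
    have h5 := D.dist_ax_le A (D.pr A v) (D.pr A u + k * D.tau A)
    have h6 : Γ.dist (D.ax A (D.pr A u + k * D.tau A)) (D.rho A ^ k • u) =
        Γ.dist (D.ax A (D.pr A u)) u := by
      rw [D.ax_zpow, D.dist_smul]
    omega
  have h2 := key 1
  have h3 := key (-1)
  rcases abs_cases (D.pr A v - D.pr A u) with ⟨h4, _⟩ | ⟨h4, _⟩ <;>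
  rcases abs_cases (D.pr A v - (D.pr A u + 1 * D.tau A)) with ⟨h5, _⟩ | ⟨h5, _⟩ <;>
  rcases abs_cases (D.pr A v - (D.pr A u + -1 * D.tau A)) with ⟨h6, _⟩ | ⟨h6, _⟩ <;>
  omega

lemma eq_one_of_smul_eq {v u : V}
    (hmin : ∀ n ∈ Subgroup.closure (Set.range D.rho), Γ.dist v u ≤ Γ.dist v (n • u))
    {l n : P} (hl : l • v = v) (hn : n ∈ Subgroup.closure (Set.range D.rho))
    (h : n • u = l⁻¹ • u) : n = 1 := by
  by_contra hn1
  obtain ⟨A, hA⟩ := D.exists_le_of_mem_closure u hn hn1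
  have hc := D.c_pos A
  have hct := D.c_lt_tau A
  by_cases heq : D.eqv A (l • A)
  · obtain ⟨k, hk⟩ := D.exists_zpow_eq l heq
    have h1 := D.pr_zpow A k v
    rw [← hk, hl] at h1
    have h2 : k * D.tau A = 0 := by omega
    have h3 : k = 0 := by
      rcases mul_eq_zero.1 h2 with h | h
      · exact h
      · omega
    rw [h, hk, h3] at hA
    simp at hA
    omega
  have h1 := D.two_mul_abs_le_tau hmin A
  have h2 := D.two_mul_abs_le_tau hmin (l • A)
  have e : ∀ x, D.pr (l • A) x = D.pr A (l⁻¹ • x) := fun x => by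
    rw [← D.pr_smul l A, smul_inv_smul]
  have hl' : l⁻¹ • v = v := by rw [inv_smul_eq_iff, hl]
  have hv : D.pr (l • A) v = D.pr A v := by rw [e, hl']
  have hu : D.pr (l • A) u = D.pr A (n • u) := by rw [e, h]
  have hdist : Γ.dist v (D.ax (l • A) (D.pr A v)) = Γ.dist v (D.ax A (D.pr A v)) := by
    rw [D.ax_smul, ← D.dist_smul l v (D.ax A (D.pr A v)), hl]
  have h3 : 2 * D.c A ≤ |D.pr A v - D.pr A u| := by
    rw [hv, hu, D.tau_smul] at h2
    rw [abs_sub_comm] at h1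
    have := abs_sub_le (D.pr A u) (D.pr A v) (D.pr A (n • u))
    rw [abs_sub_comm (D.pr A v) (D.pr A u)]
    omega
  have h4 : 2 * D.c A ≤ |D.pr (l • A) v - D.pr (l • A) u| := by
    rw [hv, hu]
    rw [abs_sub_comm] at h1
    have := abs_sub_le (D.pr A u) (D.pr A v) (D.pr A (n • u))
    omega
  have o1 := D.overlap_le heq
  have o2 := D.overlap_le (fun h => heq (D.eqv_equivalence.symm h))
  rw [D.c_smul] at o2
  -- two axes at the same distance from `v` cannot be passed one after the other
  have order : ∀ B C, D.pr B v = D.pr C v →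
      Γ.dist v (D.ax B (D.pr C v)) = Γ.dist v (D.ax C (D.pr C v)) →
      2 * D.c A ≤ |D.pr C v - D.pr C u| → (∀ i j, |D.pr C (D.ax B i) - D.pr C (D.ax B j)| ≤ D.c A) →
      ∀ i, D.pr C u ≠ D.pr C (D.ax B i) := by
    intro B C hBC hd hCu ho i hi
    have h5 := ho (D.pr C v) i
    rw [← hi] at h5
    have h6 : 0 < |D.pr C v - D.pr C (D.ax B (D.pr C v))| := by
      have := abs_sub_le (D.pr C v) (D.pr C (D.ax B (D.pr C v))) (D.pr C u)
      omega
    have h7 := D.le_dist_of_pr_ne C v (D.ax B (D.pr C v))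
      (fun h => by rw [← h] at h6; simp at h6)
    omega
  rcases D.exists_pr_eq A (l • A) u with ⟨j, hj⟩ | ⟨i, hi⟩
  · exact order (l • A) A hv hdist h3 o1 j hj
  · exact order A (l • A) hv.symm (by rw [hv]; exact hdist.symm) h4 o2 i hi

end AxisSystem

section Amalgam

variable {P : Type} [Group P] (K : Bool → Subgroup P)

/-- Products of letters taken alternately from `K true` and `K false`, none of them in both
subgroups; the first letter is in `K i`. -/
inductive Alt : Bool → P → Prop
  | single {i : Bool} {x : P} : x ∈ K i → x ∉ K (!i) → Alt i x
  | cons {i : Bool} {x g : P} : x ∈ K i → x ∉ K (!i) → Alt (!i) g → Alt i (x * g)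

/-- `P` is the amalgamated product of its subgroups `K true` and `K false`. -/
structure IsAmalgam : Prop where
  closure_eq_top : Subgroup.closure (⋃ i, (K i : Set P)) = ⊤
  notMem : ∀ {i g}, Alt K i g → ¬ ∀ j, g ∈ K j
  not_alt : ∀ {i g}, Alt K i g → ¬ Alt K (!i) g

variable {K}

lemma forall_mem_of_mem {i : Bool} {x : P} (h1 : x ∈ K i) (h2 : x ∈ K (!i)) : ∀ j, x ∈ K j := by
  intro j
  cases i <;> cases j <;> assumption

lemma Alt.mul_left {i : Bool} {g h : P} (hg : Alt K i g) (hh : ∀ j, h ∈ K j) :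
    Alt K i (h * g) := by
  cases hg with
  | single h1 h2 =>
    exact .single (mul_mem (hh i) h1) fun h' => h2 ((Subgroup.mul_mem_cancel_left _ (hh _)).1 h')
  | cons h1 h2 h3 =>
    rw [← mul_assoc]
    exact .cons (mul_mem (hh i) h1)
      (fun h' => h2 ((Subgroup.mul_mem_cancel_left _ (hh _)).1 h')) h3

lemma Alt.mul_right {i : Bool} {g : P} (hg : Alt K i g) :
    (∀ x ∈ K (!i), Alt K i (g * x)) ∧ ∀ x ∈ K i, Alt K i (g * x) ∨ ∀ j, g * x ∈ K j := by
  induction hg with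
  | @single i y h1 h2 =>
    constructor
    · intro x hx
      by_cases hxi : x ∈ K i
      · exact .single (mul_mem h1 hxi) fun h => h2 ((Subgroup.mul_mem_cancel_right _ hx).1 h)
      · exact .cons h1 h2 (.single hx (by simpa using hxi))
    · intro x hx
      by_cases h : y * x ∈ K (!i)
      · exact Or.inr (forall_mem_of_mem (mul_mem h1 hx) h)
      · exact Or.inl (.single (mul_mem h1 hx) h)
  | @cons i y g h1 h2 h3 ih =>
    rw [Bool.not_not] at ih
    constructor
    · intro x hx
      rw [mul_assoc]
      rcases ih.2 x hx with h | h
      · exact .cons h1 h2 h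
      · exact .single (mul_mem h1 (h _)) fun h' => h2 ((Subgroup.mul_mem_cancel_right _ (h _)).1 h')
    · intro x hx
      rw [mul_assoc]
      exact Or.inl (.cons h1 h2 (ih.1 x hx))

lemma alt_mul_iff {i : Bool} {g x : P} (hx : x ∈ K i) : Alt K (!i) (g * x) ↔ Alt K (!i) g := by
  constructor
  · intro h
    simpa using h.mul_right.1 x⁻¹ (by simpa using hx)
  · intro h
    exact h.mul_right.1 x (by simpa using hx)

lemma IsAmalgam.trichotomy (hK : IsAmalgam K) (g : P) : (∀ j, g ∈ K j) ∨ ∃ i, Alt K i g := by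
  have step : ∀ i, ∀ x ∈ K i, ∀ g, ((∀ j, g ∈ K j) ∨ ∃ i, Alt K i g) →
      ((∀ j, x * g ∈ K j) ∨ ∃ i, Alt K i (x * g)) := by
    intro i x hx g hg
    by_cases hx' : x ∈ K (!i)
    · have hh := forall_mem_of_mem hx hx'
      rcases hg with hg | ⟨j, hg⟩
      · exact Or.inl fun j => mul_mem (hh j) (hg j)
      · exact Or.inr ⟨j, hg.mul_left hh⟩
    · rcases hg with hg | ⟨j, hg⟩
      · exact Or.inr ⟨i, .single (mul_mem hx (hg i)) fun h' => hx'
          ((Subgroup.mul_mem_cancel_right _ (hg _)).1 h')⟩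
      · by_cases hj : j = i
        · subst hj
          cases hg with
          | single h1 h2 =>
            by_cases h : x * g ∈ K (!j)
            · exact Or.inl (forall_mem_of_mem (mul_mem hx h1) h)
            · exact Or.inr ⟨j, .single (mul_mem hx h1) h⟩
          | @cons _ y g' h1 h2 h3 =>
            rw [← mul_assoc]
            by_cases h : x * y ∈ K (!j)
            · exact Or.inr ⟨!j, h3.mul_left (forall_mem_of_mem (mul_mem hx h1) h)⟩
            · exact Or.inr ⟨j, .cons (mul_mem hx h1) h h3⟩
        · have : j = !i := by cases i <;> cases j <;> simp_all
          subst this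
          exact Or.inr ⟨i, .cons hx hx' hg⟩
  have hg : g ∈ Subgroup.closure (⋃ i, (K i : Set P)) := by
    rw [hK.closure_eq_top]; trivial
  refine Subgroup.closure_induction_left
    (p := fun g _ => (∀ j, g ∈ K j) ∨ ∃ i, Alt K i g) (Or.inl fun j => one_mem _) ?_ ?_ hg
  · intro x hx g _ h
    obtain ⟨i, hi⟩ := Set.mem_iUnion.1 hx
    exact step i x hi g h
  · intro x hx g _ h
    obtain ⟨i, hi⟩ := Set.mem_iUnion.1 hx
    exact step i _ (inv_mem hi) g h

variable (K) in
/-- The vertices of the Bass–Serre tree. -/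
abbrev Vert : Type := Σ i : Bool, P ⧸ K i

variable (K) in
/-- The vertex of the coset `g K i`. -/
def vert (i : Bool) (g : P) : Vert K := ⟨i, (g : P ⧸ K i)⟩

lemma smul_vert (i : Bool) (g h : P) : g • vert K i h = vert K i (g * h) := rfl

lemma vert_eq_iff {i : Bool} {g h : P} : vert K i g = vert K i h ↔ g⁻¹ * h ∈ K i := by
  unfold vert
  rw [Sigma.mk.injEq]
  simp [QuotientGroup.eq]

lemma vert_surj (x : Vert K) : ∃ i g, x = vert K i g := by
  obtain ⟨i, c⟩ := x
  induction c using QuotientGroup.induction_on with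
  | H g => exact ⟨i, g, rfl⟩

variable (K) in
/-- The Bass–Serre tree. -/
def tree : SimpleGraph (Vert K) where
  Adj x y := ∃ i g, x = vert K i g ∧ y = vert K (!i) g
  symm := ⟨by
    rintro _ _ ⟨i, g, rfl, rfl⟩
    exact ⟨!i, g, rfl, by rw [Bool.not_not]⟩⟩
  loopless := ⟨by
    rintro _ ⟨i, g, h1, h2⟩
    have := congrArg Sigma.fst (h1.symm.trans h2)
    cases i <;> simp [vert] at this⟩

lemma tree_adj (i : Bool) (g : P) : (tree K).Adj (vert K i g) (vert K (!i) g) := ⟨i, g, rfl, rfl⟩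

lemma tree_adj_smul (g : P) {x y : Vert K} (h : (tree K).Adj x y) :
    (tree K).Adj (g • x) (g • y) := by
  obtain ⟨i, k, rfl, rfl⟩ := h
  exact ⟨i, g * k, rfl, rfl⟩

lemma IsAmalgam.connected (hK : IsAmalgam K) : (tree K).Connected := by
  have hmap : ∀ (g : P) (x y : Vert K), (tree K).Reachable x y →
      (tree K).Reachable (g • x) (g • y) := by
    rintro g x y ⟨w⟩
    let φ : tree K →g tree K := ⟨fun x => g • x, fun h => tree_adj_smul g h⟩
    exact ⟨w.map φ⟩
  have h1 : ∀ g, (tree K).Reachable (vert K true 1) (vert K true g) := by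
    intro g
    have hg : g ∈ Subgroup.closure (⋃ i, (K i : Set P)) := by
      rw [hK.closure_eq_top]; trivial
    refine Subgroup.closure_induction
      (p := fun g _ => (tree K).Reachable (vert K true 1) (vert K true g)) ?_ ?_ ?_ ?_ hg
    · intro x hx
      obtain ⟨i, hi⟩ := Set.mem_iUnion.1 hx
      cases i
      · have h2 := (tree_adj (K := K) true 1).reachable
        have h3 := (tree_adj (K := K) true x).reachable
        have h4 : vert K (!true) 1 = vert K (!true) x := vert_eq_iff.2 (by simpa using hi)
        rw [← h4] at h3
        exact h2.trans h3.symm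
      · have h4 : vert K true 1 = vert K true x := vert_eq_iff.2 (by simpa using hi)
        rw [h4]
    · exact SimpleGraph.Reachable.refl _
    · intro x y _ _ hx hy
      have := hmap x _ _ hy
      rw [smul_vert, smul_vert, mul_one] at this
      exact hx.trans this
    · intro x _ hx
      have := hmap x⁻¹ _ _ hx
      rw [smul_vert, smul_vert, mul_one, inv_mul_cancel] at this
      exact this.symm
  have h2 : ∀ x, (tree K).Reachable (vert K true 1) x := by
    intro x
    obtain ⟨i, g, rfl⟩ := vert_surj x
    cases i
    · exact (h1 g).trans (tree_adj true g).reachable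
    · exact h1 g
  have : Nonempty (Vert K) := ⟨vert K true 1⟩
  exact ⟨fun x y => (h2 x).symm.trans (h2 y)⟩

variable (K) in
/-- The side of the edge `1` that contains the vertex `K q`. -/
def baseSide (q : Bool) (x : Vert K) : Prop :=
  ∃ i g, x = vert K i g ∧ ((i = q ∧ ¬ Alt K (!q) g) ∨ (i = !q ∧ Alt K q g))

lemma baseSide_vert_iff {q i : Bool} {g : P} : baseSide K q (vert K i g) ↔
    ((i = q ∧ ¬ Alt K (!q) g) ∨ (i = !q ∧ Alt K q g)) := by
  constructor
  · rintro ⟨j, g', h, h'⟩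
    have hij : i = j := congrArg Sigma.fst h
    subst hij
    have hm := vert_eq_iff.1 h
    have hg : g' = g * (g⁻¹ * g') := by group
    rcases h' with ⟨rfl, h'⟩ | ⟨rfl, h'⟩
    · left
      rw [hg, alt_mul_iff hm] at h'
      exact ⟨rfl, h'⟩
    · right
      have := alt_mul_iff (g := g) hm
      rw [← hg, Bool.not_not] at this
      exact ⟨rfl, this.1 h'⟩
  · intro h
    exact ⟨i, g, rfl, h⟩

lemma IsAmalgam.forall_mem_of_crossing (hK : IsAmalgam K) {q i : Bool} {g : P}
    (h : ¬ (baseSide K q (vert K i g) ↔ baseSide K q (vert K (!i) g))) : ∀ j, g ∈ K j := by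
  rw [baseSide_vert_iff, baseSide_vert_iff] at h
  rcases hK.trichotomy g with h1 | ⟨j, h1⟩
  · exact h1
  · exfalso
    apply h
    have h2 := hK.not_alt h1
    cases i <;> cases q <;> cases j <;> simp_all

/-- The parity of an integer. -/
def par (k : ℤ) : Bool := decide (k % 2 = 1)

lemma par_succ (k : ℤ) : par (k + 1) = !par k := by
  unfold par
  rcases Int.emod_two_eq_zero_or_one k with h | h
  · have : (k + 1) % 2 = 1 := by omega
    simp [h, this]
  · have : (k + 1) % 2 = 0 := by omega
    simp [h, this]

lemma par_neg (k : ℤ) : par (-k) = par k := by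
  unfold par
  rcases Int.emod_two_eq_zero_or_one k with h | h
  · have : (-k) % 2 = 0 := by omega
    simp [h, this]
  · have : (-k) % 2 = 1 := by omega
    simp [h, this]

lemma par_two_mul (k : ℤ) : par (2 * k) = false := by
  simp [par]

lemma par_two_mul_add_one (k : ℤ) : par (2 * k + 1) = true := by
  rw [par_succ, par_two_mul]; rfl

variable (K) in
/-- A bi-infinite path without backtracking in the Bass–Serre tree, given by its edges. -/
structure Line where
  e : ℤ → P
  mem : ∀ k, (e k)⁻¹ * e (k + 1) ∈ K (par k)
  notMem : ∀ k, (e k)⁻¹ * e (k + 1) ∉ K (!par k)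

namespace Line

variable (A : Line K)

/-- The label of the turn between two successive edges. -/
def u (k : ℤ) : P := (A.e k)⁻¹ * A.e (k + 1)

/-- The vertices of the line. -/
def ax (k : ℤ) : Vert K := vert K (par k) (A.e k)

lemma ax_eq (k : ℤ) : A.ax k = vert K (par k) (A.e (k + 1)) := vert_eq_iff.2 (A.mem k)

lemma ax_succ (k : ℤ) : A.ax (k + 1) = vert K (!par k) (A.e (k + 1)) := by
  rw [ax, par_succ]

lemma ax_adj (k : ℤ) : (tree K).Adj (A.ax k) (A.ax (k + 1)) := by
  rw [ax_eq, ax_succ]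
  exact tree_adj _ _

/-- The translate of a line. -/
def translate (g : P) : Line K where
  e k := g * A.e k
  mem k := by simpa [mul_assoc] using A.mem k
  notMem k := by simpa [mul_assoc] using A.notMem k

lemma ax_translate (g : P) (k : ℤ) : (A.translate g).ax k = g • A.ax k := rfl

/-- The same line with the opposite orientation. -/
def rev : Line K where
  e k := A.e (1 - k)
  mem k := by
    have h := inv_mem (A.mem (-k))
    rw [par_neg, mul_inv_rev, inv_inv] at h
    have e1 : 1 - k = -k + 1 := by ring
    have e2 : 1 - (k + 1) = -k := by ring
    rwa [e1, e2]
  notMem k h := by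
    apply A.notMem (-k)
    have h := inv_mem h
    rw [mul_inv_rev, inv_inv] at h
    have e1 : 1 - k = -k + 1 := by ring
    have e2 : 1 - (k + 1) = -k := by ring
    rwa [par_neg, ← e1, ← e2]

lemma ax_rev (k : ℤ) : A.rev.ax k = A.ax (-k) := by
  rw [A.ax_eq, par_neg]
  show vert K (par k) (A.e (1 - k)) = _
  congr 2; ring

lemma u_rev (k : ℤ) : A.rev.u k = (A.u (-k))⁻¹ := by
  simp only [u, rev, mul_inv_rev, inv_inv]
  congr 3 <;> ring

/-- The side of the edge between the vertices `k` and `k + 1` that contains the latter. -/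
def side (k : ℤ) (x : Vert K) : Prop := baseSide K (par (k + 1)) ((A.e (k + 1))⁻¹ • x)

lemma alt_forward (k : ℤ) (n : ℕ) : Alt K (par k) ((A.e k)⁻¹ * A.e (k + n + 1)) := by
  induction n generalizing k with
  | zero => simpa using Alt.single (A.mem k) (A.notMem k)
  | succ n ih =>
    have h := ih (k + 1)
    rw [par_succ] at h
    have h2 := Alt.cons (A.mem k) (A.notMem k) h
    convert h2 using 1
    have : k + ((n + 1 : ℕ) : ℤ) + 1 = k + 1 + n + 1 := by push_cast; ring
    rw [this]
    group

lemma side_ax_iff (hK : IsAmalgam K) (k m : ℤ) : A.side k (A.ax m) ↔ k < m := by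
  have hone : ∀ i, ¬ Alt K i 1 := fun i h => hK.notMem h fun j => one_mem _
  rcases lt_or_ge k m with hkm | hkm
  · refine iff_of_true ?_ hkm
    unfold side ax
    rw [smul_vert, baseSide_vert_iff]
    rcases Nat.eq_zero_or_pos (m - (k + 1)).toNat with h | h
    · have : m = k + 1 := by omega
      subst this
      left
      rw [inv_mul_cancel]
      exact ⟨rfl, hone _⟩
    · have h1 := A.alt_forward (k + 1) ((m - (k + 1)).toNat - 1)
      have h2 : k + 1 + (((m - (k + 1)).toNat - 1 : ℕ) : ℤ) + 1 = m := by omega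
      rw [h2] at h1
      by_cases h3 : par m = par (k + 1)
      · exact Or.inl ⟨h3, hK.not_alt h1⟩
      · refine Or.inr ⟨?_, h1⟩
        revert h3; cases par m <;> cases par (k + 1) <;> simp
  · refine iff_of_false ?_ (not_lt.2 hkm)
    rw [A.ax_eq]
    unfold side
    rw [smul_vert, baseSide_vert_iff]
    rcases Nat.eq_zero_or_pos (k - m).toNat with h | h
    · have : m = k := by omega
      subst this
      rw [inv_mul_cancel, par_succ]
      rintro (⟨h1, _⟩ | ⟨_, h1⟩)
      · revert h1; cases par m <;> simp
      · exact hone _ h1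
    · have h1 := A.rev.alt_forward (-k) ((k - m).toNat - 1)
      have h2 : 1 - (-k + (((k - m).toNat - 1 : ℕ) : ℤ) + 1) = m + 1 := by omega
      have h3 : 1 - (-k) = k + 1 := by ring
      simp only [rev] at h1
      rw [h2, h3, par_neg] at h1
      rw [par_succ, Bool.not_not]
      rintro (⟨_, h4⟩ | ⟨_, h4⟩)
      · exact h4 h1
      · exact hK.not_alt h1 h4

lemma crossing (hK : IsAmalgam K) {x y : Vert K} (hxy : (tree K).Adj x y) {k : ℤ}
    (h : ¬ (A.side k x ↔ A.side k y)) :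
    (x = A.ax k ∧ y = A.ax (k + 1)) ∨ (y = A.ax k ∧ x = A.ax (k + 1)) := by
  obtain ⟨i, g, rfl, rfl⟩ := hxy
  unfold side at h
  rw [smul_vert, smul_vert] at h
  have hm := hK.forall_mem_of_crossing h
  have hv : ∀ j, vert K j (A.e (k + 1)) = vert K j g := fun j => vert_eq_iff.2 (hm j)
  rw [A.ax_eq, A.ax_succ, hv, hv]
  by_cases hi : i = par k
  · left; rw [hi]; exact ⟨rfl, rfl⟩
  · right
    have : i = !par k := by revert hi; cases i <;> cases par k <;> simp
    rw [this, Bool.not_not]; exact ⟨rfl, rfl⟩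

lemma exists_pr (hK : IsAmalgam K) (x : Vert K) : ∃ m, ∀ k, A.side k x ↔ k < m := by
  have step : ∀ x y, (tree K).Adj x y → (∃ m, ∀ k, A.side k x ↔ k < m) →
      ∃ m, ∀ k, A.side k y ↔ k < m := by
    rintro x y hxy ⟨m, hm⟩
    by_cases h : ∀ k, A.side k x ↔ A.side k y
    · exact ⟨m, fun k => (h k).symm.trans (hm k)⟩
    · rw [not_forall] at h
      obtain ⟨k, h⟩ := h
      rcases A.crossing hK hxy h with ⟨_, rfl⟩ | ⟨rfl, _⟩
      · exact ⟨k + 1, fun l => A.side_ax_iff hK l _⟩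
      · exact ⟨k, fun l => A.side_ax_iff hK l _⟩
  obtain ⟨w⟩ := hK.connected.preconnected (A.ax 0) x
  have h₀ : ∃ m, ∀ k, A.side k (A.ax 0) ↔ k < m := ⟨0, fun k => A.side_ax_iff hK k 0⟩
  revert h₀
  generalize A.ax 0 = z at w
  intro h₀
  induction w with
  | nil => exact h₀
  | cons hadj _ ih => exact ih (step _ _ hadj h₀)

open Classical in
/-- The projection to a line, as a coordinate. -/
noncomputable def pr (x : Vert K) : ℤ :=
  if h : ∃ m, ∀ k, A.side k x ↔ k < m then h.choose else 0

lemma side_iff (hK : IsAmalgam K) (k : ℤ) (x : Vert K) : A.side k x ↔ k < A.pr x := by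
  have h := A.exists_pr hK x
  rw [pr, dif_pos h]
  exact h.choose_spec k

lemma pr_ax (hK : IsAmalgam K) (m : ℤ) : A.pr (A.ax m) = m := by
  have h := fun k => (A.side_iff hK k (A.ax m)).symm.trans (A.side_ax_iff hK k m)
  have h1 := h m
  have h2 := h (A.pr (A.ax m))
  omega

lemma pr_translate (hK : IsAmalgam K) (g : P) (x : Vert K) :
    (A.translate g).pr (g • x) = A.pr x := by
  have h0 : ∀ k, (A.translate g).side k (g • x) ↔ A.side k x := by
    intro k
    unfold side
    simp [translate, mul_smul]
  have h := fun k => ((A.translate g).side_iff hK k (g • x)).symm.trans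
    ((h0 k).trans (A.side_iff hK k x))
  have h1 := h (A.pr x)
  have h2 := h ((A.translate g).pr (g • x))
  omega

lemma exists_of_pr_ne (hK : IsAmalgam K) {x y : Vert K} (hxy : (tree K).Adj x y) {k : ℤ}
    (h : ¬ (k < A.pr x ↔ k < A.pr y)) :
    (x = A.ax k ∧ y = A.ax (k + 1)) ∨ (y = A.ax k ∧ x = A.ax (k + 1)) :=
  A.crossing hK hxy (by rwa [A.side_iff hK, A.side_iff hK])

lemma pr_adj (hK : IsAmalgam K) {x y : Vert K} (hxy : (tree K).Adj x y) : A.pr x = A.pr y ∨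
    ∃ i, (x = A.ax i ∧ y = A.ax (i + 1)) ∨ (y = A.ax i ∧ x = A.ax (i + 1)) := by
  rcases lt_trichotomy (A.pr x) (A.pr y) with h | h | h
  · exact Or.inr ⟨A.pr x, A.exists_of_pr_ne hK hxy (by omega)⟩
  · exact Or.inl h
  · exact Or.inr ⟨A.pr y, A.exists_of_pr_ne hK hxy (by omega)⟩

variable (B : Line K)

lemma exists_edge_eq (hK : IsAmalgam K) {k l n : ℤ} (h1 : A.pr (B.ax k) ≤ n)
    (h2 : n < A.pr (B.ax l)) : ∃ m, (B.ax m = A.ax n ∧ B.ax (m + 1) = A.ax (n + 1)) ∨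
      (B.ax (m + 1) = A.ax n ∧ B.ax m = A.ax (n + 1)) := by
  by_contra! hcon
  have key : ∀ m, n < A.pr (B.ax m) ↔ n < A.pr (B.ax (m + 1)) := by
    intro m
    by_contra h
    rcases A.exists_of_pr_ne hK (B.ax_adj m) h with h' | h'
    · exact (hcon m).1 h'.1 h'.2
    · exact (hcon m).2 h'.1 h'.2
  have all : ∀ k, n < A.pr (B.ax k) ↔ n < A.pr (B.ax 0) := by
    intro k
    induction k with
    | zero => exact Iff.rfl
    | succ k ih => rw [← key]; exact ih
    | pred k ih => rw [key, sub_add_cancel]; exact ih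
  have := (all k).trans (all l).symm
  omega

/-- Two lines with a long overlap run along each other, up to orientation. -/
lemma exists_overlap (hK : IsAmalgam K) {k l W : ℤ} (hW : 1 ≤ W)
    (h : A.pr (B.ax k) + W ≤ A.pr (B.ax l)) :
    (∃ s, ∀ t, 0 ≤ t → t ≤ W → B.ax (s + t) = A.ax (A.pr (B.ax k) + t)) ∨
      ∃ s, ∀ t, 0 ≤ t → t ≤ W → B.rev.ax (s + t) = A.ax (A.pr (B.ax k) + t) := by
  set p := A.pr (B.ax k) with hp
  have hedge : ∀ t, 0 ≤ t → t < W → ∃ m, (B.ax m = A.ax (p + t) ∧ B.ax (m + 1) = A.ax (p + t + 1)) ∨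
      (B.ax (m + 1) = A.ax (p + t) ∧ B.ax m = A.ax (p + t + 1)) := fun t h0 h1 =>
    A.exists_edge_eq B hK (k := k) (l := l) (by omega) (by omega)
  set f : ℤ → ℤ := fun t => B.pr (A.ax (p + t)) with hf
  have hstep : ∀ t, 0 ≤ t → t < W → (f (t + 1) = f t + 1 ∨ f (t + 1) = f t - 1) ∧
      B.ax (f t) = A.ax (p + t) ∧ B.ax (f (t + 1)) = A.ax (p + (t + 1)) := by
    intro t h0 h1
    obtain ⟨m, ⟨h2, h3⟩ | ⟨h2, h3⟩⟩ := hedge t h0 h1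
    · have e1 : f t = m := by rw [hf]; simp only; rw [← h2, B.pr_ax hK]
      have e2 : f (t + 1) = m + 1 := by
        rw [hf]; simp only; rw [← add_assoc, ← h3, B.pr_ax hK]
      rw [e1, e2, ← add_assoc]
      exact ⟨Or.inl rfl, h2, h3⟩
    · have e1 : f t = m + 1 := by rw [hf]; simp only; rw [← h2, B.pr_ax hK]
      have e2 : f (t + 1) = m := by
        rw [hf]; simp only; rw [← add_assoc, ← h3, B.pr_ax hK]
      rw [e1, e2, ← add_assoc]
      exact ⟨Or.inr (by ring), h2, h3⟩
  have hB : ∀ t, 0 ≤ t → t ≤ W → B.ax (f t) = A.ax (p + t) := by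
    intro t h0 h1
    rcases h1.eq_or_lt with h1 | h1
    · have := (hstep (t - 1) (by omega) (by omega)).2.2
      simpa using this
    · exact (hstep t h0 h1).2.1
  have hinj : ∀ t t', 0 ≤ t → t ≤ W → 0 ≤ t' → t' ≤ W → f t = f t' → t = t' := by
    intro t t' h0 h1 h2 h3 h4
    have h5 := hB t h0 h1
    rw [h4, hB t' h2 h3] at h5
    have := congrArg A.pr h5
    rw [A.pr_ax hK, A.pr_ax hK] at this
    omega
  have hlin : ∀ ε : ℤ, f 1 = f 0 + ε → ∀ n : ℕ, (n : ℤ) + 1 ≤ W →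
      f n = f 0 + ε * n ∧ f (n + 1) = f 0 + ε * (n + 1) := by
    intro ε hε n
    induction n with
    | zero => intro _; simp [hε]
    | succ n ih =>
      intro hn
      push_cast at hn ⊢
      obtain ⟨i1, i2⟩ := ih (by omega)
      refine ⟨i2, ?_⟩
      have h1 := (hstep n (by omega) (by omega)).1
      have h2 := (hstep (n + 1) (by omega) (by omega)).1
      have h3 := hinj (n + 1 + 1) n (by omega) (by omega) (by omega) (by omega)
      have h4 : f (n + 1 + 1) = f (n + 1) + (f (n + 1) - f n) := by omega
      rw [h4, i1, i2]; ring
  have hlin' : ∀ ε : ℤ, f 1 = f 0 + ε → ∀ t, 0 ≤ t → t ≤ W → f t = f 0 + ε * t := by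
    intro ε hε t h0 h1
    rcases h1.eq_or_lt with h1 | h1
    · have := (hlin ε hε (t - 1).toNat (by omega)).2
      have e : (((t - 1).toNat : ℕ) : ℤ) = t - 1 := by omega
      rw [e] at this
      simpa using this
    · have := (hlin ε hε t.toNat (by omega)).1
      have e : ((t.toNat : ℕ) : ℤ) = t := by omega
      rwa [e] at this
  rcases (hstep 0 le_rfl (by omega)).1 with h1 | h1
  · left
    refine ⟨f 0, fun t h0 ht => ?_⟩
    rw [← hB t h0 ht, hlin' 1 (by simpa using h1) t h0 ht, one_mul]
  · right
    refine ⟨-f 0, fun t h0 ht => ?_⟩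
    rw [ax_rev, ← hB t h0 ht, hlin' (-1) (by rw [zero_add] at h1; rw [h1]; ring) t h0 ht]
    congr 1; ring

/-- Along an overlap of two lines whose even letters are constant, the letters of the two lines are
related by fixed elements of the amalgamated subgroup. -/
lemma exists_twist (hM : ∀ m ∈ K false, m ∉ K true → ∀ h h' : P, (∀ j, h ∈ K j) →
      (∀ j, h' ∈ K j) → m * h = h' * m → h = 1)
    {y y' : P} (hy : ∀ t, A.u (2 * t) = y) (hy' : ∀ t, B.u (2 * t) = y') {p s W Λ : ℤ}
    (hΛ : 0 ≤ Λ) (hW : 2 * Λ + 3 ≤ W)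
    (h : ∀ t, 0 ≤ t → t ≤ W → B.ax (s + t) = A.ax (p + t)) :
    ∃ κ κ' : P, ∃ σ t₁ : ℤ, (∀ j, κ ∈ K j) ∧ (∀ j, κ' ∈ K j) ∧ y' = κ⁻¹ * y * κ' ∧
      (∀ t, t₁ ≤ t → t < t₁ + Λ → B.u (2 * (t + σ) + 1) = κ'⁻¹ * A.u (2 * t + 1) * κ) ∧
      A.e (2 * t₁) * κ = B.e (2 * (t₁ + σ)) := by
  obtain ⟨σ, hσ⟩ : ∃ σ, s = p + 2 * σ := by
    have h0 := congrArg Sigma.fst (h 0 le_rfl (by omega))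
    have h1 : par (s + 0) = par (p + 0) := h0
    simp only [par, add_zero, decide_eq_decide] at h1
    exact ⟨(s - p) / 2, by omega⟩
  set η : ℤ → P := fun k => (A.e k)⁻¹ * B.e (k + 2 * σ) with hη
  have hηe : ∀ k, A.e k * η k = B.e (k + 2 * σ) := fun k => by simp [hη]
  have hmem : ∀ k, p + 1 ≤ k → k ≤ p + W → ∀ j, η k ∈ K j := by
    intro k h1 h2
    have e1 := h (k - p - 1) (by omega) (by omega)
    have e2 := h (k - p) (by omega) (by omega)
    have q1 : s + (k - p - 1) = k + 2 * σ - 1 := by omega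
    have q2 : p + (k - p - 1) = k - 1 := by omega
    have q3 : s + (k - p) = k + 2 * σ := by omega
    have q4 : p + (k - p) = k := by omega
    rw [q1, q2, B.ax_eq, A.ax_eq, sub_add_cancel, sub_add_cancel] at e1
    rw [q3, q4] at e2
    unfold ax at e2
    have hpar : par (k + 2 * σ) = par k := by
      have : par (k + 2 * σ) = par k := congrArg Sigma.fst e2
      exact this
    have hpar' : par (k + 2 * σ - 1) = !par k := by
      have := par_succ (k + 2 * σ - 1)
      rw [sub_add_cancel, hpar] at this
      rw [this, Bool.not_not]
    have hpar'' : par (k - 1) = !par k := by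
      have := par_succ (k - 1)
      rw [sub_add_cancel] at this
      rw [this, Bool.not_not]
    rw [hpar', hpar''] at e1
    rw [hpar] at e2
    exact forall_mem_of_mem (i := par k) (vert_eq_iff.1 e2.symm) (vert_eq_iff.1 e1.symm)
  have hu : ∀ k, B.u (k + 2 * σ) = (η k)⁻¹ * A.u k * η (k + 1) := by
    intro k
    have : B.e (k + 2 * σ + 1) = A.e (k + 1) * η (k + 1) := by rw [hηe]; congr 1; ring
    rw [u, this, ← hηe, u]; group
  obtain ⟨t₁, ht₁, ht₁'⟩ : ∃ t₁, p + 1 ≤ 2 * t₁ ∧ 2 * t₁ ≤ p + 2 := ⟨(p + 2) / 2, by omega, by omega⟩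
  have hyη : ∀ t, y' = (η (2 * t))⁻¹ * y * η (2 * t + 1) := by
    intro t
    rw [← hy t, ← hu, ← hy' (t + σ)]
    congr 1; ring
  have hyK : y ∈ K false ∧ y ∉ K true := by
    have h1 := A.mem 0
    have h2 := A.notMem 0
    rw [← hy 0]
    exact ⟨h1, h2⟩
  have hconst : ∀ n : ℕ, (n : ℤ) ≤ Λ → η (2 * (t₁ + n)) = η (2 * t₁) ∧
      η (2 * (t₁ + n) + 1) = η (2 * t₁ + 1) := by
    intro n hn
    have h1 : (η (2 * (t₁ + n)))⁻¹ * y * η (2 * (t₁ + n) + 1) =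
      (η (2 * t₁))⁻¹ * y * η (2 * t₁ + 1) := (hyη _).symm.trans (hyη _)
    have m1 := hmem (2 * (t₁ + n)) (by omega) (by omega)
    have m2 := hmem (2 * (t₁ + n) + 1) (by omega) (by omega)
    have m3 := hmem (2 * t₁) (by omega) (by omega)
    have m4 := hmem (2 * t₁ + 1) (by omega) (by omega)
    have h2 : y * (η (2 * (t₁ + n) + 1) * (η (2 * t₁ + 1))⁻¹) =
        (η (2 * (t₁ + n)) * (η (2 * t₁))⁻¹) * y := by
      calc y * (η (2 * (t₁ + n) + 1) * (η (2 * t₁ + 1))⁻¹)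
          = η (2 * (t₁ + n)) * ((η (2 * (t₁ + n)))⁻¹ * y * η (2 * (t₁ + n) + 1)) *
            (η (2 * t₁ + 1))⁻¹ := by group
        _ = _ := by rw [h1]; group
    have h3 := hM y hyK.1 hyK.2 _ _ (fun j => mul_mem (m2 j) (inv_mem (m4 j)))
      (fun j => mul_mem (m1 j) (inv_mem (m3 j))) h2
    rw [h3, mul_one] at h2
    refine ⟨?_, mul_inv_eq_one.1 h3⟩
    have h4 : η (2 * (t₁ + n)) * (η (2 * t₁))⁻¹ = 1 := by
      exact (mul_eq_right.1 h2.symm)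
    exact mul_inv_eq_one.1 h4
  refine ⟨η (2 * t₁), η (2 * t₁ + 1), σ, t₁, hmem _ (by omega) (by omega),
    hmem _ (by omega) (by omega), hyη t₁, fun t h1 h2 => ?_, ?_⟩
  · have e1 := (hconst (t - t₁).toNat (by omega)).2
    have e2 := (hconst (t + 1 - t₁).toNat (by omega)).1
    have q1 : t₁ + ((t - t₁).toNat : ℤ) = t := by omega
    have q2 : 2 * (t₁ + ((t + 1 - t₁).toNat : ℤ)) = 2 * t + 1 + 1 := by omega
    rw [q1] at e1
    rw [q2] at e2
    rw [← e1, ← e2, ← hu]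
    congr 1; ring
  · rw [hηe]; congr 1; ring

end Line

end Amalgam

section Pattern

/-- The position of the `k`-th block of the pattern, whose length is `D + k`. -/
def pos (D : ℤ) : ℕ → ℤ
  | 0 => 0
  | k + 1 => pos D k + D + k + 1

/-- The period of the pattern. -/
def period (D : ℤ) : ℤ := pos D 100 + 2

lemma pos_succ (D : ℤ) (k : ℕ) : pos D (k + 1) = pos D k + D + k + 1 := rfl

variable {D : ℤ}

lemma pos_add_le (hD : 100 ≤ D) {k l : ℕ} (h : k < l) : pos D k + D + k + 1 ≤ pos D l := by
  induction l with
  | zero => omega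
  | succ l ih =>
    rw [pos_succ]
    rcases (Nat.lt_succ_iff.1 h).eq_or_lt with rfl | h
    · exact le_rfl
    · have := ih h; omega

lemma pos_mono (hD : 100 ≤ D) {k l : ℕ} (h : k ≤ l) : pos D k ≤ pos D l := by
  rcases h.eq_or_lt with rfl | h
  · exact le_rfl
  · have := pos_add_le hD h; omega

lemma mul_le_pos (D : ℤ) (k : ℕ) : k * D ≤ pos D k := by
  induction k with
  | zero => simp [pos]
  | succ k ih => rw [pos_succ]; push_cast; linarith

lemma pos_nonneg (hD : 100 ≤ D) (k : ℕ) : 0 ≤ pos D k := pos_mono hD (Nat.zero_le k)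

lemma hundred_mul_lt_period (D : ℤ) : 100 * D < period D := by
  have := mul_le_pos D 100
  unfold period
  push_cast at this
  omega

variable {T : Type}

open Classical in
/-- The periodic sequence of letters of a relator. -/
noncomputable def pattern (D : ℤ) (p q z : T) (t : ℤ) : T :=
  if t % period D = period D - 2 then z
  else if t % period D = period D - 1 ∨ ∃ k < 100, t % period D = pos D (k + 1) - 1 then q
  else p

variable {p q z : T}

lemma pattern_add_mul (n t : ℤ) : pattern D p q z (t + n * period D) = pattern D p q z t := by
  unfold pattern
  rw [Int.add_mul_emod_self_right]

lemma pattern_eq_add (n t : ℤ) : pattern D p q z (n * period D + t) = pattern D p q z t := by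
  rw [add_comm, pattern_add_mul]

lemma pattern_mem (t : ℤ) : pattern D p q z t = p ∨ pattern D p q z t = q ∨
    pattern D p q z t = z := by
  unfold pattern
  split_ifs <;> simp

lemma pattern_block (hD : 100 ≤ D) {k : ℕ} (hk : k < 100) {r : ℤ} (h0 : 0 ≤ r) (hr : r < D + k)
    (n : ℤ) : pattern D p q z (n * period D + pos D k + r) = p := by
  have h1 := pos_add_le hD hk
  have h2 := pos_nonneg hD k
  have h3 : period D = pos D 100 + 2 := rfl
  rw [add_assoc, pattern_eq_add]
  have hm : (pos D k + r) % period D = pos D k + r := Int.emod_eq_of_lt (by omega) (by omega)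
  unfold pattern
  rw [hm, if_neg (by omega), if_neg]
  rintro (h | ⟨l, hl, h⟩)
  · omega
  · rw [pos_succ] at h
    rcases lt_trichotomy k l with h4 | h4 | h4
    · have := pos_add_le hD h4; omega
    · subst h4; omega
    · have := pos_add_le hD h4; omega

lemma pattern_end (hD : 100 ≤ D) {k : ℕ} (hk : k < 100) (n : ℤ) :
    pattern D p q z (n * period D + pos D (k + 1) - 1) = q := by
  have h1 := pos_mono hD (Nat.succ_le_of_lt hk)
  have h2 := pos_nonneg hD k
  have h3 : period D = pos D 100 + 2 := rfl
  rw [add_sub_assoc, pattern_eq_add]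
  have h4 := pos_succ D k
  have h5 : k.succ = k + 1 := rfl
  rw [h5] at h1
  have hm : (pos D (k + 1) - 1) % period D = pos D (k + 1) - 1 :=
    Int.emod_eq_of_lt (by omega) (by omega)
  unfold pattern
  rw [hm, if_neg (by omega), if_pos (Or.inr ⟨k, hk, rfl⟩)]

lemma pattern_sub_one (hD : 100 ≤ D) (n : ℤ) : pattern D p q z (n * period D - 1) = q := by
  have h := hundred_mul_lt_period D
  have e : n * period D - 1 = (n - 1) * period D + (period D - 1) := by ring
  rw [e, pattern_eq_add]
  have hm : (period D - 1) % period D = period D - 1 := Int.emod_eq_of_lt (by omega) (by omega)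
  unfold pattern
  rw [hm, if_neg (by omega), if_pos (Or.inl rfl)]

lemma pattern_sub_two (hD : 100 ≤ D) (n : ℤ) : pattern D p q z (n * period D - 2) = z := by
  have h := hundred_mul_lt_period D
  have e : n * period D - 2 = (n - 1) * period D + (period D - 2) := by ring
  rw [e, pattern_eq_add]
  have hm : (period D - 2) % period D = period D - 2 := Int.emod_eq_of_lt (by omega) (by omega)
  unfold pattern
  rw [hm, if_pos rfl]

/-- The letter before a block is a separator. -/
lemma pattern_before (hD : 100 ≤ D) {k : ℕ} (hk : k < 100) (n : ℤ) :
    pattern D p q z (n * period D + pos D k - 1) = q := by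
  cases k with
  | zero => simpa [pos] using pattern_sub_one hD n
  | succ k => exact pattern_end hD (by omega) n

lemma exists_pos_le {s : ℤ} (h0 : 0 ≤ s) {l : ℕ} (hs : s < pos D l) :
    ∃ k < l, pos D k ≤ s ∧ s < pos D (k + 1) := by
  induction l with
  | zero => simp [pos] at hs; omega
  | succ l ih =>
    by_cases h : s < pos D l
    · obtain ⟨k, hk, h'⟩ := ih h
      exact ⟨k, by omega, h'⟩
    · exact ⟨l, by omega, by omega, hs⟩

lemma exists_position (hD : 100 ≤ D) (t : ℤ) : ∃ n : ℤ,
    (∃ k : ℕ, k < 100 ∧ ∃ r, 0 ≤ r ∧ r < D + k ∧ t = n * period D + pos D k + r) ∨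
    (∃ k < 100, t = n * period D + pos D (k + 1) - 1) ∨ t = n * period D - 1 ∨
    t = n * period D - 2 := by
  have hN := hundred_mul_lt_period D
  have h3 : period D = pos D 100 + 2 := rfl
  have h1 := Int.emod_nonneg t (b := period D) (by omega)
  have h2 := Int.emod_lt_of_pos t (b := period D) (by omega)
  have h4 := Int.mul_ediv_add_emod t (period D)
  set s := t % period D
  set n := t / period D
  have h5 : (n + 1) * period D = period D * n + period D := by ring
  have h6 : n * period D = period D * n := by ring
  by_cases h : s < pos D 100
  · obtain ⟨k, hk, h7, h8⟩ := exists_pos_le h1 h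
    refine ⟨n, ?_⟩
    rw [pos_succ] at h8
    by_cases h9 : s = pos D (k + 1) - 1
    · exact Or.inr (Or.inl ⟨k, hk, by omega⟩)
    · rw [pos_succ] at h9
      exact Or.inl ⟨k, hk, s - pos D k, by omega, by omega, by omega⟩
  · exact ⟨n + 1, by omega⟩

/-- The long runs of the pattern are its blocks. -/
lemma exists_block_of_run (hD : 100 ≤ D) (hpq : p ≠ q) {t a : ℤ} (ha : 4 ≤ a)
    (hconst : ∀ r, 0 ≤ r → r < a → pattern D p q z (t + r) = pattern D p q z t)
    (h1 : pattern D p q z (t - 1) ≠ pattern D p q z t)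
    (h2 : pattern D p q z (t + a) ≠ pattern D p q z t) :
    ∃ n : ℤ, ∃ k : ℕ, k < 100 ∧ t = n * period D + pos D k ∧ a = D + k := by
  have main : (∃ s, 0 ≤ s ∧ s < a ∧ ∃ n : ℤ, ∃ k : ℕ, k < 100 ∧ ∃ r, 0 ≤ r ∧ r < D + k ∧
      t + s = n * period D + pos D k + r) := by
    by_contra hcon
    have hcov : ∀ s, 0 ≤ s → s < a → ∃ n : ℤ, (∃ k < 100, t + s = n * period D + pos D (k + 1) - 1) ∨
        t + s = n * period D - 1 ∨ t + s = n * period D - 2 := by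
      intro s h0 hs
      obtain ⟨n, h | h⟩ := exists_position hD (t + s)
      · exact absurd ⟨s, h0, hs, n, h⟩ hcon
      · exact ⟨n, h⟩
    have hA : ∀ s, 0 ≤ s → s < a → ∀ n : ℤ, ∀ k < 100, t + s ≠ n * period D + pos D k := by
      intro s h0 hs n k hk h
      exact hcon ⟨s, h0, hs, n, k, hk, 0, le_rfl, by omega, by omega⟩
    have h1' : ∀ n : ℤ, ∀ s, 0 ≤ s → s + 1 < a → t + s ≠ n * period D - 1 := by
      intro n s h0 hs h
      exact hA (s + 1) (by omega) hs n 0 (by norm_num) (by simp only [pos]; omega)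
    have h2' : ∀ n : ℤ, ∀ s, 0 ≤ s → s + 2 < a → t + s ≠ n * period D - 2 := by
      intro n s h0 hs h
      exact h1' n (s + 1) (by omega) (by omega) (by omega)
    obtain ⟨n, ⟨k, hk, h⟩ | h | h⟩ := hcov 0 le_rfl (by omega)
    · by_cases hk' : k + 1 < 100
      · exact hA 1 (by omega) (by omega) n (k + 1) hk' (by omega)
      · have : k = 99 := by omega
        subst this
        have h3 : period D = pos D 100 + 2 := rfl
        apply h2' (n + 1) 1 (by omega) (by omega)
        have e : (n + 1) * period D = n * period D + period D := by ring
        norm_num at h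
        omega
    · exact h1' n 0 le_rfl (by omega) h
    · exact h2' n 0 le_rfl (by omega) h
  obtain ⟨s, hs0, hsa, n, k, hk, r, hr0, hr, hsr⟩ := main
  have hp : pattern D p q z t = p := by
    rw [← hconst s hs0 hsa, hsr, pattern_block hD hk hr0 hr]
  have hb := pattern_before (p := p) (q := q) (z := z) hD hk n
  have he := pattern_end (p := p) (q := q) (z := z) hD hk n
  refine ⟨n, k, hk, ?_⟩
  have e1 : n * period D + pos D k ≤ t := by
    by_contra h
    have := hconst (n * period D + pos D k - 1 - t) (by omega) (by omega)
    rw [add_sub_cancel, hb, hp] at this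
    exact hpq this.symm
  have e2 : t ≤ n * period D + pos D k := by
    by_contra h
    have h' := pattern_block (p := p) (q := q) (z := z) hD hk
      (r := t - 1 - (n * period D + pos D k)) (by omega) (by omega) n
    rw [add_sub_cancel] at h'
    exact h1 (h'.trans hp.symm)
  have hpos := pos_succ D k
  have e3 : t + a ≤ n * period D + pos D k + D + k := by
    by_contra h
    have := hconst (n * period D + pos D (k + 1) - 1 - t) (by omega) (by omega)
    rw [add_sub_cancel, he, hp] at this
    exact hpq this.symm
  have e4 : n * period D + pos D k + D + k ≤ t + a := by
    by_contra h
    have h' := pattern_block (p := p) (q := q) (z := z) hD hk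
      (r := t + a - (n * period D + pos D k)) (by omega) (by omega) n
    rw [add_sub_cancel] at h'
    exact h2 (h'.trans hp.symm)
  omega

/-- Every long window contains two consecutive blocks. -/
lemma exists_blocks_in_window (hD : 100 ≤ D) (t : ℤ) : ∃ n : ℤ, ∃ k : ℕ, k + 1 < 100 ∧
    t ≤ n * period D + pos D k - 1 ∧ n * period D + pos D (k + 2) - 1 < t + 7 * D := by
  have hN := hundred_mul_lt_period D
  have h3 : period D = pos D 100 + 2 := rfl
  have h1 := Int.emod_nonneg t (b := period D) (by omega)
  have h2 := Int.emod_lt_of_pos t (b := period D) (by omega)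
  have h4 := Int.mul_ediv_add_emod t (period D)
  set s := t % period D
  set n := t / period D
  have h5 : (n + 1) * period D = period D * n + period D := by ring
  have h6 : n * period D = period D * n := by ring
  have h99 := pos_succ D 99
  have h98 := pos_succ D 98
  norm_num at h99 h98
  have p1 := pos_succ D 0
  have p2 := pos_succ D 1
  have p0 : pos D 0 = 0 := rfl
  norm_num at p1 p2
  by_cases h : s < pos D 98
  · obtain ⟨k, hk, h7, h8⟩ := exists_pos_le h1 h
    rcases Nat.lt_or_ge (k + 1) 98 with hk' | hk'
    · have q1 := pos_succ D k
      have q2 := pos_succ D (k + 1)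
      have q3 := pos_succ D (k + 2)
      push_cast at q1 q2 q3
      have e : k + 1 + 2 = k + 2 + 1 := by ring
      refine ⟨n, k + 1, by omega, by omega, ?_⟩
      rw [e, q3]
      have e' : k + 2 = k + 1 + 1 := by ring
      rw [e', q2, q1]
      omega
    · have : k = 97 := by omega
      subst this
      norm_num at h8
      refine ⟨n, 98, by omega, by omega, ?_⟩
      have h97 := pos_succ D 97
      norm_num at h97 ⊢
      omega
  · refine ⟨n + 1, 0, by omega, by omega, ?_⟩
    norm_num
    omega

end Pattern

lemma exists_primitive {P : Type} [Group P] (u : ℤ → P) :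
    ∃ e : ℤ → P, e 0 = 1 ∧ ∀ k, e (k + 1) = e k * u k := by
  let f : ℕ → P := fun n => Nat.rec 1 (fun n x => x * u n) n
  let b : ℕ → P := fun n => Nat.rec 1 (fun n x => x * (u (-(n + 1)))⁻¹) n
  refine ⟨fun k => if 0 ≤ k then f k.toNat else b (-k).toNat, by simp [f], fun k => ?_⟩
  rcases lt_trichotomy k (-1) with h | h | h
  · simp only [show ¬ (0 ≤ k + 1) by omega, show ¬ (0 ≤ k) by omega, if_false]
    have e1 : (-k).toNat = (-(k + 1)).toNat + 1 := by omega
    have e2 : b ((-(k + 1)).toNat + 1) = b (-(k + 1)).toNat *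
      (u (-(((-(k + 1)).toNat : ℤ) + 1)))⁻¹ := rfl
    have e3 : -(((-(k + 1)).toNat : ℤ) + 1) = k := by omega
    rw [e1, e2, e3, inv_mul_cancel_right]
  · subst h
    simp [f, b]
  · simp only [show 0 ≤ k + 1 by omega, show 0 ≤ k by omega, if_true]
    have e1 : (k + 1).toNat = k.toNat + 1 := by omega
    have e2 : f (k.toNat + 1) = f k.toNat * u (k.toNat : ℤ) := rfl
    have e3 : ((k.toNat : ℕ) : ℤ) = k := by omega
    rw [e1, e2, e3]

lemma primitive_unique {P : Type} [Group P] {u e e' : ℤ → P} (h0 : e 0 = e' 0)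
    (h : ∀ k, e (k + 1) = e k * u k) (h' : ∀ k, e' (k + 1) = e' k * u k) (k : ℤ) :
    e k = e' k := by
  induction k with
  | zero => exact h0
  | succ k ih => rw [h, h', ih]
  | pred k ih =>
    have h1 := h (-k - 1)
    have h2 := h' (-k - 1)
    rw [sub_add_cancel] at h1 h2
    rw [h1, h2] at ih
    exact mul_right_cancel ih

section Relator

variable {P : Type} [Group P] (K : Bool → Subgroup P)

/-- The data of a relator that expresses `h` as a positive word in `y`, `x` and `c`. -/
structure Relator where
  y : P
  x : P
  c : P
  h : P
  i : ℕ
  y_mem : y ∈ K false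
  y_notMem : y ∉ K true
  x_mem : x ∈ K true
  x_notMem : x ∉ K false
  c_mem : ∀ j, c ∈ K j
  c_ne : c ≠ 1
  h_mem : ∀ j, h ∈ K j

namespace Relator

variable {K} (R : Relator K)

/-- The length of the first block of the relator. -/
def D : ℤ := 100 * (R.i + 1)

lemma le_D : 100 ≤ R.D := by unfold D; omega

/-- The odd letters of the relator. -/
noncomputable def letter : ℤ → P := pattern R.D R.x (R.c * R.x) (R.x * R.h⁻¹)

lemma x_ne : R.x ≠ R.c * R.x := fun h => R.c_ne (by simpa using h)

lemma letter_mem (t : ℤ) : R.letter t ∈ K true := by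
  rcases pattern_mem (D := R.D) (p := R.x) (q := R.c * R.x) (z := R.x * R.h⁻¹) t with h | h | h <;>
    rw [letter, h]
  · exact R.x_mem
  · exact mul_mem (R.c_mem _) R.x_mem
  · exact mul_mem R.x_mem (inv_mem (R.h_mem _))

lemma letter_notMem (t : ℤ) : R.letter t ∉ K false := by
  rcases pattern_mem (D := R.D) (p := R.x) (q := R.c * R.x) (z := R.x * R.h⁻¹) t with h | h | h <;>
    rw [letter, h]
  · exact R.x_notMem
  · rw [Subgroup.mul_mem_cancel_left _ (R.c_mem _)]
    exact R.x_notMem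
  · rw [Subgroup.mul_mem_cancel_right _ (inv_mem (R.h_mem _))]
    exact R.x_notMem

/-- The letters of the relator. -/
noncomputable def word (k : ℤ) : P := if par k then R.letter (k / 2) else R.y

lemma word_even (t : ℤ) : R.word (2 * t) = R.y := by simp [word, par_two_mul]

lemma word_odd (t : ℤ) : R.word (2 * t + 1) = R.letter t := by
  have : (2 * t + 1) / 2 = t := by omega
  simp [word, par_two_mul_add_one, this]

lemma exists_two_mul (k : ℤ) : ∃ t, k = 2 * t ∨ k = 2 * t + 1 := ⟨k / 2, by omega⟩

/-- The bi-infinite power of the relator. -/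
noncomputable def line : Line K where
  e := (exists_primitive R.word).choose
  mem k := by
    rw [(exists_primitive R.word).choose_spec.2, inv_mul_cancel_left]
    obtain ⟨t, rfl | rfl⟩ := exists_two_mul k
    · rw [word_even, par_two_mul]; exact R.y_mem
    · rw [word_odd, par_two_mul_add_one]; exact R.letter_mem t
  notMem k := by
    rw [(exists_primitive R.word).choose_spec.2, inv_mul_cancel_left]
    obtain ⟨t, rfl | rfl⟩ := exists_two_mul k
    · rw [word_even, par_two_mul]; exact R.y_notMem
    · rw [word_odd, par_two_mul_add_one]; exact R.letter_notMem t

lemma e_zero : R.line.e 0 = 1 := (exists_primitive R.word).choose_spec.1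

lemma e_succ (k : ℤ) : R.line.e (k + 1) = R.line.e k * R.word k :=
  (exists_primitive R.word).choose_spec.2 k

lemma line_u (k : ℤ) : R.line.u k = R.word k := by
  rw [Line.u, e_succ, inv_mul_cancel_left]

/-- The number of odd letters of the relator. -/
noncomputable def N : ℤ := period R.D

lemma lt_N : 100 * R.D < R.N := hundred_mul_lt_period _

/-- The relator. -/
noncomputable def r : P := R.line.e (2 * R.N)

lemma word_add (k : ℤ) : R.word (k + 2 * R.N) = R.word k := by
  obtain ⟨t, rfl | rfl⟩ := exists_two_mul k
  · rw [← mul_add, word_even, word_even]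
  · have : 2 * t + 1 + 2 * R.N = 2 * (t + 1 * R.N) + 1 := by ring
    rw [this, word_odd, word_odd, letter, N, pattern_add_mul]

lemma e_add (k : ℤ) : R.line.e (k + 2 * R.N) = R.r * R.line.e k := by
  refine primitive_unique (u := R.word) (e := fun k => R.line.e (k + 2 * R.N))
    (e' := fun k => R.r * R.line.e k) ?_ ?_ ?_ k
  · simp [e_zero, r]
  · intro k
    have : k + 1 + 2 * R.N = k + 2 * R.N + 1 := by ring
    simp only [this, e_succ, word_add]
  · intro k
    simp only [e_succ, mul_assoc]

lemma e_add_mul (n k : ℤ) : R.line.e (k + 2 * (n * R.N)) = R.r ^ n * R.line.e k := by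
  induction n with
  | zero => simp
  | succ n ih =>
    have : k + 2 * (((n : ℤ) + 1) * R.N) = k + 2 * (n * R.N) + 2 * R.N := by ring
    rw [this, e_add, ih, add_comm (n : ℤ) 1, zpow_add, zpow_one, mul_assoc]
  | pred n ih =>
    have : k + 2 * (-(n : ℤ) * R.N) = k + 2 * ((-n - 1) * R.N) + 2 * R.N := by ring
    rw [this, e_add] at ih
    rw [← mul_right_inj R.r, ih, sub_eq_add_neg, add_comm _ (-1 : ℤ), zpow_add]
    simp [mul_assoc]

lemma exists_list_e (n : ℕ) (hn : (n : ℤ) ≤ R.N - 2) : ∃ l : List P,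
    (∀ a ∈ l, a = R.y ∨ a = R.x ∨ a = R.c) ∧ l.length ≤ 3 * n ∧ R.line.e (2 * n) = l.prod := by
  induction n with
  | zero => exact ⟨[], by simp, by simp, by simp [e_zero]⟩
  | succ n ih =>
    obtain ⟨l, h1, h2, h3⟩ := ih (by omega)
    have e1 : 2 * ((n + 1 : ℕ) : ℤ) = 2 * n + 1 + 1 := by push_cast; ring
    rw [e1, e_succ, e_succ, word_even, word_odd, h3]
    have h4 : R.letter n = R.x ∨ R.letter n = R.c * R.x := by
      have : (n : ℤ) % period R.D = n := Int.emod_eq_of_lt (by omega) (by unfold N at hn; omega)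
      unfold letter pattern
      rw [this, if_neg (by unfold N at hn; omega)]
      split_ifs <;> simp
    rcases h4 with h4 | h4
    · refine ⟨l ++ [R.y, R.x], ?_, ?_, ?_⟩
      · intro a ha; simp at ha; rcases ha with ha | ha | ha
        · exact h1 a ha
        · exact Or.inl ha
        · exact Or.inr (Or.inl ha)
      · simp; omega
      · simp [h4, mul_assoc]
    · refine ⟨l ++ [R.y, R.c, R.x], ?_, ?_, ?_⟩
      · intro a ha; simp at ha; rcases ha with ha | ha | ha | ha
        · exact h1 a ha
        · exact Or.inl ha
        · exact Or.inr (Or.inr ha)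
        · exact Or.inr (Or.inl ha)
      · simp; omega
      · simp [h4, mul_assoc]

/-- The relator says that `h` is a positive word in `y`, `x` and `c`. -/
lemma exists_list : ∃ (l : List P) (s : P), (∀ a ∈ l, a = R.y ∨ a = R.x ∨ a = R.c) ∧
    1 ≤ l.length ∧ l.length ≤ 3 * R.N.toNat ∧ l.prod = R.h * (s⁻¹ * R.r * s) := by
  have hN := R.lt_N
  have hD := R.le_D
  obtain ⟨l, h1, h2, h3⟩ := R.exists_list_e (R.N - 2).toNat (by omega)
  have e0 : (((R.N - 2).toNat : ℕ) : ℤ) = R.N - 2 := by omega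
  rw [e0] at h3
  have l2 := pattern_sub_two (p := R.x) (q := R.c * R.x) (z := R.x * R.h⁻¹) hD 1
  have l1 := pattern_sub_one (p := R.x) (q := R.c * R.x) (z := R.x * R.h⁻¹) hD 1
  rw [one_mul] at l1 l2
  have hr : R.r = R.line.e (2 * (R.N - 2)) * R.y * (R.x * R.h⁻¹) * R.y * (R.c * R.x) := by
    have q1 : 2 * R.N = 2 * (R.N - 1) + 1 + 1 := by ring
    have q2 : 2 * (R.N - 1) = 2 * (R.N - 2) + 1 + 1 := by ring
    rw [r, q1, e_succ, e_succ, word_even, word_odd, q2, e_succ, e_succ, word_even, word_odd]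
    unfold letter N
    rw [l1, l2]
  refine ⟨[R.y, R.c, R.x] ++ l ++ [R.y, R.x], R.line.e (2 * (R.N - 2)) * R.y * R.x, ?_, ?_, ?_, ?_⟩
  · intro a ha
    simp at ha
    rcases ha with rfl | rfl | rfl | ha | rfl | rfl
    · simp
    · simp
    · simp
    · exact h1 a ha
    · simp
    · simp
  · simp
  · simp; omega
  · rw [hr, h3]
    simp only [List.prod_append, List.prod_cons, List.prod_nil]
    group

/-- A block of the relator and the two letters around it. -/
lemma letter_block {n : ℤ} {k : ℕ} (hk : k < 100) {t : ℤ} (h0 : n * R.N + pos R.D k ≤ t)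
    (h1 : t < n * R.N + pos R.D k + R.D + k) : R.letter t = R.x := by
  have := pattern_block (p := R.x) (q := R.c * R.x) (z := R.x * R.h⁻¹) R.le_D hk
    (r := t - (n * R.N + pos R.D k)) (by omega) (by omega) n
  unfold N at this
  rwa [add_sub_cancel] at this

lemma letter_before {n : ℤ} {k : ℕ} (hk : k < 100) :
    R.letter (n * R.N + pos R.D k - 1) = R.c * R.x := pattern_before R.le_D hk n

lemma letter_after {n : ℤ} {k : ℕ} (hk : k < 100) :
    R.letter (n * R.N + pos R.D k + R.D + k) = R.c * R.x := by
  have := pattern_end (p := R.x) (q := R.c * R.x) (z := R.x * R.h⁻¹) R.le_D hk n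
  rw [pos_succ] at this
  convert this using 1
  unfold letter N
  congr 1; ring

/-- A bijection of letters takes blocks to blocks, possibly with the opposite orientation. -/
lemma eq_of_block (R' : Relator K) {n : ℤ} {k : ℕ} (hk : k < 100) {f : P → P}
    (hf : Function.Injective f) {s : ℤ}
    (h : ∀ t, n * R.N + pos R.D k - 1 ≤ t → t ≤ n * R.N + pos R.D k + R.D + k →
      R'.letter (t + s) = f (R.letter t)) :
    R'.i = R.i ∧ ∃ n' : ℤ, n * R.N + pos R.D k + s = n' * R'.N + pos R'.D k := by
  have hD := R.le_D
  set b := n * R.N + pos R.D k with hb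
  have h1 : ∀ t, b ≤ t → t < b + R.D + k → R'.letter (t + s) = f R.x := fun t h0 h1 => by
    rw [h t (by omega) (by omega), R.letter_block hk h0 h1]
  have hrun : ∀ r, 0 ≤ r → r < R.D + k → R'.letter (b + s + r) = R'.letter (b + s) := by
    intro r h4 h5
    have e1 := h1 (b + r) (by omega) (by omega)
    have e2 := h1 b (by omega) (by omega)
    rw [add_right_comm] at e1
    exact e1.trans e2.symm
  have hleft : R'.letter (b + s - 1) ≠ R'.letter (b + s) := by
    have e1 := h (b - 1) (by omega) (by omega)
    have e2 := h1 b (by omega) (by omega)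
    rw [hb, R.letter_before hk, ← hb, sub_add_eq_add_sub] at e1
    intro e3
    exact R.x_ne (hf (e2.symm.trans (e3.symm.trans e1)))
  have hright : R'.letter (b + s + (R.D + k)) ≠ R'.letter (b + s) := by
    have e1 := h (b + R.D + k) (by omega) (by omega)
    have e2 := h1 b (by omega) (by omega)
    rw [R.letter_after hk] at e1
    intro e3
    have e4 : b + R.D + k + s = b + s + (R.D + k) := by ring
    rw [e4] at e1
    exact R.x_ne (hf (e2.symm.trans (e3.symm.trans e1)))
  obtain ⟨n', k', hk', h2, h3⟩ := exists_block_of_run (p := R'.x) (q := R'.c * R'.x)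
    (z := R'.x * R'.h⁻¹) R'.le_D R'.x_ne (t := b + s) (a := R.D + k) (by omega) hrun hleft hright
  have hi : R'.i = R.i := by unfold D at h3; omega
  have hDD : R'.D = R.D := by unfold D; rw [hi]
  have hkk : k' = k := by omega
  subst hkk
  exact ⟨hi, n', h2⟩

lemma eq_of_block_rev (R' : Relator K) {n : ℤ} {k : ℕ} (hk : k < 100) {f : P → P}
    (hf : Function.Injective f) {s : ℤ}
    (h : ∀ t, n * R.N + pos R.D k - 1 ≤ t → t ≤ n * R.N + pos R.D k + R.D + k →
      R'.letter (s - t) = f (R.letter t)) :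
    R'.i = R.i ∧ ∃ n' : ℤ, s - (n * R.N + pos R.D k + R.D + k - 1) = n' * R'.N + pos R'.D k := by
  have hD := R.le_D
  set b := n * R.N + pos R.D k with hb
  have h1 : ∀ t, b ≤ t → t < b + R.D + k → R'.letter (s - t) = f R.x := fun t h0 h1 => by
    rw [h t (by omega) (by omega), R.letter_block hk h0 h1]
  have hrun : ∀ r, 0 ≤ r → r < R.D + k → R'.letter (s - (b + R.D + k - 1) + r) = R'.letter (s - (b + R.D + k - 1)) := by
    intro r h4 h5
    have e1 := h1 (b + R.D + k - 1 - r) (by omega) (by omega)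
    have e2 := h1 (b + R.D + k - 1) (by omega) (by omega)
    have e4 : s - (b + R.D + k - 1 - r) = s - (b + R.D + k - 1) + r := by ring
    rw [e4] at e1
    exact e1.trans e2.symm
  have hleft : R'.letter (s - (b + R.D + k - 1) - 1) ≠ R'.letter (s - (b + R.D + k - 1)) := by
    have e1 := h (b + R.D + k) (by omega) (by omega)
    have e2 := h1 (b + R.D + k - 1) (by omega) (by omega)
    rw [R.letter_after hk] at e1
    intro e3
    have e4 : s - (b + R.D + k) = s - (b + R.D + k - 1) - 1 := by ring
    rw [e4] at e1
    exact R.x_ne (hf (e2.symm.trans (e3.symm.trans e1)))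
  have hright : R'.letter (s - (b + R.D + k - 1) + (R.D + k)) ≠ R'.letter (s - (b + R.D + k - 1)) := by
    have e1 := h (b - 1) (by omega) (by omega)
    have e2 := h1 (b + R.D + k - 1) (by omega) (by omega)
    rw [hb, R.letter_before hk, ← hb] at e1
    intro e3
    have e4 : s - (b - 1) = s - (b + R.D + k - 1) + (R.D + k) := by ring
    rw [e4] at e1
    exact R.x_ne (hf (e2.symm.trans (e3.symm.trans e1)))
  obtain ⟨n', k', hk', h2, h3⟩ := exists_block_of_run (p := R'.x) (q := R'.c * R'.x)
    (z := R'.x * R'.h⁻¹) R'.le_D R'.x_ne (t := s - (b + R.D + k - 1)) (a := R.D + k)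
    (by omega) hrun hleft hright
  have hi : R'.i = R.i := by unfold D at h3; omega
  have hDD : R'.D = R.D := by unfold D; rw [hi]
  have hkk : k' = k := by omega
  subst hkk
  exact ⟨hi, n', h2⟩

end Relator

end Relator

section RelatorFamily

variable {P : Type} [Group P] {K : Bool → Subgroup P}

lemma Line.u_translate (A : Line K) (g : P) (k : ℤ) : (A.translate g).u k = A.u k := by
  simp [Line.u, Line.translate, mul_assoc]

/-- Different axes of relators have small overlaps. -/
lemma Relator.eq_of_overlap (hK : IsAmalgam K)
    (hM : ∀ m ∈ K false, m ∉ K true → ∀ h h' : P, (∀ j, h ∈ K j) →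
      (∀ j, h' ∈ K j) → m * h = h' * m → h = 1)
    (R R' : Relator K) (hRR : R.i = R'.i → R.y = R'.y) (g g' : P) {k l : ℤ}
    (h : (R.line.translate g).pr ((R'.line.translate g').ax k) + 15 * R.D ≤
      (R.line.translate g).pr ((R'.line.translate g').ax l)) :
    R.y = R'.y ∧ R.x = R'.x ∧ R.c = R'.c ∧ (R = R' → g⁻¹ * g' ∈ Subgroup.zpowers R.r) := by
  have hD := R.le_D
  rcases (R.line.translate g).exists_overlap (R'.line.translate g') hK (by omega) h with
    ⟨s, hs⟩ | ⟨s, hs⟩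
  · obtain ⟨κ, κ', σ, t₁, hκ, hκ', hy, hu, he⟩ := (R.line.translate g).exists_twist
      (R'.line.translate g') hM (y := R.y) (y' := R'.y) (Λ := 7 * R.D)
      (fun t => by rw [Line.u_translate, line_u, word_even])
      (fun t => by rw [Line.u_translate, line_u, word_even]) (by omega) (by omega) hs
    simp only [Line.u_translate, line_u, word_odd] at hu
    obtain ⟨n, k, hk, h1, h2⟩ := exists_blocks_in_window hD t₁
    have p1 := pos_succ R.D k
    have p2 := pos_succ R.D (k + 1)
    push_cast at p2
    have ek : k + 1 + 1 = k + 2 := rfl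
    rw [ek] at p2
    obtain ⟨hi, n', hn'⟩ := R.eq_of_block R' (n := n) (k := k) (by omega)
      (f := fun w => κ'⁻¹ * w * κ) (fun a b hab => by simpa using hab) (s := σ)
      (fun t h3 h4 => hu t (by unfold N at h3; omega) (by unfold N at h4; omega))
    have hDD : R'.D = R.D := by unfold D; rw [hi]
    have hNN : R'.N = R.N := by unfold N; rw [hDD]
    have hyy := hRR hi.symm
    rw [← hyy] at hy
    have hc : R.y * κ' = κ * R.y := by
      nth_rw 2 [hy]
      group
    have hκ1 : κ' = 1 := hM R.y R.y_mem R.y_notMem κ' κ hκ' hκ hc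
    have hκ2 : κ = 1 := by
      rw [hκ1, mul_one] at hc
      exact mul_eq_right.1 hc.symm
    subst hκ1 hκ2
    simp only [inv_one, one_mul, mul_one] at hu
    have hσ : σ = (n' - n) * R'.N := by
      rw [hDD] at hn'
      rw [sub_mul, hNN]
      rw [hNN] at hn'
      omega
    have hl : ∀ t, t₁ ≤ t → t < t₁ + 7 * R.D → R'.letter t = R.letter t := by
      intro t h3 h4
      rw [← hu t h3 h4, hσ, letter, N, pattern_add_mul]
    have hpd : R.N = period R.D := rfl
    have hx : R'.x = R.x := by
      have := hl (n * R.N + pos R.D k) (by rw [hpd]; omega) (by rw [hpd]; omega)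
      rw [R.letter_block (n := n) (k := k) (by omega) (by omega) (by omega),
        R'.letter_block (n := n) (k := k) (by omega) (by rw [hDD, hNN])
          (by rw [hDD, hNN]; omega)] at this
      exact this
    have hcc : R'.c = R.c := by
      have := hl (n * R.N + pos R.D k - 1) (by rw [hpd]; omega) (by rw [hpd]; omega)
      rw [R.letter_before (by omega)] at this
      have h3 := R'.letter_before (n := n) (k := k) (by omega)
      rw [hDD, hNN] at h3
      rw [h3, hx] at this
      exact mul_right_cancel this
    refine ⟨hyy, hx.symm, hcc.symm, fun hr => ?_⟩
    subst hr
    have he' : g * R.line.e (2 * t₁) = g' * R.line.e (2 * (t₁ + σ)) := by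
      simpa [Line.translate] using he
    rw [mul_add, hσ, e_add_mul] at he'
    have : g⁻¹ * g' = (R.r ^ (n' - n))⁻¹ := by
      rw [← mul_assoc, mul_left_inj] at he'
      rw [he']; group
    rw [this]
    exact inv_mem (Subgroup.zpow_mem_zpowers _ _)
  · exfalso
    obtain ⟨κ, κ', σ, t₁, hκ, hκ', hy, hu, he⟩ := (R.line.translate g).exists_twist
      (R'.line.translate g').rev hM (y := R.y) (y' := R'.y⁻¹) (Λ := 7 * R.D)
      (fun t => by rw [Line.u_translate, line_u, word_even])
      (fun t => by rw [Line.u_rev, Line.u_translate, ← mul_neg, line_u, word_even]) (by omega)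
      (by omega) hs
    have hu' : ∀ t, t₁ ≤ t → t < t₁ + 7 * R.D →
        R'.letter (-σ - 1 - t) = (κ'⁻¹ * R.letter t * κ)⁻¹ := by
      intro t h1 h2
      have := hu t h1 h2
      rw [Line.u_rev, Line.u_translate, Line.u_translate, line_u, line_u, word_odd] at this
      have e1 : -(2 * (t + σ) + 1) = 2 * (-σ - 1 - t) + 1 := by ring
      rw [e1, word_odd] at this
      rw [← this, inv_inv]
    obtain ⟨n, k, hk, h1, h2⟩ := exists_blocks_in_window hD t₁
    have p1 := pos_succ R.D k
    have p2 := pos_succ R.D (k + 1)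
    push_cast at p2
    have ek : k + 1 + 1 = k + 2 := rfl
    rw [ek] at p2
    have hf : Function.Injective fun w : P => (κ'⁻¹ * w * κ)⁻¹ := fun a b hab => by simpa using hab
    obtain ⟨hi, n', hn'⟩ := R.eq_of_block_rev R' (n := n) (k := k) (by omega) hf (s := -σ - 1)
      (fun t h3 h4 => hu' t (by unfold N at h3; omega) (by unfold N at h4; omega))
    obtain ⟨-, n'', hn''⟩ := R.eq_of_block_rev R' (n := n) (k := k + 1) (by omega) hf (s := -σ - 1)
      (fun t h3 h4 => hu' t (by unfold N at h3; omega) (by unfold N at h4; push_cast at h4; omega))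
    have hDD : R'.D = R.D := by unfold D; rw [hi]
    have hNN : R'.N = R.N := by unfold N; rw [hDD]
    rw [hDD, hNN] at hn' hn''
    push_cast at hn''
    have hN := R.lt_N
    have e : (n' - n'') * R.N = 2 * (R.D + k) + 3 := by rw [sub_mul]; omega
    have hpos : 0 < n' - n'' := by
      by_contra hcon
      have : (n' - n'') * R.N ≤ 0 := mul_nonpos_of_nonpos_of_nonneg (by omega) (by omega)
      omega
    have : 1 * R.N ≤ (n' - n'') * R.N := mul_le_mul_of_nonneg_right (by omega) (by omega)
    omega

/-- The index of an axis: a relator and a translation. -/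
@[ext]
structure AxisIndex (P J : Type) where
  g : P
  j : J

instance (J : Type) : MulAction P (AxisIndex P J) where
  smul g A := ⟨g * A.g, A.j⟩
  one_smul A := by ext <;> simp [HSMul.hSMul]
  mul_smul g h A := by ext <;> simp [HSMul.hSMul, mul_assoc]

lemma AxisIndex.smul_g {J : Type} (g : P) (A : AxisIndex P J) : (g • A).g = g * A.g := rfl

lemma AxisIndex.smul_j {J : Type} (g : P) (A : AxisIndex P J) : (g • A).j = A.j := rfl

lemma Relator.ax_add_mul (R : Relator K) (n k : ℤ) :
    R.line.ax (k + n * (2 * R.N)) = R.r ^ n • R.line.ax k := by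
  have e : k + n * (2 * R.N) = k + 2 * (n * R.N) := by ring
  have hp : par (k + 2 * (n * R.N)) = par k := by
    unfold par; congr 2; omega
  unfold Line.ax
  rw [e, e_add_mul, hp, smul_vert]

lemma Relator.pr_smul_r (R : Relator K) (hK : IsAmalgam K) (x : Vert K) :
    R.line.pr (R.r • x) = R.line.pr x + 2 * R.N := by
  have h0 : ∀ k, R.line.side (k + 2 * R.N) (R.r • x) ↔ R.line.side k x := by
    intro k
    have e : k + 2 * R.N + 1 = k + 1 + 2 * R.N := by ring
    have hp : par (k + 1 + 2 * R.N) = par (k + 1) := by unfold par; congr 2; omega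
    unfold Line.side
    rw [e, e_add, hp, smul_smul]
    simp
  have h := fun k => (R.line.side_iff hK (k + 2 * R.N) (R.r • x)).symm.trans
    ((h0 k).trans (R.line.side_iff hK k x))
  have h1 := h (R.line.pr x)
  have h2 := h (R.line.pr (R.r • x) - 2 * R.N)
  omega

/-- The axes of a family of relators. -/
noncomputable def axisSystem {J : Type} (hK : IsAmalgam K)
    (hM : ∀ m ∈ K false, m ∉ K true → ∀ h h' : P, (∀ j, h ∈ K j) →
      (∀ j, h' ∈ K j) → m * h = h' * m → h = 1)
    (R : J → Relator K) (hi : ∀ j j', (R j).i = (R j').i → (R j).y = (R j').y)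
    (hinj : ∀ j j', (R j).y = (R j').y → (R j).x = (R j').x → (R j).c = (R j').c → j = j') :
    AxisSystem P (Vert K) (AxisIndex P J) (tree K) where
  ax A := ((R A.j).line.translate A.g).ax
  pr A := ((R A.j).line.translate A.g).pr
  rho A := A.g * (R A.j).r * A.g⁻¹
  tau A := 2 * (R A.j).N
  c A := 15 * (R A.j).D
  eqv A B := A.j = B.j ∧ A.g⁻¹ * B.g ∈ Subgroup.zpowers (R A.j).r
  conn := hK.connected
  adj_smul := tree_adj_smul
  ax_adj A := Line.ax_adj _
  pr_ax A := Line.pr_ax _ hK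
  pr_adj A _ _ h := Line.pr_adj _ hK h
  pr_smul g A x := by
    have e : (R (g • A).j).line.translate (g • A).g = ((R A.j).line.translate A.g).translate g := by
      simp [Line.translate, AxisIndex.smul_g, AxisIndex.smul_j, mul_assoc]
    rw [e, Line.pr_translate _ hK]
  ax_smul g A k := by
    simp only [Line.ax_translate, AxisIndex.smul_g, AxisIndex.smul_j, mul_smul]
  rho_smul g A := by
    simp only [AxisIndex.smul_g, AxisIndex.smul_j]; group
  c_smul g A := rfl
  pr_rho A x := by
    have e : (A.g * (R A.j).r * A.g⁻¹) • x = A.g • ((R A.j).r • (A.g⁻¹ • x)) := by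
      simp only [smul_smul, mul_assoc]
    have e' : x = A.g • A.g⁻¹ • x := by simp
    rw [e, Line.pr_translate _ hK, Relator.pr_smul_r _ hK]
    conv_rhs => rw [e']
    rw [Line.pr_translate _ hK]
  ax_rho A k := by
    have := (R A.j).ax_add_mul 1 k
    rw [one_mul, zpow_one] at this
    simp only [Line.ax_translate, this, smul_smul]
    group
  eqv_equivalence := by
    refine ⟨fun A => ⟨rfl, by simp⟩, ?_, ?_⟩
    · rintro ⟨g, j⟩ ⟨g', j'⟩ ⟨h, h'⟩
      dsimp only at h h'
      subst h
      exact ⟨rfl, by simpa using inv_mem h'⟩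
    · rintro ⟨g, j⟩ ⟨g', j'⟩ ⟨g'', j''⟩ ⟨h, h'⟩ ⟨h1, h2⟩
      dsimp only at h h' h1 h2
      subst h h1
      exact ⟨rfl, by simpa [mul_assoc] using mul_mem h' h2⟩
  eqv_smul g A B h := ⟨h.1, by
    simpa only [AxisIndex.smul_g, AxisIndex.smul_j, mul_inv_rev, mul_assoc,
      inv_mul_cancel_left] using h.2⟩
  rho_eq_of_eqv := by
    rintro ⟨g, j⟩ ⟨g', j'⟩ ⟨h, n, h'⟩
    dsimp only at h h' ⊢
    subst h
    have : g' = g * (R j).r ^ n := by rw [h']; group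
    rw [this]; group
  exists_zpow_eq := by
    rintro g ⟨g', j⟩ ⟨_, n, h⟩
    refine ⟨n, ?_⟩
    simp only [AxisIndex.smul_g] at h
    rw [conj_zpow]
    dsimp only at h ⊢
    rw [h]; group
  exists_ax_eq_of_eqv := by
    rintro ⟨g, j⟩ ⟨g', j'⟩ ⟨h, n, h'⟩ i
    dsimp only at h h' ⊢
    subst h
    refine ⟨i + -n * (2 * (R j).N), ?_⟩
    rw [Line.ax_translate, Line.ax_translate, Relator.ax_add_mul, smul_smul]
    have : g' = g * (R j).r ^ n := by rw [h']; group
    rw [this]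
    simp
  overlap_le {A B} h i j := by
    have key : ∀ i j, ((R A.j).line.translate A.g).pr (((R B.j).line.translate B.g).ax i) +
        15 * (R A.j).D ≤ ((R A.j).line.translate A.g).pr (((R B.j).line.translate B.g).ax j) →
        False := by
      intro i j hij
      obtain ⟨h1, h2, h3, h4⟩ := Relator.eq_of_overlap hK hM (R A.j) (R B.j) (hi _ _) A.g B.g hij
      have h5 := hinj _ _ h1 h2 h3
      exact h ⟨h5, h4 (by rw [h5])⟩
    rw [abs_le]
    constructor
    · by_contra hcon
      exact key i j (by omega)
    · by_contra hcon
      exact key j i (by omega)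
  c_pos A := by have := (R A.j).le_D; omega
  c_lt_tau A := by have := (R A.j).lt_N; have := (R A.j).le_D; omega

end RelatorFamily

section Malnormal

variable {P : Type} [Group P] {K : Bool → Subgroup P}

/-- If the amalgamated subgroup is malnormal in one factor, then the other factor is malnormal in
the amalgamated product. -/
lemma IsAmalgam.eq_one_of_mul_eq (hK : IsAmalgam K)
    (hM : ∀ m ∈ K false, m ∉ K true → ∀ h h' : P, (∀ j, h ∈ K j) →
      (∀ j, h' ∈ K j) → m * h = h' * m → h = 1)
    {g l l' : P} (hg : g ∉ K true) (hl : l ∈ K true) (hl' : l' ∈ K true)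
    (h : g * l = l' * g) : l = 1 := by
  have key : ∀ g, Alt K false g → ∀ l' ∈ K true, g * l = l' * g → l = 1 := by
    intro g hg l' hl' h
    by_cases hl'M : l' ∈ K false
    · have hl'H := forall_mem_of_mem (i := true) hl' hl'M
      cases hg with
      | single h1 h2 =>
        have : l ∈ K false := by
          have e : l = g⁻¹ * l' * g := by rw [mul_assoc, ← h]; group
          rw [e]
          exact mul_mem (mul_mem (inv_mem h1) hl'M) h1
        exact hM g h1 h2 l l' (forall_mem_of_mem (i := true) hl this) hl'H h
      | @cons _ m g'' h1 h2 h3 =>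
        have h4 : m⁻¹ * l' * m * g'' = g'' * l := by
          rw [mul_assoc, mul_assoc, ← h]
          group
        have h5 : m⁻¹ * l' * m ∈ K false := mul_mem (mul_mem (inv_mem h1) hl'M) h1
        by_cases h6 : m⁻¹ * l' * m ∈ K true
        · have h7 := hM m h1 h2 (m⁻¹ * l' * m) l' (forall_mem_of_mem (i := true) h6 h5) hl'H
            (by group)
          rw [h7, one_mul] at h4
          exact mul_eq_left.1 h4.symm
        · have h8 : Alt K false (m⁻¹ * l' * m * g'') := .cons h5 h6 h3
          rw [h4] at h8
          rcases h3.mul_right.2 l hl with h9 | h9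
          · exact absurd h9 (hK.not_alt h8)
          · exact absurd h9 (hK.notMem h8)
    · have h1 : Alt K true (l' * g) := .cons hl' hl'M hg
      rw [← h] at h1
      exact absurd (hg.mul_right.1 l hl) (hK.not_alt h1)
  rcases hK.trichotomy g with h1 | ⟨i, h1⟩
  · exact absurd (h1 true) hg
  · cases i with
    | false => exact key g h1 l' hl' h
    | true =>
      cases h1 with
      | single h1 h2 => exact absurd h1 hg
      | @cons _ x g' h1 h2 h3 =>
        refine key g' h3 (x⁻¹ * l' * x) (mul_mem (mul_mem (inv_mem h1) hl') h1) ?_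
        have : x * (g' * l) = x * (x⁻¹ * l' * x * g') := by
          rw [← mul_assoc, h]; group
        exact mul_left_cancel this

/-- Small cancellation over an amalgamated product. -/
theorem exists_normal_subgroup {J : Type} (hK : IsAmalgam K)
    (hM : ∀ m ∈ K false, m ∉ K true → ∀ h h' : P, (∀ j, h ∈ K j) →
      (∀ j, h' ∈ K j) → m * h = h' * m → h = 1)
    (R : J → Relator K) (hi : ∀ j j', (R j).i = (R j').i → (R j).y = (R j').y)
    (hinj : ∀ j j', (R j).y = (R j').y → (R j).x = (R j').x → (R j).c = (R j').c → j = j') :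
    ∃ N : Subgroup P, N.Normal ∧ (∀ j, (R j).r ∈ N) ∧
      (∀ l ∈ K true, ∀ m ∈ K false, m⁻¹ * l ∈ N → m = l) ∧
      ∀ g : P, (∀ l ∈ K true, g⁻¹ * l ∉ N) → ∀ l ∈ K true, ∀ l' ∈ K true,
        (g * l)⁻¹ * (l' * g) ∈ N → l = 1 := by
  let S := axisSystem hK hM R hi hinj
  have hnormal : (Subgroup.closure (Set.range S.rho)).Normal := by
    constructor
    intro n hn g
    refine Subgroup.closure_induction
      (p := fun n _ => g * n * g⁻¹ ∈ Subgroup.closure (Set.range S.rho)) ?_ ?_ ?_ ?_ hn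
    · rintro _ ⟨A, rfl⟩
      rw [← S.rho_smul]
      exact Subgroup.subset_closure ⟨_, rfl⟩
    · simp
    · intro x y _ _ hx hy
      have : g * (x * y) * g⁻¹ = (g * x * g⁻¹) * (g * y * g⁻¹) := by group
      rw [this]
      exact mul_mem hx hy
    · intro x _ hx
      have : g * x⁻¹ * g⁻¹ = (g * x * g⁻¹)⁻¹ := by group
      rw [this]
      exact inv_mem hx
  refine ⟨Subgroup.closure (Set.range S.rho), hnormal, ?_, ?_, ?_⟩
  · intro j
    refine Subgroup.subset_closure ⟨⟨1, j⟩, ?_⟩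
    simp [S, axisSystem]
  · intro l hl m hm hN
    by_contra hne
    have h1 : m⁻¹ * l ≠ 1 := fun h => hne (inv_mul_eq_one.1 h)
    obtain ⟨A, hA⟩ := S.exists_le_of_mem_closure (vert K true 1) hN h1
    have h2 := S.abs_pr_sub_le_dist A (vert K true 1) ((m⁻¹ * l) • vert K true 1)
    have h3 : (m⁻¹ * l) • vert K true 1 = vert K true m⁻¹ := by
      rw [smul_vert, mul_one]
      exact vert_eq_iff.2 (by simpa using hl)
    have h4 : vert K false 1 = vert K false m⁻¹ := vert_eq_iff.2 (by simpa using hm)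
    have a1 : (tree K).Adj (vert K true 1) (vert K false 1) := tree_adj true 1
    have a2 : (tree K).Adj (vert K false 1) (vert K true m⁻¹) := by
      rw [h4]
      exact tree_adj false m⁻¹
    have h5 : (tree K).dist (vert K true 1) (vert K true m⁻¹) ≤ 2 :=
      SimpleGraph.dist_le (.cons a1 (.cons a2 .nil))
    rw [h3] at hA h2
    have h6 := (R A.j).lt_N
    have h7 := (R A.j).le_D
    have h8 : S.tau A = 2 * (R A.j).N := rfl
    have h9 : S.c A = 15 * (R A.j).D := rfl
    omega
  · intro g hg l hl l' hl' hN
    set v := vert K true 1 with hv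
    set N := Subgroup.closure (Set.range S.rho) with hNdef
    obtain ⟨n₀, hn₀⟩ : ∃ n₀ : N,
        ∀ n : N,
          (tree K).dist v ((n₀ : P) • g • v) ≤ (tree K).dist v ((n : P) • g • v) := by
      have hne : (Set.range fun n : N =>
        (tree K).dist v ((n : P) • g • v)).Nonempty := ⟨_, 1, rfl⟩
      obtain ⟨n₀, h⟩ := Nat.sInf_mem hne
      exact ⟨n₀, fun n => h.le.trans (Nat.sInf_le ⟨n, rfl⟩)⟩
    have hfix : ∀ l ∈ K true, l • v = v := by
      intro l hl
      rw [hv, smul_vert, mul_one]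
      exact vert_eq_iff.2 (by simpa using hl)
    set g₀ : P := n₀ * g with hg₀
    have hgg : g⁻¹ * g₀ ∈ N := by
      have := hnormal.conj_mem n₀ n₀.2 g⁻¹
      rwa [inv_inv, mul_assoc] at this
    have hn : l'⁻¹ * g₀ * l * g₀⁻¹ ∈ N := by
      rw [← QuotientGroup.eq_one_iff] at hN hgg ⊢
      simp only [QuotientGroup.mk_mul, QuotientGroup.mk_inv] at hN hgg ⊢
      rw [inv_mul_eq_one] at hN hgg
      rw [← hgg, mul_assoc _ (g : P ⧸ N), hN]
      group
    have h1 := S.eq_one_of_smul_eq (v := v) (u := g₀ • v) (l := l')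
      (n := l'⁻¹ * g₀ * l * g₀⁻¹) ?_ (hfix l' hl') hn ?_
    · refine hK.eq_one_of_mul_eq hM (g := g₀) (fun h => hg g₀ h hgg) hl hl' ?_
      have : l' * (l'⁻¹ * g₀ * l * g₀⁻¹) * g₀ = l' * 1 * g₀ := by rw [h1]
      rw [mul_one] at this
      rw [← this]; group
    · intro n hn
      have := hn₀ (⟨n, hn⟩ * n₀)
      simpa [hg₀, mul_smul] using this
    · rw [← mul_smul, inv_mul_cancel_right, mul_smul, hfix l hl, mul_smul]

end Malnormal

section Pushout

open Monoid

variable {G : Bool → Type} [∀ i, Group (G i)] {H : Type} [Group H] {φ : ∀ i, H →* G i}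

lemma mem_range_of_iff (hφ : ∀ i, Function.Injective (φ i)) (g : PushoutI φ) :
    (∀ i, g ∈ (PushoutI.of (φ := φ) i).range) ↔ g ∈ (PushoutI.base φ).range := by
  rw [← PushoutI.inf_of_range_eq_base_range hφ (i := true) (j := false) (by simp)]
  simp [Subgroup.mem_inf, and_comm]

lemma of_mem_range_iff (hφ : ∀ i, Function.Injective (φ i)) {i j : Bool} (hij : i ≠ j) (g : G i) :
    PushoutI.of (φ := φ) i g ∈ (PushoutI.of (φ := φ) j).range ↔ g ∈ (φ i).range := by
  constructor
  · intro h
    have h1 : PushoutI.of (φ := φ) i g ∈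
      (PushoutI.of (φ := φ) i).range ⊓ (PushoutI.of (φ := φ) j).range := ⟨⟨g, rfl⟩, h⟩
    rw [PushoutI.inf_of_range_eq_base_range hφ hij] at h1
    obtain ⟨k, hk⟩ := h1
    refine ⟨k, PushoutI.of_injective hφ i ?_⟩
    rw [PushoutI.of_apply_eq_base, hk]
  · rintro ⟨k, rfl⟩
    refine ⟨φ j k, ?_⟩
    rw [PushoutI.of_apply_eq_base, PushoutI.of_apply_eq_base]

lemma exists_normalWord_of_alt (hφ : ∀ i, Function.Injective (φ i))
    (d : PushoutI.NormalWord.Transversal φ) {i : Bool} {g : PushoutI φ}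
    (hg : Alt (fun i => (PushoutI.of (φ := φ) i).range) i g) :
    ∃ w : PushoutI.NormalWord d, w.prod = g ∧ w.fstIdx = some i := by
  induction hg with
  | @single i x h1 h2 =>
    obtain ⟨k, rfl⟩ := h1
    rw [of_mem_range_iff hφ (by simp)] at h2
    refine ⟨PushoutI.NormalWord.cons k .empty (by simp [PushoutI.NormalWord.empty, CoprodI.Word.fstIdx]) h2, by simp, ?_⟩
    simp [PushoutI.NormalWord.cons, CoprodI.Word.fstIdx, CoprodI.Word.cons]
  | @cons i x g h1 h2 h3 ih =>
    obtain ⟨k, rfl⟩ := h1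
    obtain ⟨w, hw, hw'⟩ := ih
    rw [of_mem_range_iff hφ (by simp)] at h2
    refine ⟨PushoutI.NormalWord.cons k w (by rw [hw']; simp) h2, by simp [hw], ?_⟩
    simp [PushoutI.NormalWord.cons, CoprodI.Word.fstIdx, CoprodI.Word.cons]

lemma isAmalgam_pushout (hφ : ∀ i, Function.Injective (φ i)) :
    IsAmalgam fun i => (PushoutI.of (φ := φ) i).range := by
  obtain ⟨d⟩ := PushoutI.NormalWord.transversal_nonempty φ hφ
  refine ⟨?_, ?_, ?_⟩
  · rw [eq_top_iff]
    intro g _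
    induction g using PushoutI.induction_on with
    | of i g => exact Subgroup.subset_closure (Set.mem_iUnion.2 ⟨i, g, rfl⟩)
    | base h =>
      rw [← PushoutI.of_apply_eq_base φ true]
      exact Subgroup.subset_closure (Set.mem_iUnion.2 ⟨true, _, rfl⟩)
    | mul x y hx hy => exact mul_mem (hx trivial) (hy trivial)
  · intro i g hg h
    obtain ⟨w, hw, hw'⟩ := exists_normalWord_of_alt hφ d hg
    obtain ⟨k, hk⟩ := (mem_range_of_iff hφ g).1 h
    have h1 : (PushoutI.NormalWord.prod (d := d) ⟨.empty, k, by simp⟩) = PushoutI.base φ k := by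
      simp [PushoutI.NormalWord.prod]
    have h2 := PushoutI.NormalWord.prod_injective (hw.trans (hk.symm.trans h1.symm))
    rw [h2] at hw'
    simp [CoprodI.Word.fstIdx] at hw'
  · intro i g hg h
    obtain ⟨w, hw, hw'⟩ := exists_normalWord_of_alt hφ d hg
    obtain ⟨w₁, hw₁, hw₁'⟩ := exists_normalWord_of_alt hφ d h
    have := PushoutI.NormalWord.prod_injective (hw.trans hw₁.symm)
    rw [this, hw₁'] at hw'
    simp at hw'

lemma countable_pushout [∀ i, Countable (G i)] : Countable (PushoutI φ) := by
  let f : List (Σ i, G i) → PushoutI φ := fun l => (l.map fun s => PushoutI.of s.1 s.2).prod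
  refine Function.Surjective.countable (f := f) fun x => ?_
  induction x using PushoutI.induction_on with
  | of i g => exact ⟨[⟨i, g⟩], by simp [f]⟩
  | base h => exact ⟨[⟨true, φ true h⟩], by simp [f, PushoutI.of_apply_eq_base]⟩
  | mul x y hx hy =>
    obtain ⟨l, rfl⟩ := hx
    obtain ⟨l', rfl⟩ := hy
    exact ⟨l ++ l', by simp [f]⟩

end Pushout

open Monoid

/-- A bound for the lengths of the words given by the relators of index `i`. -/
noncomputable def wordBound (i : ℕ) : ℕ := 3 * (period (100 * (i + 1))).toNat

lemma exists_pushout_quotient {G : Bool → Type} [∀ i, Group (G i)] {H : Type} [Group H]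
    {φ : ∀ i, H →* G i} (hφ : ∀ i, Function.Injective (φ i))
    (hmal : ∀ m ∉ (φ false).range, ∀ h h', m * φ false h = φ false h' * m → h = 1)
    (idx : G false → ℕ) (hidx : Function.Injective idx) (val : G false → G true → H → H) :
    ∃ (Q : Type) (_ : Group Q) (f : ∀ i, G i →* Q), (∀ i, Function.Injective (f i)) ∧
      (∀ h, f true (φ true h) = f false (φ false h)) ∧
      (∀ l m, f true l = f false m → ∃ h, l = φ true h ∧ m = φ false h) ∧
      (∀ q ∉ (f true).range, ∀ l l', q * f true l = f true l' * q → l = 1) ∧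
      ((∀ i, Countable (G i)) → Countable Q) ∧
      ∀ y ∉ (φ false).range, ∀ x ∉ (φ true).range, ∀ c, c ≠ 1 → ∃ w : List Q,
        (∀ a ∈ w, a = f false y ∨ a = f true x ∨ a = f true (φ true c)) ∧ 1 ≤ w.length ∧
        w.length ≤ wordBound (idx y) ∧ w.prod = f true (φ true (val y x c)) := by
  set K : Bool → Subgroup (PushoutI φ) := fun i => (PushoutI.of (φ := φ) i).range with hKdef
  have hK : IsAmalgam K := isAmalgam_pushout hφ
  have hinjof := PushoutI.of_injective hφ
  have hbase : ∀ g : PushoutI φ, (∀ i, g ∈ K i) ↔ g ∈ (PushoutI.base φ).range := mem_range_of_iff hφ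
  have hM : ∀ m ∈ K false, m ∉ K true → ∀ h h' : PushoutI φ, (∀ j, h ∈ K j) →
      (∀ j, h' ∈ K j) → m * h = h' * m → h = 1 := by
    rintro _ ⟨m, rfl⟩ hm h h' hh hh' heq
    obtain ⟨k, rfl⟩ := (hbase h).1 hh
    obtain ⟨k', rfl⟩ := (hbase h').1 hh'
    rw [hKdef, of_mem_range_iff hφ (by simp)] at hm
    rw [← PushoutI.of_apply_eq_base φ false, ← PushoutI.of_apply_eq_base φ false, ← map_mul,
      ← map_mul] at heq
    rw [hmal m hm k k' (hinjof _ heq), map_one]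
  let J : Type := {j : G false × G true × H //
    j.1 ∉ (φ false).range ∧ j.2.1 ∉ (φ true).range ∧ j.2.2 ≠ 1}
  let R : J → Relator K := fun j =>
    { y := PushoutI.of false j.1.1
      x := PushoutI.of true j.1.2.1
      c := PushoutI.base φ j.1.2.2
      h := PushoutI.base φ (val j.1.1 j.1.2.1 j.1.2.2)
      i := idx j.1.1
      y_mem := ⟨_, rfl⟩
      y_notMem := fun h => j.2.1 ((of_mem_range_iff hφ (by simp) _).1 h)
      x_mem := ⟨_, rfl⟩
      x_notMem := fun h => j.2.2.1 ((of_mem_range_iff hφ (by simp) _).1 h)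
      c_mem := (hbase _).2 ⟨_, rfl⟩
      c_ne := fun h => j.2.2.2 (PushoutI.base_injective hφ (h.trans (map_one _).symm))
      h_mem := (hbase _).2 ⟨_, rfl⟩ }
  obtain ⟨N, hN, hr, hlm, hmalN⟩ := exists_normal_subgroup hK hM R
    (fun j j' h => congrArg (PushoutI.of (φ := φ) false) (hidx h))
    (fun j j' h1 h2 h3 => Subtype.ext (Prod.ext (hinjof _ h1)
      (Prod.ext (hinjof _ h2) (PushoutI.base_injective hφ h3))))
  have hlm' : ∀ l m, ((PushoutI.of (φ := φ) true l : PushoutI φ) : PushoutI φ ⧸ N) =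
      ((PushoutI.of (φ := φ) false m : PushoutI φ) : PushoutI φ ⧸ N) →
      PushoutI.of (φ := φ) false m = PushoutI.of true l := fun l m h =>
    hlm _ ⟨l, rfl⟩ _ ⟨m, rfl⟩ (QuotientGroup.eq.1 h.symm)
  refine ⟨PushoutI φ ⧸ N, inferInstance, fun i => (QuotientGroup.mk' N).comp (PushoutI.of i),
    ?_, ?_, ?_, ?_, ?_, ?_⟩
  · intro i
    rw [injective_iff_map_eq_one]
    intro a ha
    cases i with
    | true =>
      have := hlm' a 1 (by simpa using ha)
      rw [map_one] at this
      exact (hinjof true) (this.symm.trans (map_one _).symm)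
    | false =>
      have := hlm' 1 a (by simpa using ha.symm)
      rw [map_one] at this
      exact (hinjof false) (this.trans (map_one _).symm)
  · intro h
    simp [PushoutI.of_apply_eq_base]
  · intro l m h
    have h1 := hlm' l m h
    have h2 : l ∈ (φ true).range := (of_mem_range_iff hφ (j := false) (by simp) _).1 ⟨m, h1⟩
    obtain ⟨k, rfl⟩ := h2
    rw [PushoutI.of_apply_eq_base, ← PushoutI.of_apply_eq_base φ false] at h1
    exact ⟨k, rfl, hinjof _ h1⟩
  · intro q hq l l' h
    obtain ⟨g, rfl⟩ := QuotientGroup.mk_surjective q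
    have h1 := hmalN g ?_ (PushoutI.of true l) ⟨l, rfl⟩ (PushoutI.of true l') ⟨l', rfl⟩
      (QuotientGroup.eq.1 h)
    · exact hinjof true (h1.trans (map_one _).symm)
    · rintro _ ⟨k, rfl⟩ hk
      exact hq ⟨k, (QuotientGroup.eq.2 hk).symm⟩
  · intro h
    have := countable_pushout (φ := φ)
    exact Function.Surjective.countable (QuotientGroup.mk_surjective (s := N))
  · intro y hy x hx c hc
    let j : J := ⟨⟨y, x, c⟩, hy, hx, hc⟩
    obtain ⟨w, s, h1, h2, h3, h4⟩ := (R j).exists_list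
    refine ⟨w.map (QuotientGroup.mk' N), ?_, by simpa using h2, by rw [List.length_map]; exact h3, ?_⟩
    · intro a ha
      obtain ⟨b, hb, rfl⟩ := List.mem_map.1 ha
      rcases h1 b hb with rfl | rfl | rfl
      · exact Or.inl rfl
      · exact Or.inr (Or.inl rfl)
      · right; right
        simp [R, j, PushoutI.of_apply_eq_base]
    · rw [← map_list_prod, h4, map_mul]
      have h5 : s⁻¹ * (R j).r * s ∈ N := by simpa using hN.conj_mem _ (hr j) s⁻¹
      have h6 : QuotientGroup.mk' N (s⁻¹ * (R j).r * s) = 1 := (QuotientGroup.eq_one_iff _).2 h5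
      rw [h6, mul_one]
      simp [R, j, PushoutI.of_apply_eq_base]

/-- An overgroup of an amalgamated product of `L` and `M` over `H` in which `L` is malnormal, and
in which prescribed elements of `H` are positive words in `y`, `x` and `c`. -/
theorem exists_amalgam_quotient {H L M : Type} [Group H] [Group L] [Group M] (φ : H →* L)
    (ψ : H →* M) (hφ : Function.Injective φ) (hψ : Function.Injective ψ)
    (hmal : ∀ m ∉ ψ.range, ∀ h h', m * ψ h = ψ h' * m → h = 1)
    (idx : M → ℕ) (hidx : Function.Injective idx) (val : M → L → H → H) :
    ∃ (Q : Type) (_ : Group Q) (a : L →* Q) (b : M →* Q), Function.Injective a ∧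
      Function.Injective b ∧ (∀ h, a (φ h) = b (ψ h)) ∧
      (∀ l m, a l = b m → ∃ h, l = φ h ∧ m = ψ h) ∧
      (∀ q ∉ a.range, ∀ l l', q * a l = a l' * q → l = 1) ∧
      (Countable L → Countable M → Countable Q) ∧
      ∀ y ∉ ψ.range, ∀ x ∉ φ.range, ∀ c, c ≠ 1 → ∃ w : List Q,
        (∀ e ∈ w, e = b y ∨ e = a x ∨ e = a (φ c)) ∧ 1 ≤ w.length ∧
        w.length ≤ wordBound (idx y) ∧ w.prod = a (φ (val y x c)) := by
  let G : Bool → Type := fun i => Bool.rec M L i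
  let hG : ∀ i, Group (G i) := fun i =>
    Bool.rec (motive := fun i => Group (G i)) ‹Group M› ‹Group L› i
  let f : ∀ i, @MonoidHom H (G i) _ (hG i).toMulOneClass.toMulOne := fun i =>
    @Bool.rec (fun i => @MonoidHom H (G i) _ (hG i).toMulOneClass.toMulOne) ψ φ i
  obtain ⟨Q, hQ, F, h1, h2, h3, h4, h5, h6⟩ := @exists_pushout_quotient G hG H _ f
    (by rintro (_ | _); exacts [hψ, hφ]) hmal idx hidx val
  refine ⟨Q, hQ, F true, F false, h1 true, h1 false, h2, h3, h4, fun hL hM => h5 ?_, h6⟩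
  rintro (_ | _)
  exacts [hM, hL]

/-- The colimit of an increasing sequence of groups. -/
lemma exists_sequential_colimit (K : ℕ → Type) [∀ n, Group (K n)] (j : ∀ n, K n →* K (n + 1))
    (hj : ∀ n, Function.Injective (j n)) :
    ∃ (Q : Type) (_ : Group Q) (f : ∀ n, K n →* Q), (∀ n, Function.Injective (f n)) ∧
      (∀ n k, f (n + 1) (j n k) = f n k) ∧ ∀ q, ∃ n k, f n k = q := by
  let tr : ∀ m n : ℕ, m ≤ n → (K m →* K n) := fun m n h =>
    Nat.leRec (motive := fun n _ => K m →* K n) (MonoidHom.id _) (fun n _ g => (j n).comp g) h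
  have tr_self : ∀ m, tr m m le_rfl = MonoidHom.id _ := fun m => Nat.leRec_self _ _
  have tr_succ : ∀ m n (h : m ≤ n), tr m (n + 1) (h.trans n.le_succ) = (j n).comp (tr m n h) :=
    fun m n h => Nat.leRec_succ _ _ h
  have tr_tr : ∀ m n p (h : m ≤ n) (h' : n ≤ p) k, tr n p h' (tr m n h k) =
      tr m p (h.trans h') k := by
    intro m n p h h' k
    induction p, h' using Nat.le_induction with
    | base => rw [tr_self]; rfl
    | succ p h' ih =>
      rw [tr_succ n p h', tr_succ m p (h.trans h'), MonoidHom.comp_apply, ih]; rfl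
  have tr_inj : ∀ m n (h : m ≤ n), Function.Injective (tr m n h) := by
    intro m n h
    induction n, h using Nat.le_induction with
    | base => rw [tr_self]; exact fun _ _ h => h
    | succ n h ih => rw [tr_succ m n h]; exact (hj n).comp ih
  have : DirectedSystem K (fun m n h => tr m n h) :=
    ⟨fun m k => by rw [tr_self]; rfl, fun p n m h h' k => tr_tr m n p h h' k⟩
  refine ⟨DirectLimit K tr, inferInstance,
    fun n => MonoidHom.mk' (fun k => ⟦⟨n, k⟩⟧) fun a b => (DirectLimit.mul_def n a b).symm,
    fun n => DirectLimit.mk_injective tr tr_inj n, fun n k => ?_, fun q => ?_⟩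
  · have : j n k = tr n (n + 1) n.le_succ k := by rw [tr_succ n n le_rfl, tr_self]; rfl
    rw [this]
    exact DirectLimit.mk_apply n (n + 1) k n.le_succ
  · obtain ⟨n, k, rfl⟩ := DirectLimit.exists_eq_mk tr q
    exact ⟨n, k, rfl⟩

/-- A countable overgroup of `A` in which `A` is malnormal, with a numbering of its elements. -/
structure Stage {G : Type} [Group G] (A : Subgroup G) (n : ℕ) where
  K : Type
  [group : Group K]
  [countable : Countable K]
  incl : A →* K
  injective : Function.Injective incl
  malnormal : ∀ m ∉ incl.range, ∀ h h', m * incl h = incl h' * m → h = 1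
  idx : K → ℕ
  idx_injective : Function.Injective idx
  idx_le : ∀ k, (idx k).unpair.1 ≤ n

attribute [instance] Stage.group Stage.countable

lemma Stage.exists_succ {G : Type} [Group G] [Countable G] {A B : Subgroup G} (hAB : A ≤ B) {n : ℕ}
    (S : Stage A n) (col : G → G) :
    ∃ (T : Stage B (n + 1)) (j : S.K →* T.K), Function.Injective j ∧
      (∀ g (hA : g ∈ A) (hB : g ∈ B), T.incl ⟨g, hB⟩ = j (S.incl ⟨g, hA⟩)) ∧
      (∀ b k, T.incl b = j k → (b : G) ∈ A) ∧ (∀ k, T.idx (j k) = S.idx k) ∧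
      ∀ y ∉ S.incl.range, ∀ x (hx : x ∈ B), x ∉ A → ∀ c (hc : c ∈ A), c ≠ 1 →
        ∀ hcol : col x ∈ A, ∃ w : List T.K,
          (∀ e ∈ w, e = j y ∨ e = T.incl ⟨x, hx⟩ ∨ e = T.incl ⟨c, hAB hc⟩) ∧ 1 ≤ w.length ∧
          w.length ≤ wordBound (S.idx y) ∧ w.prod = T.incl ⟨col x, hAB hcol⟩ := by
  classical
  obtain ⟨Q, hQ, a, b, ha, hb, hab, hinter, hmal, hcount, hword⟩ :=
    exists_amalgam_quotient (Subgroup.inclusion hAB) S.incl (Subgroup.inclusion_injective hAB)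
      S.injective S.malnormal S.idx S.idx_injective
      (fun _ x _ => if h : col x ∈ A then ⟨col x, h⟩ else 1)
  have : Countable Q := hcount inferInstance inferInstance
  obtain ⟨code, hcode⟩ := exists_injective_nat Q
  let idx : Q → ℕ := fun q => if h : ∃ k, b k = q then S.idx h.choose else Nat.pair (n + 1) (code q)
  have idx_b : ∀ k, idx (b k) = S.idx k := by
    intro k
    have h : ∃ k', b k' = b k := ⟨k, rfl⟩
    simp only [idx, dif_pos h]
    rw [hb h.choose_spec]
  have idx_of : ∀ q, (¬ ∃ k, b k = q) → idx q = Nat.pair (n + 1) (code q) := fun q h => dif_neg h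
  refine ⟨{ K := Q, incl := a, injective := ha, malnormal := hmal, idx := idx, idx_injective := ?_,
            idx_le := ?_ }, b, hb, ?_, ?_, idx_b, ?_⟩
  · intro q q' h
    by_cases hq : ∃ k, b k = q
    · obtain ⟨k, rfl⟩ := hq
      by_cases hq' : ∃ k, b k = q'
      · obtain ⟨k', rfl⟩ := hq'
        rw [idx_b, idx_b] at h
        rw [S.idx_injective h]
      · rw [idx_b, idx_of _ hq'] at h
        have := S.idx_le k
        rw [h, Nat.unpair_pair] at this
        exact absurd this (by simp)
    · by_cases hq' : ∃ k, b k = q'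
      · obtain ⟨k', rfl⟩ := hq'
        rw [idx_b, idx_of _ hq] at h
        have := S.idx_le k'
        rw [← h, Nat.unpair_pair] at this
        exact absurd this (by simp)
      · rw [idx_of _ hq, idx_of _ hq', Nat.pair_eq_pair] at h
        exact hcode h.2
  · intro q
    by_cases hq : ∃ k, b k = q
    · obtain ⟨k, rfl⟩ := hq
      rw [idx_b]
      exact (S.idx_le k).trans n.le_succ
    · rw [idx_of _ hq, Nat.unpair_pair]
  · intro g hA hB
    exact hab ⟨g, hA⟩
  · intro l k h
    obtain ⟨g, rfl, -⟩ := hinter l k h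
    exact g.2
  · intro y hy x hx hxA c hc hc1 hcol
    obtain ⟨w, h1, h2, h3, h4⟩ := hword y hy ⟨x, hx⟩
      (by rintro ⟨g, hg⟩; exact hxA ((show (g : G) = x from congrArg Subtype.val hg) ▸ g.2))
      ⟨c, hc⟩ (fun h => hc1 (congrArg Subtype.val h))
    refine ⟨w, h1, h2, h3, ?_⟩
    rw [h4, dif_pos hcol]
    rfl

lemma Stage.exists_zero {G : Type} [Group G] {A : Subgroup G} (hA : A = ⊥) :
    ∃ (S : Stage A 0) (t : S.K), t ∉ S.incl.range := by
  have : Subsingleton A := by subst hA; infer_instance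
  refine ⟨{ K := Multiplicative ℤ
            incl := 1
            injective := Function.injective_of_subsingleton _
            malnormal := fun _ _ _ _ _ => Subsingleton.elim _ _
            idx := fun k => Nat.pair 0 (Encodable.encode k.toAdd)
            idx_injective := fun k k' h => Multiplicative.toAdd.injective
              (Encodable.encode_injective (Nat.pair_eq_pair.1 h).2)
            idx_le := by simp }, Multiplicative.ofAdd (1 : ℤ), ?_⟩
  rintro ⟨a, ha⟩
  have h : (0 : ℤ) = 1 := congrArg Multiplicative.toAdd ha
  simp at h

/-- A countable group `G` has an overgroup `K` in which every element `y` outside `G` generates,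
with boundedly long positive words in `y`, `c` and a suitable `x`, any given element of `G`. -/
theorem exists_extension {G : Type} [Group G] [Countable G] (col : G → G) :
    ∃ (K : Type) (_ : Group K) (ι : G →* K) (t : K), Function.Injective ι ∧ t ∉ ι.range ∧
      (∀ s : Finset K, ∃ B : Finset G, ∀ g, ι g ∈ Subgroup.closure (s : Set K) →
        g ∈ Subgroup.closure (B : Set G)) ∧
      ∀ y ∉ ι.range, ∃ n : ℕ, ∀ c, c ≠ 1 → ∀ g, ∃ B : Finset G,
        ∀ x ∉ Subgroup.closure (B : Set G), col x = g → ∃ w : List K,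
          (∀ e ∈ w, e = y ∨ e = ι x ∨ e = ι c) ∧ 1 ≤ w.length ∧ w.length ≤ n ∧ w.prod = ι g := by
  classical
  obtain ⟨enum, henum⟩ := exists_surjective_nat G
  let P : ℕ → Finset G := fun n => (Finset.range n).image enum
  let A : ℕ → Subgroup G := fun n => Subgroup.closure (P n : Set G)
  have hA : ∀ m n, m ≤ n → A m ≤ A n := fun m n h => Subgroup.closure_mono (by
    exact_mod_cast Finset.image_subset_image (Finset.range_subset_range.2 h))
  have hAex : ∀ g, ∃ n, g ∈ A n := fun g => by
    obtain ⟨n, rfl⟩ := henum g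
    exact ⟨n + 1, Subgroup.subset_closure (by simpa [P] using ⟨n, le_rfl, rfl⟩)⟩
  obtain ⟨S₀, t, ht⟩ := Stage.exists_zero (A := A 0) (by simp [A, P])
  let S : ∀ n, Stage (A n) n := fun n => Nat.rec (motive := fun n => Stage (A n) n)
    S₀ (fun n T => (T.exists_succ (hA n (n + 1) n.le_succ) col).choose) n
  have hS := fun n => ((S n).exists_succ (hA n (n + 1) n.le_succ) col).choose_spec
  change ∀ n, ∃ j : (S n).K →* (S (n + 1)).K, _ at hS
  choose j hj hji hinter hidx hword using hS
  obtain ⟨K, hK, f, hf, hfj, hfs⟩ := exists_sequential_colimit (fun n => (S n).K) j hj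
  have hιm : ∀ m n (h : m ≤ n) g (hg : g ∈ A m),
      f n ((S n).incl ⟨g, hA m n h hg⟩) = f m ((S m).incl ⟨g, hg⟩) := by
    intro m n h g hg
    induction n, h using Nat.le_induction with
    | base => rfl
    | succ n h ih => rw [hji n g (hA m n h hg), hfj, ih]
  have hup : ∀ m n (h : m ≤ n) k, ∃ k', f n k' = f m k ∧ (S n).idx k' = (S m).idx k := by
    intro m n h k
    induction n, h using Nat.le_induction with
    | base => exact ⟨k, rfl, rfl⟩
    | succ n h ih =>
      obtain ⟨k', h1, h2⟩ := ih
      exact ⟨j n k', by rw [hfj, h1], by rw [hidx, h2]⟩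
  have hdown : ∀ m n (h : m ≤ n) g (hg : g ∈ A n) k, f n ((S n).incl ⟨g, hg⟩) = f m k →
      g ∈ A m := by
    intro m n h
    induction n, h using Nat.le_induction with
    | base => exact fun g hg _ _ => hg
    | succ n h ih =>
      intro g hg k hk
      obtain ⟨k', h1, -⟩ := hup m n h k
      have hgn : g ∈ A n := hinter n ⟨g, hg⟩ k' (hf (n + 1) (by rw [hk, hfj, h1]))
      exact ih g hgn k (by rw [← hk, hιm n (n + 1) n.le_succ g hgn])
  choose lev hlev using hAex
  have hι : ∀ m g (hg : g ∈ A m),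
      f m ((S m).incl ⟨g, hg⟩) = f (lev g) ((S (lev g)).incl ⟨g, hlev g⟩) := by
    intro m g hg
    rcases le_total m (lev g) with h | h
    · exact (hιm m (lev g) h g hg).symm
    · exact hιm (lev g) m h g (hlev g)
  let ι : G →* K := MonoidHom.mk' (fun g => f (lev g) ((S (lev g)).incl ⟨g, hlev g⟩)) (by
    intro g g'
    have h1 : g ∈ A (max (lev g) (lev g')) := hA _ _ (le_max_left _ _) (hlev g)
    have h2 : g' ∈ A (max (lev g) (lev g')) := hA _ _ (le_max_right _ _) (hlev g')
    rw [← hι _ g h1, ← hι _ g' h2, ← hι _ (g * g') (mul_mem h1 h2), ← map_mul, ← map_mul]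
    rfl)
  have hι' : ∀ m g (hg : g ∈ A m), ι g = f m ((S m).incl ⟨g, hg⟩) := fun m g hg => (hι m g hg).symm
  have hmeet : ∀ m g k, ι g = f m k → g ∈ A m := by
    intro m g k h
    rcases le_total m (lev g) with h' | h'
    · exact hdown m _ h' g (hlev g) k h
    · exact hA _ _ h' (hlev g)
  have hincl : ∀ m k, f m k ∉ ι.range → k ∉ (S m).incl.range := by
    rintro m _ hk ⟨⟨g, hg⟩, rfl⟩
    exact hk ⟨g, hι' m g hg⟩
  refine ⟨K, hK, ι, f 0 t, ?_, ?_, ?_, ?_⟩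
  · rw [injective_iff_map_eq_one]
    intro g hg
    have := (S (lev g)).injective (hf (lev g) (hg.trans (by simp : (1 : K) = f (lev g)
      ((S (lev g)).incl 1))))
    exact congrArg Subtype.val this
  · rintro ⟨g, hg⟩
    have hgA := hmeet 0 g t hg
    exact ht ⟨⟨g, hgA⟩, hf 0 ((hι' 0 g hgA).symm.trans hg)⟩
  · intro s
    have : ∃ m, ∀ k ∈ s, k ∈ (f m).range := by
      induction s using Finset.induction_on with
      | empty => exact ⟨0, by simp⟩
      | insert a s _ ih =>
        obtain ⟨m, hm⟩ := ih
        obtain ⟨n, k, rfl⟩ := hfs a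
        refine ⟨max m n, fun b hb => ?_⟩
        rcases Finset.mem_insert.1 hb with rfl | hb
        · obtain ⟨k', h, -⟩ := hup n (max m n) (le_max_right _ _) k
          exact ⟨k', h⟩
        · obtain ⟨k, rfl⟩ := hm b hb
          obtain ⟨k', h, -⟩ := hup m (max m n) (le_max_left _ _) k
          exact ⟨k', h⟩
    obtain ⟨m, hm⟩ := this
    refine ⟨P m, fun g hg => ?_⟩
    obtain ⟨k, hk⟩ := (Subgroup.closure_le (f m).range).2 hm hg
    exact hmeet m g k hk.symm
  · intro y hy
    obtain ⟨m, y, rfl⟩ := hfs y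
    refine ⟨wordBound ((S m).idx y), fun c hc g => ?_⟩
    let m' := max m (max (lev c) (lev g))
    have hcm : c ∈ A m' := hA _ _ ((le_max_left _ _).trans (le_max_right _ _)) (hlev c)
    have hgm : g ∈ A m' := hA _ _ ((le_max_right _ _).trans (le_max_right _ _)) (hlev g)
    refine ⟨P m', fun x hx hcol => ?_⟩
    have hxex : ∃ n, x ∈ A n := ⟨_, hlev x⟩
    obtain ⟨p, hp⟩ : ∃ p, Nat.find hxex = p + 1 := Nat.exists_eq_succ_of_ne_zero (by
      intro h
      have := Nat.find_spec hxex
      rw [h] at this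
      exact hx (hA 0 m' (Nat.zero_le _) this))
    have hxp1 : x ∈ A (p + 1) := hp ▸ Nat.find_spec hxex
    have hxp : x ∉ A p := Nat.find_min hxex (by omega)
    have hmp : m' ≤ p := by
      by_contra h
      exact hx (hA _ _ (by omega) hxp1)
    obtain ⟨y', hy1, hy2⟩ := hup m p ((le_max_left _ _).trans hmp) y
    obtain ⟨w, h1, h2, h3, h4⟩ := hword p y' (hincl p y' (hy1 ▸ hy)) x hxp1 hxp c (hA _ _ hmp hcm)
      hc (hcol ▸ hA _ _ hmp hgm)
    refine ⟨w.map (f (p + 1)), ?_, by simpa using h2, by rw [List.length_map, ← hy2]; exact h3, ?_⟩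
    · intro e he
      obtain ⟨b, hb, rfl⟩ := List.mem_map.1 he
      rcases h1 b hb with rfl | rfl | rfl
      · left; rw [hfj, hy1]
      · right; left; rw [hι' _ x hxp1]
      · right; right; rw [hι' _ c]
    · rw [← map_list_prod, h4, hι' (p + 1) g (hA _ _ (hmp.trans p.le_succ) hgm)]
      subst hcol
      rfl

/-- A filtration of a group, indexed by a well order, by subgroups `Le α`, with `Lt α` the part of
`Le α` coming from smaller indices. -/
structure Filtration (X G : Type) [LinearOrder X] [Group G] where
  Lt : X → Subgroup G
  Le : X → Subgroup G
  lt_le : ∀ α, Lt α ≤ Le α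
  le_lt : ∀ α β, α < β → Le α ≤ Lt β
  mem_lt : ∀ β, ∀ g ∈ Lt β, g = 1 ∨ ∃ α < β, g ∈ Le α
  exists_mem : ∀ g, ∃ α, g ∈ Le α

namespace Filtration

variable {X G : Type} [LinearOrder X] [Group G] (Φ : Filtration X G)

/-- The element `g` occurs first at the index `α`. -/
def IsLevel (g : G) (α : X) : Prop := g ∈ Φ.Le α ∧ g ∉ Φ.Lt α

variable {Φ}

lemma IsLevel.ne_one {g : G} {α : X} (h : Φ.IsLevel g α) : g ≠ 1 := by
  rintro rfl
  exact h.2 (one_mem _)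

lemma IsLevel.unique {g : G} {α β : X} (h : Φ.IsLevel g α) (h' : Φ.IsLevel g β) : α = β := by
  rcases lt_trichotomy α β with hab | hab | hab
  · exact absurd (Φ.le_lt _ _ hab h.1) h'.2
  · exact hab
  · exact absurd (Φ.le_lt _ _ hab h'.1) h.2

lemma exists_isLevel [WellFoundedLT X] {g : G} (hg : g ≠ 1) : ∃ α, Φ.IsLevel g α := by
  obtain ⟨α, hα, hmin⟩ := wellFounded_lt.has_min {α | g ∈ Φ.Le α} (Φ.exists_mem g)
  refine ⟨α, hα, fun h => ?_⟩
  rcases Φ.mem_lt α g h with rfl | ⟨β, hβ, hgβ⟩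
  · exact hg rfl
  · exact hmin β hgβ hβ

/-- If finitely generated subgroups of `Le α` meet `Lt α` in subgroups of finitely generated
subgroups, then the elements of a finitely generated subgroup have finitely many levels. -/
lemma finite_levels [WellFoundedLT X] (hfin : ∀ α, ∀ s : Finset G, (∀ g ∈ s, g ∈ Φ.Le α) →
      ∃ B : Finset G, (∀ g ∈ B, g ∈ Φ.Lt α) ∧ ∀ g ∈ Φ.Lt α,
        g ∈ Subgroup.closure (s : Set G) → g ∈ Subgroup.closure (B : Set G)) (α : X) :
    ∀ s : Finset G, (∀ g ∈ s, g ∈ Φ.Lt α) →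
      {γ | ∃ h ∈ Subgroup.closure (s : Set G), Φ.IsLevel h γ}.Finite := by
  classical
  induction α using WellFoundedLT.induction with
  | ind α ih =>
    intro s hs
    have key : (∀ g ∈ s, g = 1) ∨ ∃ γ < α, ∀ g ∈ s, g ∈ Φ.Le γ := by
      induction s using Finset.induction_on with
      | empty => simp
      | insert a s _ ihs =>
        have hmono : ∀ γ δ, γ ≤ δ → Φ.Le γ ≤ Φ.Le δ := fun γ δ h =>
          h.eq_or_lt.elim (fun h => h ▸ le_rfl) fun h => (Φ.le_lt _ _ h).trans (Φ.lt_le _)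
        rcases ihs fun g hg => hs g (Finset.mem_insert_of_mem hg) with h | ⟨γ, hγ, h⟩ <;>
        rcases Φ.mem_lt α a (hs a (Finset.mem_insert_self _ _)) with rfl | ⟨δ, hδ, h'⟩
        · exact Or.inl fun g hg => (Finset.mem_insert.1 hg).elim id (h g)
        · exact Or.inr ⟨δ, hδ, fun g hg => (Finset.mem_insert.1 hg).elim (fun e => e ▸ h')
            fun hg => h g hg ▸ one_mem _⟩
        · exact Or.inr ⟨γ, hγ, fun g hg => (Finset.mem_insert.1 hg).elim
            (fun e => e ▸ one_mem _) (h g)⟩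
        · exact Or.inr ⟨max γ δ, max_lt hγ hδ, fun g hg => (Finset.mem_insert.1 hg).elim
            (fun e => e ▸ hmono _ _ (le_max_right _ _) h')
            fun hg => hmono _ _ (le_max_left _ _) (h g hg)⟩
    rcases key with h | ⟨γ, hγ, h⟩
    · convert Set.finite_empty
      rw [Set.eq_empty_iff_forall_notMem]
      rintro γ ⟨g, hg, hγ⟩
      have : Subgroup.closure (s : Set G) ≤ ⊥ := (Subgroup.closure_le _).2 fun g hg => h g hg
      exact hγ.ne_one (this hg)
    · obtain ⟨B, hB, hBs⟩ := hfin γ s h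
      refine ((ih γ hγ B hB).insert γ).subset ?_
      rintro δ ⟨g, hg, hδ⟩
      by_cases hgγ : g ∈ Φ.Lt γ
      · exact Or.inr ⟨g, hBs g hgγ hg, hδ⟩
      · exact Or.inl (hδ.unique ⟨(Subgroup.closure_le _).2 h hg, hgγ⟩)

/-- A filtered group in which elements of `Lt α` are expressed by positive words as prescribed by a
colouring `f` has the property that each uncountable subset generates it in boundedly many steps. -/
theorem exists_forall_prod [WellFoundedLT X] (hI : ∀ a : X, (Set.Iio a).Countable) (f : X → X → X)
    (hf : ∀ Z : Set X, ¬ Z.Countable → ∀ F : X → Finset X, ∀ c, ∃ a ∈ Z, ∃ b ∈ Z, a < b ∧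
      a ∉ F b ∧ f a b = c) (Codes : X → X → G → Prop)
    (hcode : ∀ g, ∃ d δ, ∀ α, δ < α → Codes d α g)
    (hcount : ∀ α, (Φ.Le α : Set G).Countable)
    (hfin : ∀ α, ∀ s : Finset G, (∀ g ∈ s, g ∈ Φ.Le α) →
      ∃ B : Finset G, (∀ g ∈ B, g ∈ Φ.Lt α) ∧ ∀ g ∈ Φ.Lt α,
        g ∈ Subgroup.closure (s : Set G) → g ∈ Subgroup.closure (B : Set G))
    (hword : ∀ α y, Φ.IsLevel y α → ∃ n : ℕ, ∀ c ∈ Φ.Lt α, c ≠ 1 → ∀ g ∈ Φ.Lt α,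
      ∃ B : Finset G, (∀ g ∈ B, g ∈ Φ.Lt α) ∧ ∀ x ∈ Φ.Lt α, x ∉ Subgroup.closure (B : Set G) →
        ∀ γ, Φ.IsLevel x γ → Codes (f γ α) α g → ∃ w : List G, (∀ e ∈ w, e = y ∨ e = x ∨ e = c) ∧
          1 ≤ w.length ∧ w.length ≤ n ∧ w.prod = g) (Y : Set G) (hY : ¬ Y.Countable) :
    ∃ n : ℕ, ∀ g : G, ∃ m : ℕ, 1 ≤ m ∧ m ≤ n ∧
      ∃ a : Fin m → G, (∀ i, a i ∈ Y) ∧ g = (List.ofFn a).prod := by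
  classical
  let Z₀ : Set X := {α | ∃ y ∈ Y, Φ.IsLevel y α}
  have hZ₀ : ¬ Z₀.Countable := by
    intro h
    refine hY ((((h.biUnion fun α _ => hcount α)).insert 1).mono fun y hy => ?_)
    by_cases h1 : y = 1
    · exact Or.inl h1
    · obtain ⟨α, hα⟩ := exists_isLevel (Φ := Φ) h1
      exact Or.inr (Set.mem_biUnion (show α ∈ Z₀ from ⟨y, hy, hα⟩) hα.1)
  have hyex : ∀ α, ∃ y, α ∈ Z₀ → y ∈ Y ∧ Φ.IsLevel y α := fun α => by
    by_cases h : α ∈ Z₀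
    · exact h.imp fun y hy _ => hy
    · exact ⟨1, fun h' => absurd h' h⟩
  choose y hy using hyex
  have hnex : ∀ α, ∃ n : ℕ, α ∈ Z₀ → ∀ c ∈ Φ.Lt α, c ≠ 1 → ∀ g ∈ Φ.Lt α,
      ∃ B : Finset G, (∀ g ∈ B, g ∈ Φ.Lt α) ∧ ∀ x ∈ Φ.Lt α, x ∉ Subgroup.closure (B : Set G) →
        ∀ γ, Φ.IsLevel x γ → Codes (f γ α) α g → ∃ w : List G,
          (∀ e ∈ w, e = y α ∨ e = x ∨ e = c) ∧ 1 ≤ w.length ∧ w.length ≤ n ∧ w.prod = g := by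
    intro α
    by_cases h : α ∈ Z₀
    · exact (hword α (y α) (hy α h).2).imp fun n hn _ => hn
    · exact ⟨0, fun h' => absurd h' h⟩
  choose n hn using hnex
  obtain ⟨N, hN⟩ : ∃ N, ¬ {α ∈ Z₀ | n α = N}.Countable := by
    by_contra! h
    exact hZ₀ ((Set.countable_iUnion h).mono fun α hα =>
      Set.mem_iUnion_of_mem (n α) (show α ∈ {β ∈ Z₀ | n β = n α} from ⟨hα, rfl⟩))
  obtain ⟨α₀, hα₀, hnα₀⟩ : {α ∈ Z₀ | n α = N}.Nonempty := by
    by_contra! h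
    exact hN (h ▸ Set.countable_empty)
  refine ⟨N, fun g => ?_⟩
  obtain ⟨δ₁, hδ₁⟩ := Φ.exists_mem g
  obtain ⟨d, δ₂, hd⟩ := hcode g
  let δ := max δ₁ δ₂
  let Z : Set X := {α ∈ Z₀ | n α = N} ∩ {α | α₀ < α ∧ δ < α}
  have hZ : ¬ Z.Countable := by
    intro h
    have hIic : ∀ a : X, (Set.Iic a).Countable := fun a => by
      rw [← Set.Iio_insert]
      exact (hI a).insert a
    refine hN ((h.union ((hIic α₀).union (hIic δ))).mono fun α hα => ?_)
    by_cases h1 : α₀ < α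
    · by_cases h2 : δ < α
      · exact Or.inl ⟨hα, h1, h2⟩
      · exact Or.inr (Or.inr (not_lt.1 h2))
    · exact Or.inr (Or.inl (not_lt.1 h1))
  have hBex : ∀ α, ∃ B : Finset G, (∀ g ∈ B, g ∈ Φ.Lt α) ∧ (α ∈ Z → ∀ x ∈ Φ.Lt α,
      x ∉ Subgroup.closure (B : Set G) → ∀ γ, Φ.IsLevel x γ → Codes (f γ α) α g →
        ∃ w : List G, (∀ e ∈ w, e = y α ∨ e = x ∨ e = y α₀) ∧ 1 ≤ w.length ∧ w.length ≤ N ∧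
          w.prod = g) := by
    intro α
    by_cases h : α ∈ Z
    · obtain ⟨⟨hα, hαN⟩, h1, h2⟩ := h
      obtain ⟨B, hB, hB'⟩ := hn α hα (y α₀) (Φ.le_lt _ _ h1 (hy α₀ hα₀).2.1)
        (hy α₀ hα₀).2.ne_one g (Φ.le_lt _ _ ((le_max_left _ _).trans_lt h2) hδ₁)
      exact ⟨B, hB, fun _ => hαN ▸ hB'⟩
    · exact ⟨∅, by simp, fun h' => absurd h' h⟩
  choose B hB hBw using hBex
  obtain ⟨a, ha, b, hb, hab, haF, hfab⟩ := hf Z hZ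
    (fun α => (finite_levels hfin α (B α) (hB α)).toFinset) d
  have hya := hy a ha.1.1
  obtain ⟨w, h1, h2, h3, h4⟩ := hBw b hb (y a) (Φ.le_lt _ _ hab hya.2.1)
    (fun h => haF (by simpa using ⟨y a, h, hya.2⟩)) a hya.2
    (hfab ▸ hd b ((le_max_right _ _).trans_lt hb.2.2))
  refine ⟨w.length, h2, h3, w.get, fun i => ?_, by rw [List.ofFn_get, h4]⟩
  rcases h1 _ (w.get_mem i) with h | h | h <;> rw [h]
  exacts [(hy b hb.1.1).1, hya.1, (hy α₀ hα₀).1]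

lemma mk_eq_aleph_one (hX : Cardinal.mk X = Cardinal.aleph 1) (dec : X → G)
    (hdec : Function.Surjective dec) (ht : ∀ α, ∃ t, Φ.IsLevel t α) :
    Cardinal.mk G = Cardinal.aleph 1 := by
  choose t ht using ht
  refine le_antisymm (hX ▸ Cardinal.mk_le_of_surjective hdec) (hX ▸ Cardinal.mk_le_of_injective
    (f := t) fun α β h => (ht α).unique (h ▸ ht β))

end Filtration

lemma countable_closure {G : Type} [Group G] {s : Set G} (hs : s.Countable) :
    (Subgroup.closure s : Set G).Countable := by
  have := hs.to_subtype
  have : Countable (FreeGroup s) := Function.Surjective.countable (f := FreeGroup.mk)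
    Quot.mk_surjective
  rw [FreeGroup.closure_eq_range]
  exact Set.countable_range _

lemma exists_list_map_eq {α β : Type} (f : α → β) (P : α → Prop) (w : List β)
    (h : ∀ e ∈ w, ∃ a, P a ∧ f a = e) : ∃ v : List α, (∀ a ∈ v, P a) ∧ v.map f = w := by
  induction w with
  | nil => exact ⟨[], by simp, rfl⟩
  | cons e w ih =>
    obtain ⟨v, hv, rfl⟩ := ih fun e he => h e (List.mem_cons_of_mem _ he)
    obtain ⟨a, ha, rfl⟩ := h e List.mem_cons_self
    exact ⟨a :: v, List.forall_mem_cons.2 ⟨ha, hv⟩, rfl⟩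

/-- The subgroup of a free group generated by the basis elements below `α`. -/
def freeLt {X : Type} [LinearOrder X] (α : X) : Subgroup (FreeGroup X) :=
  Subgroup.closure (FreeGroup.of '' Set.Iio α)

/-- The subgroup of a free group generated by the basis elements up to `α`. -/
def freeLe {X : Type} [LinearOrder X] (α : X) : Subgroup (FreeGroup X) :=
  Subgroup.closure (FreeGroup.of '' Set.Iic α)

lemma freeLe_mono {X : Type} [LinearOrder X] : Monotone (freeLe (X := X)) := fun _ _ h =>
  Subgroup.closure_mono (Set.image_mono (Set.Iic_subset_Iic.2 h))

lemma of_mem_freeLe {X : Type} [LinearOrder X] (α : X) : FreeGroup.of α ∈ freeLe α :=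
  Subgroup.subset_closure ⟨α, le_rfl, rfl⟩

/-- The filtration of a free group by the subgroups generated by initial segments of the basis. -/
def freeFiltration (X : Type) [LinearOrder X] [Nonempty X] : Filtration X (FreeGroup X) where
  Lt := freeLt
  Le := freeLe
  lt_le α := Subgroup.closure_mono (Set.image_mono Set.Iio_subset_Iic_self)
  le_lt α β h := Subgroup.closure_mono (Set.image_mono (Set.Iic_subset_Iio.2 h))
  mem_lt β g hg := by
    induction hg using Subgroup.closure_induction with
    | mem g hg =>
      obtain ⟨α, hα, rfl⟩ := hg
      exact Or.inr ⟨α, hα, of_mem_freeLe α⟩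
    | one => exact Or.inl rfl
    | mul g g' _ _ h h' =>
      rcases h with rfl | ⟨α, hα, h⟩
      · rwa [one_mul]
      · rcases h' with rfl | ⟨α', hα', h'⟩
        · rw [mul_one]; exact Or.inr ⟨α, hα, h⟩
        · exact Or.inr ⟨max α α', max_lt hα hα',
            mul_mem (freeLe_mono (le_max_left _ _) h) (freeLe_mono (le_max_right _ _) h')⟩
    | inv g _ h =>
      rcases h with rfl | ⟨α, hα, h⟩
      · exact Or.inl inv_one
      · exact Or.inr ⟨α, hα, inv_mem h⟩
  exists_mem g := by
    induction g using FreeGroup.induction_on with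
    | C1 => exact ⟨Classical.arbitrary X, one_mem _⟩
    | of α => exact ⟨α, of_mem_freeLe α⟩
    | inv_of α h => exact ⟨α, inv_mem (of_mem_freeLe α)⟩
    | mul g g' h h' =>
      obtain ⟨α, h⟩ := h
      obtain ⟨α', h'⟩ := h'
      exact ⟨max α α', mul_mem (freeLe_mono (le_max_left _ _) h) (freeLe_mono (le_max_right _ _) h')⟩

section Step

variable {X : Type} [LinearOrder X] [Nonempty X]

/-- The coset of `x` modulo `N` occurs first at the index `γ`. -/
def IsLevelMod (N : Subgroup (FreeGroup X)) (x : FreeGroup X) (γ : X) : Prop :=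
  (∃ k ∈ freeLe γ, k⁻¹ * x ∈ N) ∧ ∀ k ∈ freeLt γ, k⁻¹ * x ∉ N

lemma IsLevelMod.unique {N : Subgroup (FreeGroup X)} {x x' : FreeGroup X} {γ γ' : X}
    (h : IsLevelMod N x γ) (h' : IsLevelMod N x' γ') (hx : x⁻¹ * x' ∈ N) : γ = γ' := by
  rcases lt_trichotomy γ γ' with hlt | heq | hlt
  · obtain ⟨k, hk, hkx⟩ := h.1
    refine absurd ?_ (h'.2 k ((freeFiltration X).le_lt _ _ hlt hk))
    simpa [mul_assoc] using mul_mem hkx hx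
  · exact heq
  · obtain ⟨k, hk, hkx⟩ := h'.1
    refine absurd ?_ (h.2 k ((freeFiltration X).le_lt _ _ hlt hk))
    simpa [mul_assoc] using mul_mem hkx (inv_mem hx)

/-- The normal subgroup `S` of `freeLe β` extends the normal subgroup `N` of `freeLt β` in such a way
that the quotients have the properties of `exists_extension`. -/
structure IsStep (β : X) (D : X → FreeGroup X) (N S : Subgroup (FreeGroup X)) : Prop where
  le : S ≤ freeLe β
  conj_mem : ∀ g ∈ freeLe β, ∀ n ∈ S, g * n * g⁻¹ ∈ S
  mem_iff : ∀ g ∈ freeLt β, g ∈ S ↔ g ∈ N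
  of_notMem : ∀ g ∈ freeLt β, g⁻¹ * FreeGroup.of β ∉ S
  exists_finset : ∀ s : Finset (FreeGroup X), (∀ g ∈ s, g ∈ freeLe β) →
    ∃ B : Finset (FreeGroup X), (∀ g ∈ B, g ∈ freeLt β) ∧ ∀ g ∈ freeLt β,
      ∀ h ∈ Subgroup.closure (s : Set (FreeGroup X)), h⁻¹ * g ∈ S →
        ∃ b ∈ Subgroup.closure (B : Set (FreeGroup X)), b⁻¹ * g ∈ N
  exists_list : ∀ y ∈ freeLe β, (∀ g ∈ freeLt β, g⁻¹ * y ∉ S) → ∃ n : ℕ, ∀ c ∈ freeLt β, c ∉ N →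
    ∀ g ∈ freeLt β, ∃ B : Finset (FreeGroup X), (∀ g ∈ B, g ∈ freeLt β) ∧ ∀ x ∈ freeLt β,
      (∀ b ∈ Subgroup.closure (B : Set (FreeGroup X)), b⁻¹ * x ∉ N) → ∀ γ, IsLevelMod N x γ →
        D γ ∈ freeLt β → (D γ)⁻¹ * g ∈ N → ∃ w : List (FreeGroup X),
          (∀ e ∈ w, e = y ∨ e = x ∨ e = c) ∧ 1 ≤ w.length ∧ w.length ≤ n ∧ w.prod⁻¹ * g ∈ S

lemma exists_isStep (hI : ∀ a : X, (Set.Iio a).Countable) (β : X) (D : X → FreeGroup X)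
    (N : Subgroup (FreeGroup X)) (hconj : ∀ g ∈ freeLt β, ∀ n ∈ N, g * n * g⁻¹ ∈ N) :
    ∃ S, IsStep β D N S := by
  classical
  let A : Subgroup (FreeGroup X) := freeLt β
  have hAle : A ≤ freeLe β := (freeFiltration X).lt_le β
  have hAcount : Countable A := (countable_closure ((hI β).image _)).to_subtype
  let N' : Subgroup A := N.subgroupOf A
  have hN' : N'.Normal := ⟨fun n hn g => hconj g g.2 n hn⟩
  have : Countable (A ⧸ N') := Function.Surjective.countable (QuotientGroup.mk_surjective (s := N'))
  let mk : A →* A ⧸ N' := QuotientGroup.mk' N'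
  have mk_eq : ∀ a b : A, mk a = mk b ↔ (a : FreeGroup X)⁻¹ * b ∈ N := fun a b => QuotientGroup.eq
  have hcol : ∀ q, ∃ q', ∀ (x : A) γ (hD : D γ ∈ A), mk x = q → IsLevelMod N x γ →
      mk ⟨D γ, hD⟩ = q' := by
    intro q
    by_cases h : ∃ (x : A) (γ : X) (hD : D γ ∈ A), mk x = q ∧ IsLevelMod N x γ
    · obtain ⟨x, γ, hD, hx, hγ⟩ := h
      refine ⟨mk ⟨D γ, hD⟩, fun x' γ' hD' hx' hγ' => ?_⟩
      obtain rfl : γ' = γ := hγ'.unique hγ ((mk_eq _ _).1 (hx'.trans hx.symm))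
      rfl
    · exact ⟨1, fun x γ hD hx hγ => absurd ⟨x, γ, hD, hx, hγ⟩ h⟩
  choose col hcol using hcol
  obtain ⟨K, hK, ι, t, hι, ht, hfin, hword⟩ := exists_extension col
  let p : FreeGroup X →* K := FreeGroup.lift fun γ =>
    if h : γ < β then ι (mk ⟨FreeGroup.of γ, Subgroup.subset_closure ⟨γ, h, rfl⟩⟩) else t
  have hp : ∀ a : A, p a = ι (mk a) := by
    rintro ⟨g, hg⟩
    change p g = _
    induction hg using Subgroup.closure_induction with
    | mem g hg =>
      obtain ⟨α, hα, rfl⟩ := hg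
      simp only [p, FreeGroup.lift_apply_of]
      exact dif_pos hα
    | one => rw [map_one]; exact (map_one (ι.comp mk)).symm
    | mul g g' hg hg' h h' => rw [map_mul, h, h']; exact (map_mul (ι.comp mk) ⟨g, hg⟩ ⟨g', hg'⟩).symm
    | inv g hg h => rw [map_inv, h]; exact (map_inv (ι.comp mk) ⟨g, hg⟩).symm
  let S : Subgroup (FreeGroup X) := p.ker ⊓ freeLe β
  have hS : ∀ g ∈ freeLe β, ∀ h ∈ freeLe β, g⁻¹ * h ∈ S ↔ p g = p h := by
    intro g hg h hh
    rw [Subgroup.mem_inf, MonoidHom.mem_ker, map_mul, map_inv, inv_mul_eq_one]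
    exact and_iff_left (mul_mem (inv_mem hg) hh)
  have hlift : ∀ B : Finset (A ⧸ N'), ∃ B' : Finset (FreeGroup X), (∀ g ∈ B', g ∈ freeLt β) ∧
      ∀ a : A, mk a ∈ Subgroup.closure (B : Set (A ⧸ N')) →
        ∃ b ∈ Subgroup.closure (B' : Set (FreeGroup X)), b⁻¹ * (a : FreeGroup X) ∈ N := by
    intro B
    obtain ⟨C, rfl⟩ : ∃ C : Finset A, C.image mk = B := by
      obtain ⟨C, -, hC⟩ := Finset.subset_set_image_iff.1
        (show (B : Set (A ⧸ N')) ⊆ mk '' Set.univ from fun q _ => by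
          obtain ⟨a, rfl⟩ := QuotientGroup.mk_surjective q
          exact ⟨a, trivial, rfl⟩)
      exact ⟨C, hC⟩
    refine ⟨C.image Subtype.val, fun g hg => ?_, fun a ha => ?_⟩
    · obtain ⟨a, -, rfl⟩ := Finset.mem_image.1 hg
      exact a.2
    · rw [Finset.coe_image, ← MonoidHom.map_closure] at ha
      obtain ⟨b, hb, hba⟩ := ha
      refine ⟨b, ?_, (mk_eq b a).1 hba⟩
      have := Subgroup.mem_map_of_mem A.subtype hb
      rw [MonoidHom.map_closure] at this
      simpa using this
  refine ⟨S, inf_le_right, ?_, ?_, ?_, ?_, ?_⟩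
  · intro g hg n hn
    exact Subgroup.mem_inf.2 ⟨p.normal_ker.conj_mem n hn.1 g, mul_mem (mul_mem hg hn.2) (inv_mem hg)⟩
  · intro g hg
    have h1 := hS 1 (one_mem _) g (hAle hg)
    have h2 := hp ⟨g, hg⟩
    have h3 := mk_eq 1 ⟨g, hg⟩
    simp only [inv_one, one_mul, map_one, OneMemClass.coe_one] at h1 h2 h3
    rw [h1, h2, ← h3, ← map_one ι, hι.eq_iff]
  · intro g hg h
    rw [hS g (hAle hg) _ (of_mem_freeLe β)] at h
    have h2 : p (FreeGroup.of β) = t := by simp [p]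
    exact ht ⟨mk ⟨g, hg⟩, by rw [← h2, ← h, ← hp]⟩
  · intro s hs
    obtain ⟨B₀, hB₀⟩ := hfin (s.image p)
    obtain ⟨B, hB, hB'⟩ := hlift B₀
    refine ⟨B, hB, fun g hg h hh hhg => hB' ⟨g, hg⟩ (hB₀ _ ?_)⟩
    rw [hS h ((Subgroup.closure_le _).2 hs hh) g (hAle hg)] at hhg
    rw [← hp, ← hhg, Finset.coe_image, ← MonoidHom.map_closure]
    exact Subgroup.mem_map_of_mem p hh
  · intro y hy hyS
    obtain ⟨n, hn⟩ := hword (p y) (by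
      rintro ⟨q, hq⟩
      obtain ⟨a, rfl⟩ := QuotientGroup.mk_surjective q
      exact hyS a a.2 ((hS a (hAle a.2) y hy).2 ((hp a).trans hq)))
    refine ⟨n, fun c hc hcN g hg => ?_⟩
    obtain ⟨B₀, hB₀⟩ := hn (mk ⟨c, hc⟩) (by
      intro h
      have := (mk_eq 1 ⟨c, hc⟩).1 ((map_one mk).trans h.symm)
      simp at this
      exact hcN this) (mk ⟨g, hg⟩)
    obtain ⟨B, hB, hB'⟩ := hlift B₀
    refine ⟨B, hB, fun x hx hxB γ hγ hD hDg => ?_⟩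
    obtain ⟨w, h1, h2, h3, h4⟩ := hB₀ (mk ⟨x, hx⟩)
      (fun h => by
        obtain ⟨b, hb, hbx⟩ := hB' ⟨x, hx⟩ h
        exact hxB b hb hbx)
      ((hcol _ ⟨x, hx⟩ γ hD rfl hγ).symm.trans ((mk_eq _ _).2 hDg))
    obtain ⟨v, hv, rfl⟩ := exists_list_map_eq p (fun e => e = y ∨ e = x ∨ e = c) w (by
      intro e he
      rcases h1 e he with rfl | rfl | rfl
      · exact ⟨y, by simp⟩
      · exact ⟨x, by simp, hp ⟨x, hx⟩⟩
      · exact ⟨c, by simp, hp ⟨c, hc⟩⟩)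
    rw [List.length_map] at h2 h3
    refine ⟨v, hv, h2, h3, (hS _ (list_prod_mem fun e he => ?_) g (hAle hg)).2 ?_⟩
    · rcases hv e he with rfl | rfl | rfl
      exacts [hy, hAle hx, hAle hc]
    · rw [map_list_prod, h4, ← hp]

lemma IsStep.le_of_le {S : X → Subgroup (FreeGroup X)} {D : X → X → FreeGroup X} {γ γ' : X}
    (h : IsStep γ (D γ) (⨆ δ : Set.Iio γ, S δ) (S γ))
    (h' : IsStep γ' (D γ') (⨆ δ : Set.Iio γ', S δ) (S γ')) (hle : γ ≤ γ') : S γ ≤ S γ' := by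
  rcases hle.eq_or_lt with rfl | hlt
  · exact le_rfl
  · intro g hg
    exact (h'.mem_iff g ((freeFiltration X).le_lt _ _ hlt (h.le hg))).2
      (Subgroup.mem_iSup_of_mem (⟨γ, hlt⟩ : Set.Iio γ') hg)

lemma mem_iSup_of_steps {S : X → Subgroup (FreeGroup X)} {D : X → X → FreeGroup X} {I : Set X}
    (h : ∀ γ ∈ I, IsStep γ (D γ) (⨆ δ : Set.Iio γ, S δ) (S γ)) {g : FreeGroup X}
    (hg : g ∈ ⨆ γ : I, S γ) : g = 1 ∨ ∃ γ ∈ I, g ∈ S γ := by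
  induction hg using Subgroup.iSup_induction' with
  | hp γ g hg => exact Or.inr ⟨γ, γ.2, hg⟩
  | h1 => exact Or.inl rfl
  | hmul g g' _ _ hg hg' =>
    rcases hg with rfl | ⟨γ, hγ, hg⟩
    · rwa [one_mul]
    · rcases hg' with rfl | ⟨γ', hγ', hg'⟩
      · rw [mul_one]; exact Or.inr ⟨γ, hγ, hg⟩
      · rcases le_total γ γ' with hle | hle
        · exact Or.inr ⟨γ', hγ', mul_mem ((h γ hγ).le_of_le (h γ' hγ') hle hg) hg'⟩
        · exact Or.inr ⟨γ, hγ, mul_mem hg ((h γ' hγ').le_of_le (h γ hγ) hle hg')⟩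

lemma conj_mem_iSup_of_steps {S : X → Subgroup (FreeGroup X)} {D : X → X → FreeGroup X} {I : Set X}
    (h : ∀ γ ∈ I, IsStep γ (D γ) (⨆ δ : Set.Iio γ, S δ) (S γ)) {g n : FreeGroup X} {α : X}
    (hα : α ∈ I) (hg : g ∈ freeLe α) (hn : n ∈ ⨆ γ : I, S γ) : g * n * g⁻¹ ∈ ⨆ γ : I, S γ := by
  rcases mem_iSup_of_steps h hn with rfl | ⟨γ, hγ, hn⟩
  · simp
  · rcases le_total γ α with hle | hle
    · exact Subgroup.mem_iSup_of_mem (⟨α, hα⟩ : I)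
        ((h α hα).conj_mem g hg n ((h γ hγ).le_of_le (h α hα) hle hn))
    · exact Subgroup.mem_iSup_of_mem (⟨γ, hγ⟩ : I)
        ((h γ hγ).conj_mem g (freeLe_mono hle hg) n hn)

lemma exists_steps [WellFoundedLT X] (hI : ∀ a : X, (Set.Iio a).Countable)
    (D : X → X → FreeGroup X) :
    ∃ S : X → Subgroup (FreeGroup X), ∀ β, IsStep β (D β) (⨆ γ : Set.Iio β, S γ) (S β) := by
  classical
  let step : X → Subgroup (FreeGroup X) → Subgroup (FreeGroup X) := fun β N =>
    if h : ∃ S, IsStep β (D β) N S then h.choose else ⊥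
  have hstep : ∀ β N, (∃ S, IsStep β (D β) N S) → IsStep β (D β) N (step β N) := by
    intro β N h
    simp only [step, dif_pos h]
    exact h.choose_spec
  let S : X → Subgroup (FreeGroup X) := (wellFounded_lt (α := X)).fix
    fun β ih => step β (⨆ γ : Set.Iio β, ih γ.1 γ.2)
  have hS : ∀ β, S β = step β (⨆ γ : Set.Iio β, S γ) := fun β => WellFounded.fix_eq _ _ β
  refine ⟨S, fun β => ?_⟩
  induction β using WellFoundedLT.induction with
  | ind β ih =>
    rw [hS β]
    refine hstep β _ (exists_isStep hI β (D β) _ fun g hg n hn => ?_)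
    rcases (freeFiltration X).mem_lt β g hg with rfl | ⟨α, hα, hg⟩
    · simpa using hn
    · exact conj_mem_iSup_of_steps (I := Set.Iio β) ih hα hg hn

end Step

section Limit

variable {X : Type} [LinearOrder X] [Nonempty X] [WellFoundedLT X]
  {S : X → Subgroup (FreeGroup X)} {D : X → X → FreeGroup X}

lemma mem_of_mem_freeLe (hS : ∀ β, IsStep β (D β) (⨆ γ : Set.Iio β, S γ) (S β)) {β γ : X}
    {g : FreeGroup X} (hg : g ∈ freeLe β) (hγ : g ∈ S γ) : g ∈ S β := by
  induction γ using WellFoundedLT.induction with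
  | ind γ ih =>
    rcases le_or_gt γ β with h | h
    · exact (hS γ).le_of_le (hS β) h hγ
    · have := ((hS γ).mem_iff g ((freeFiltration X).le_lt _ _ h hg)).1 hγ
      rcases mem_iSup_of_steps (fun γ _ => hS γ) this with rfl | ⟨δ, hδ, h'⟩
      · exact one_mem _
      · exact ih δ hδ h'

lemma mem_iSup_iff_of_mem_freeLe (hS : ∀ β, IsStep β (D β) (⨆ γ : Set.Iio β, S γ) (S β)) {β : X}
    {g : FreeGroup X} (hg : g ∈ freeLe β) : g ∈ ⨆ γ : (Set.univ : Set X), S γ ↔ g ∈ S β := by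
  refine ⟨fun h => ?_, fun h => Subgroup.mem_iSup_of_mem (⟨β, trivial⟩ : (Set.univ : Set X)) h⟩
  rcases mem_iSup_of_steps (fun γ _ => hS γ) h with rfl | ⟨γ, -, h⟩
  · exact one_mem _
  · exact mem_of_mem_freeLe hS hg h

lemma mem_iSup_iff_of_mem_freeLt (hS : ∀ β, IsStep β (D β) (⨆ γ : Set.Iio β, S γ) (S β)) {β : X}
    {g : FreeGroup X} (hg : g ∈ freeLt β) :
    g ∈ ⨆ γ : (Set.univ : Set X), S γ ↔ g ∈ ⨆ γ : Set.Iio β, S γ :=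
  (mem_iSup_iff_of_mem_freeLe hS ((freeFiltration X).lt_le _ hg)).trans ((hS β).mem_iff g hg)

/-- The image of a filtration under a surjective homomorphism. -/
def Filtration.map {G H : Type} [Group G] [Group H] (Φ : Filtration X G) (π : G →* H)
    (hπ : Function.Surjective π) : Filtration X H where
  Lt α := (Φ.Lt α).map π
  Le α := (Φ.Le α).map π
  lt_le α := Subgroup.map_mono (Φ.lt_le α)
  le_lt α β h := Subgroup.map_mono (Φ.le_lt α β h)
  mem_lt := by
    rintro β _ ⟨g, hg, rfl⟩
    rcases Φ.mem_lt β g hg with rfl | ⟨α, hα, h⟩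
    · exact Or.inl (map_one π)
    · exact Or.inr ⟨α, hα, Subgroup.mem_map_of_mem π h⟩
  exists_mem h := by
    obtain ⟨g, rfl⟩ := hπ h
    exact (Φ.exists_mem g).imp fun α hα => Subgroup.mem_map_of_mem π hα

theorem exists_jonsson_of_order (hI : ∀ a : X, (Set.Iio a).Countable)
    (hX : Cardinal.mk X = Cardinal.aleph 1) :
    ∃ (G : Type) (_ : Group G), Cardinal.mk G = Cardinal.aleph 1 ∧
      ∀ Y : Set G, ¬Y.Countable → ∃ n : ℕ, ∀ g : G, ∃ m : ℕ, 1 ≤ m ∧ m ≤ n ∧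
          ∃ a : Fin m → G, (∀ i, a i ∈ Y) ∧ g = (List.ofFn a).prod := by
  classical
  obtain ⟨f, hf⟩ := exists_coloring hI hX
  obtain ⟨dec⟩ : Nonempty (X ≃ FreeGroup X) := by
    rw [← Cardinal.eq, Cardinal.mk_freeGroup, hX, max_eq_left (Cardinal.aleph0_le_aleph 1)]
  obtain ⟨S, hS⟩ := exists_steps hI fun α γ => dec (f γ α)
  let N : Subgroup (FreeGroup X) := ⨆ γ : (Set.univ : Set X), S γ
  have hN : N.Normal := ⟨fun n hn g => by
    obtain ⟨α, hα⟩ := (freeFiltration X).exists_mem g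
    exact conj_mem_iSup_of_steps (fun γ _ => hS γ) trivial hα hn⟩
  have hNS : ∀ {β g}, g ∈ freeLe β → (g ∈ N ↔ g ∈ S β) := mem_iSup_iff_of_mem_freeLe hS
  have hNL : ∀ {β g}, g ∈ freeLt β → (g ∈ N ↔ g ∈ ⨆ γ : Set.Iio β, S γ) :=
    mem_iSup_iff_of_mem_freeLt hS
  have hLN : ∀ β, ⨆ γ : Set.Iio β, S γ ≤ N := fun β => iSup_le fun γ =>
    le_iSup (fun γ : (Set.univ : Set X) => S γ) (⟨γ.1, trivial⟩ : (Set.univ : Set X))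
  have hlt_le : ∀ β : X, freeLt β ≤ freeLe β := (freeFiltration X).lt_le
  let π : FreeGroup X →* FreeGroup X ⧸ N := QuotientGroup.mk' N
  have hπ : ∀ {g h}, π g = π h ↔ g⁻¹ * h ∈ N := QuotientGroup.eq
  have hπs : Function.Surjective π := QuotientGroup.mk_surjective
  let Φ : Filtration X (FreeGroup X ⧸ N) := (freeFiltration X).map π hπs
  have hlev : ∀ {α γ x}, x ∈ freeLt α → Φ.IsLevel (π x) γ →
      IsLevelMod (⨆ γ : Set.Iio α, S γ) x γ := by
    rintro α γ x hx ⟨⟨k, hk, hkx⟩, h2⟩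
    have hγ : γ < α := by
      by_contra h
      refine h2 ⟨x, ?_, rfl⟩
      exact Subgroup.closure_mono (Set.image_mono (Set.Iio_subset_Iio (not_lt.1 h))) hx
    refine ⟨⟨k, hk, (hNL (mul_mem (inv_mem ?_) hx)).1 (hπ.1 hkx)⟩, fun k' hk' h => ?_⟩
    · exact (freeFiltration X).le_lt _ _ hγ hk
    · exact h2 ⟨k', hk', hπ.2 (hLN α h)⟩
  have hlift : ∀ {A : Subgroup (FreeGroup X)} {s : Finset (FreeGroup X ⧸ N)},
      (∀ g ∈ s, g ∈ A.map π) → ∃ s' : Finset (FreeGroup X), (∀ g ∈ s', g ∈ A) ∧ s'.image π = s := by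
    intro A s hs
    obtain ⟨s', h1, h2⟩ := Finset.subset_set_image_iff.1 (show (s : Set _) ⊆ π '' A from hs)
    exact ⟨s', h1, h2⟩
  have hclos : ∀ {B : Finset (FreeGroup X)} {b g}, b ∈ Subgroup.closure (B : Set (FreeGroup X)) →
      b⁻¹ * g ∈ N → π g ∈ Subgroup.closure (B.image π : Set (FreeGroup X ⧸ N)) := by
    intro B b g hb h
    rw [Finset.coe_image, ← MonoidHom.map_closure]
    exact ⟨b, hb, hπ.2 h⟩
  have himage : ∀ {A : Subgroup (FreeGroup X)} {B : Finset (FreeGroup X)}, (∀ g ∈ B, g ∈ A) →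
      ∀ g ∈ B.image π, g ∈ A.map π := by
    intro A B hB g hg
    obtain ⟨b, hb, rfl⟩ := Finset.mem_image.1 hg
    exact ⟨b, hB b hb, rfl⟩
  refine ⟨FreeGroup X ⧸ N, inferInstance,
    Φ.mk_eq_aleph_one hX (π ∘ dec) (hπs.comp dec.surjective) fun α => ?_,
    Φ.exists_forall_prod hI f hf (fun d α g => dec d ∈ freeLt α ∧ π (dec d) = g) ?_ ?_ ?_ ?_⟩
  · refine ⟨π (FreeGroup.of α), ⟨_, of_mem_freeLe α, rfl⟩, ?_⟩
    rintro ⟨g, hg, h⟩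
    exact (hS α).of_notMem g hg ((hNS (mul_mem (inv_mem (hlt_le α hg)) (of_mem_freeLe α))).1
      (hπ.1 h))
  · intro g
    obtain ⟨g, rfl⟩ := hπs g
    obtain ⟨δ, hδ⟩ := (freeFiltration X).exists_mem g
    refine ⟨dec.symm g, δ, fun α hα => ?_⟩
    rw [dec.apply_symm_apply]
    exact ⟨(freeFiltration X).le_lt _ _ hα hδ, rfl⟩
  · intro α
    have hIic : (Set.Iic α).Countable := by
      rw [← Set.Iio_insert]
      exact (hI α).insert α
    exact (countable_closure (hIic.image _)).image π
  · intro α s hs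
    obtain ⟨s, hs', rfl⟩ := hlift hs
    obtain ⟨B, hB, hB'⟩ := (hS α).exists_finset s hs'
    refine ⟨B.image π, himage hB, ?_⟩
    rintro _ ⟨g, hg, rfl⟩ h
    rw [Finset.coe_image, ← MonoidHom.map_closure] at h
    obtain ⟨h, hh, hhg⟩ := h
    obtain ⟨b, hb, hbg⟩ := hB' g hg h hh ((hNS (mul_mem
      (inv_mem ((Subgroup.closure_le _).2 hs' hh)) (hlt_le α hg))).1 (hπ.1 hhg))
    exact hclos hb (hLN α hbg)
  · rintro α _ ⟨⟨y, hy, rfl⟩, hy'⟩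
    obtain ⟨n, hn⟩ := (hS α).exists_list y hy fun g hg h =>
      hy' ⟨g, hg, hπ.2 ((hNS ((hS α).le h)).2 h)⟩
    refine ⟨n, ?_⟩
    rintro _ ⟨c, hc, rfl⟩ hc1 _ ⟨g, hg, rfl⟩
    obtain ⟨B, hB, hB'⟩ := hn c hc
      (fun h => hc1 ((QuotientGroup.eq_one_iff c).2 (hLN α h))) g hg
    refine ⟨B.image π, himage hB, ?_⟩
    rintro _ ⟨x, hx, rfl⟩ hxB γ hγ ⟨hD, hDg⟩
    obtain ⟨w, h1, h2, h3, h4⟩ := hB' x hx (fun b hb h => hxB (hclos hb (hLN α h))) γ (hlev hx hγ)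
      hD ((hNL (mul_mem (inv_mem hD) hg)).1 (hπ.1 hDg))
    refine ⟨w.map π, ?_, by rwa [List.length_map], by rwa [List.length_map], ?_⟩
    · intro e he
      obtain ⟨d, hd, rfl⟩ := List.mem_map.1 he
      exact (h1 d hd).imp (congrArg π) (Or.imp (congrArg π) (congrArg π))
    · rw [← map_list_prod]
      exact hπ.2 ((hNS ((hS α).le h4)).2 h4)

end Limit

end JonssonSemigroup

theorem exists_jonsson_semigroup :
    ∃ (G : Type) (_ : Group G),
      Cardinal.mk G = Cardinal.aleph 1 ∧
      ∀ Y : Set G, ¬Y.Countable →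
        ∃ n : ℕ, ∀ g : G, ∃ m : ℕ, 1 ≤ m ∧ m ≤ n ∧
          ∃ a : Fin m → G, (∀ i, a i ∈ Y) ∧ g = (List.ofFn a).prod := by
  have hX : Cardinal.mk (Cardinal.aleph 1).ord.ToType = Cardinal.aleph 1 := Cardinal.mk_ord_toType _
  have : Nonempty (Cardinal.aleph 1).ord.ToType :=
    Cardinal.mk_ne_zero_iff.1 (by rw [hX]; exact (Cardinal.aleph_pos 1).ne')
  refine JonssonSemigroup.exists_jonsson_of_order (fun a => ?_) hX
  have h : Cardinal.mk (Set.Iio a) < Order.succ Cardinal.aleph0 := by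
    rw [Cardinal.succ_aleph0]
    exact (Cardinal.mk_Iio_lt a (by simp)).trans_eq hX
  exact Cardinal.le_aleph0_iff_set_countable.1 (Order.lt_succ_iff.1 h)
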